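/- Let n ≥ 1, let b ≥ 1 be an integer, and let α ∈ (1/2, 1] satisfy 2α < n, nb > 2α(b+1). Let p(·) ∈ P^log(ℝ^n) with p⁻ > b+1 and 2α·p⁺ < n(b+1), and set r = nb/(2α). Then there exists ε > 0 with the following property: for every u₀ ∈ L^{p(·)}(ℝ^n) ∩ L^r(ℝ^n) and every measurable 𝓕 : (0,∞)×ℝ^n → ℝ such that ‖u₀‖_{𝓛^{p(·)}_r} + N_{p(·)/(b+1), nb/((b+1)·2α)}(𝓕) < ε, there exist R > 0 and a measurable u : (0,∞)×ℝ^n → ℝ with N_{p(·),r}(u) ≤ R which is a mild solution (with γ = 0) of ∂_t u + (−Δ)^α u = |u|^b u + 𝓕 with data u₀, and u is the unique mild solution satisfying N_{p(·),r}(u) ≤ R. -/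

import Mathlib

open MeasureTheory Set
open scoped ENNReal FourierTransform

noncomputable section

/-- Euclidean space `ℝ^n`. -/
abbrev Rn (n : ℕ) := EuclideanSpace ℝ (Fin n)

/-- Luxemburg norm of an `ℝ≥0∞`-valued function for a variable exponent `p`. -/
def luxNorm {Ω : Type*} [MeasurableSpace Ω] (μ : Measure Ω) (p : Ω → ℝ) (f : Ω → ℝ≥0∞) : ℝ≥0∞ :=
  sInf {lam : ℝ≥0∞ | 0 < lam ∧ ∫⁻ x, (f x / lam) ^ (p x) ∂μ ≤ 1}

/-- Luxemburg norm `‖f‖_{L^{p(·)}}` of a real-valued function. -/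
def luxNormR {Ω : Type*} [MeasurableSpace Ω] (μ : Measure Ω) (p : Ω → ℝ) (f : Ω → ℝ) : ℝ≥0∞ :=
  luxNorm μ p (fun x => ENNReal.ofReal |f x|)

/-- `p(·) ∈ P^log(Ω)`: measurable, with values in `[1,∞)` on `Ω`, locally log-Hölder
continuous on `Ω`, and satisfying the log-Hölder decay condition on `Ω`. -/
def IsPLog {E : Type*} [NormedAddCommGroup E] [MeasurableSpace E] (Ω : Set E) (p : E → ℝ) : Prop :=
  Measurable p ∧ (∀ x ∈ Ω, 1 ≤ p x) ∧
  ∃ C₁ > (0:ℝ), ∃ C₂ > (0:ℝ), ∃ pinf : ℝ,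
    (∀ x ∈ Ω, ∀ y ∈ Ω, x ≠ y →
      |1 / p x - 1 / p y| ≤ C₁ / Real.log (Real.exp 1 + 1 / ‖x - y‖)) ∧
    (∀ x ∈ Ω, |1 / p x - 1 / pinf| ≤ C₂ / Real.log (Real.exp 1 + ‖x‖))

/-- The fractional heat kernel `𝔤_t^α` on `ℝ^n`: the inverse Fourier transform of
`ξ ↦ exp (-t‖ξ‖^{2α})` (it is real-valued; we take the real part). -/
def gKer (n : ℕ) (α t : ℝ) (x : Rn n) : ℝ :=
  (𝓕⁻ (fun ξ : Rn n => (Real.exp (-t * ‖ξ‖ ^ (2 * α)) : ℂ)) x).re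

/-- Convolution on `ℝ^n`. -/
def conv (n : ℕ) (g f : Rn n → ℝ) (x : Rn n) : ℝ := ∫ y, g (x - y) * f y

/-- `x ↦ ess sup_{t>0} |u(t,x)|`, as an `ℝ≥0∞`-valued function. -/
def timeSup (n : ℕ) (u : ℝ → Rn n → ℝ) (x : Rn n) : ℝ≥0∞ :=
  essSup (fun t => ENNReal.ofReal |u t x|) (volume.restrict (Ioi (0:ℝ)))

/-- Mixed norm `‖f‖_{𝓛^{p(·)}_r} = max {‖f‖_{L^{p(·)}}, ‖f‖_{L^r}}`. -/
def mixedNorm (n : ℕ) (p : Rn n → ℝ) (r : ℝ) (f : Rn n → ℝ) : ℝ≥0∞ :=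
  max (luxNormR volume p f) (luxNormR volume (fun _ => r) f)

/-- `N_{p(·),r}(u) = ‖x ↦ ess sup_{t>0}|u(t,x)|‖_{𝓛^{p(·)}_r}`. -/
def mixedN (n : ℕ) (p : Rn n → ℝ) (r : ℝ) (u : ℝ → Rn n → ℝ) : ℝ≥0∞ :=
  max (luxNorm volume p (timeSup n u)) (luxNorm volume (fun _ => r) (timeSup n u))

/-- Mild solution (γ = 0), on the time set `S`, of `∂_t u + (-Δ)^α u = |u|^b u + f`,
`u(0) = u₀`: for a.e. `(t,x)` with `t ∈ S`, all integrals converge absolutely and the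
Duhamel formula holds. -/
def IsMildSol0 (n : ℕ) (α : ℝ) (b : ℕ) (S : Set ℝ) (f : ℝ → Rn n → ℝ) (u₀ : Rn n → ℝ)
    (u : ℝ → Rn n → ℝ) : Prop :=
  ∀ᵐ tx : ℝ × Rn n ∂((volume.restrict S).prod volume),
    Integrable (fun y => gKer n α tx.1 (tx.2 - y) * u₀ y) volume ∧
    IntegrableOn (fun sy : ℝ × Rn n => gKer n α (tx.1 - sy.1) (tx.2 - sy.2) * f sy.1 sy.2)
      (Ioc 0 tx.1 ×ˢ univ) (volume.prod volume) ∧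
    IntegrableOn (fun sy : ℝ × Rn n =>
        gKer n α (tx.1 - sy.1) (tx.2 - sy.2) * (|u sy.1 sy.2| ^ b * u sy.1 sy.2))
      (Ioc 0 tx.1 ×ˢ univ) (volume.prod volume) ∧
    u tx.1 tx.2 = conv n (gKer n α tx.1) u₀ tx.2
      + (∫ s in Ioc (0:ℝ) tx.1, conv n (gKer n α (tx.1 - s)) (f s) tx.2)
      - ∫ s in Ioc (0:ℝ) tx.1, conv n (gKer n α (tx.1 - s)) (fun y => |u s y| ^ b * u s y) tx.2

/-!
Everything is reduced to functions of `x` alone. By subordination `exp (-t |ξ| ^ (2α))` is a limit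
of Gaussian mixtures, so convolution with each kernel `𝔤_t^α` is dominated by the maximal function;
hence so is `sup_t |𝔤_t^α ∗ u₀|`. A Duhamel integral of `f` is dominated by the potential of
`sup_t |f|` with kernel `∫_0^∞ 𝔤_s^α ds`. On `L^{p(·)} ∩ L^r` with `r = nb / (2α)`, Hedberg's
inequality and the maximal theorem bound that potential from the `p(·) / (b + 1)` norms to the
`p(·)` norms. For small data the majorant equation `E = A + I(E^{b + 1})` is solved by monotone
iteration. Its solution dominates all Picard iterates, and their successive differences are
dominated by iterates of the linearized potential, which contracts by a factor `1/2`. The same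
contraction gives uniqueness.
-/

open Filter Metric Module
open scoped NNReal Topology

section PowersOfLIntegrals

variable {X : Type*} [MeasurableSpace X] {μ : Measure X}

lemma rpow_lintegral_le_lintegral_rpow (hμ : μ univ ≤ 1) {f : X → ℝ≥0∞} (hf : AEMeasurable f μ)
    {s : ℝ} (hs : 1 ≤ s) : (∫⁻ x, f x ∂μ) ^ s ≤ ∫⁻ x, f x ^ s ∂μ := by
  have hs0 : 0 < s := by linarith
  have hpow : μ univ ^ (1 / 1 - 1 / s) ≤ 1 :=
    ENNReal.rpow_le_one hμ (sub_nonneg.2 (one_div_le_one_div_of_le one_pos hs))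
  have hnorm := (eLpNorm'_le_eLpNorm'_mul_rpow_measure_univ one_pos hs
    hf.aestronglyMeasurable).trans (mul_le_of_le_one_right' hpow)
  simp only [eLpNorm', enorm_eq_self, ENNReal.rpow_one, one_div_one] at hnorm
  calc (∫⁻ x, f x ∂μ) ^ s ≤ ((∫⁻ x, f x ^ s ∂μ) ^ (1 / s)) ^ s := by gcongr
    _ = ∫⁻ x, f x ^ s ∂μ := by
      rw [← ENNReal.rpow_mul, one_div_mul_cancel hs0.ne', ENNReal.rpow_one]

lemma lintegral_Ioo_ofReal_mul_rpow {k a : ℝ} (hk : 0 < k) (ha : 0 ≤ a) :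
    ∫⁻ t in Ioo 0 a, ENNReal.ofReal (k * t ^ (k - 1)) = ENNReal.ofReal a ^ k := by
  have hint : IntervalIntegrable (fun t : ℝ => k * t ^ (k - 1)) volume 0 a :=
    (intervalIntegral.intervalIntegrable_rpow' (by linarith)).const_mul k
  have hval : ∫ t in (0 : ℝ)..a, k * t ^ (k - 1) = a ^ k := by
    rw [intervalIntegral.integral_const_mul, integral_rpow (Or.inl (by linarith))]
    simp [Real.zero_rpow hk.ne', mul_div_cancel₀ _ hk.ne']
  rw [restrict_Ioo_eq_restrict_Ioc, ← ofReal_integral_eq_lintegral_ofReal,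
    ← intervalIntegral.integral_of_le ha, hval, ENNReal.ofReal_rpow_of_nonneg ha hk.le]
  · exact (intervalIntegrable_iff_integrableOn_Ioc_of_le ha).1 hint
  · filter_upwards [ae_restrict_mem measurableSet_Ioc] with t ht
    have : 0 < t := ht.1
    simp only [Pi.zero_apply]
    positivity

lemma setLIntegral_ofReal_lt_eq_rpow {k : ℝ} (hk : 0 < k) (a : ℝ≥0∞) :
    ∫⁻ t in {t : ℝ | 0 < t ∧ ENNReal.ofReal t < a}, ENNReal.ofReal (k * t ^ (k - 1)) = a ^ k := by
  rcases eq_or_ne a ⊤ with rfl | ha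
  · rw [ENNReal.top_rpow_of_pos hk]
    refine top_le_iff.1 (ENNReal.le_of_forall_nnreal_lt fun r _ => ?_)
    calc (r : ℝ≥0∞) = ENNReal.ofReal ((r : ℝ) ^ k⁻¹) ^ k := by
          rw [ENNReal.ofReal_rpow_of_nonneg (by positivity) hk.le, ← Real.rpow_mul r.coe_nonneg,
            inv_mul_cancel₀ hk.ne', Real.rpow_one, ENNReal.ofReal_coe_nnreal]
      _ = ∫⁻ t in Ioo 0 ((r : ℝ) ^ k⁻¹), ENNReal.ofReal (k * t ^ (k - 1)) :=
          (lintegral_Ioo_ofReal_mul_rpow hk (by positivity)).symm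
      _ ≤ _ := lintegral_mono_set fun _ ht =>
          mem_ofPred.2 ⟨ht.1, ENNReal.ofReal_lt_top⟩
  · have hset : {t : ℝ | 0 < t ∧ ENNReal.ofReal t < a} = Ioo 0 a.toReal := by
      ext t
      simp only [mem_ofPred_eq, mem_Ioo, and_congr_right_iff]
      exact fun ht => ENNReal.ofReal_lt_iff_lt_toReal ht.le ha
    rw [hset, lintegral_Ioo_ofReal_mul_rpow hk ENNReal.toReal_nonneg, ENNReal.ofReal_toReal ha]

lemma lintegral_rpow_eq_lintegral_meas_ofReal_lt [SFinite μ] {f : X → ℝ≥0∞} (hf : Measurable f)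
    {k : ℝ} (hk : 0 < k) :
    ∫⁻ x, f x ^ k ∂μ =
      ∫⁻ t in Ioi (0 : ℝ), ENNReal.ofReal (k * t ^ (k - 1)) * μ {x | ENNReal.ofReal t < f x} := by
  set S : Set (X × ℝ) := {q | 0 < q.2 ∧ ENNReal.ofReal q.2 < f q.1}
  have hS : MeasurableSet S := (measurableSet_lt measurable_const measurable_snd).inter
    (measurableSet_lt (ENNReal.measurable_ofReal.comp measurable_snd) (hf.comp measurable_fst))
  set w : X × ℝ → ℝ≥0∞ := S.indicator fun q => ENNReal.ofReal (k * q.2 ^ (k - 1))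
  have hw : Measurable w := Measurable.indicator (by fun_prop) hS
  calc ∫⁻ x, f x ^ k ∂μ
      = ∫⁻ x, (∫⁻ t, w (x, t)) ∂μ := by
        refine lintegral_congr fun x => ?_
        rw [← setLIntegral_ofReal_lt_eq_rpow hk]
        exact (lintegral_indicator (measurable_prodMk_left hS) _).symm
    _ = ∫⁻ t, ∫⁻ x, w (x, t) ∂μ := lintegral_lintegral_swap hw.aemeasurable
    _ = ∫⁻ t, (Ioi (0 : ℝ)).indicator (fun t => ENNReal.ofReal (k * t ^ (k - 1)) *
          μ {x | ENNReal.ofReal t < f x}) t := by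
        refine lintegral_congr fun t => ?_
        by_cases ht : 0 < t
        · rw [indicator_of_mem (mem_Ioi.2 ht),
            ← lintegral_indicator_const (measurableSet_lt measurable_const hf)]
          simp [w, S, indicator, ht]
        · simp [w, S, indicator, ht]
    _ = _ := lintegral_indicator measurableSet_Ioi _

end PowersOfLIntegrals

section MaximalFunction

/-- The uncentred Hardy–Littlewood maximal function: the supremum of the averages of `f` over the
open balls containing a point. -/
def maximalFunction {X : Type*} [PseudoMetricSpace X] [MeasurableSpace X] (μ : Measure X)
    (f : X → ℝ≥0∞) (x : X) : ℝ≥0∞ :=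
  ⨆ (z : X) (ρ : ℝ) (_ : x ∈ ball z ρ), ⨍⁻ y in ball z ρ, f y ∂μ

section PseudoMetricSpace

variable {X : Type*} [PseudoMetricSpace X] [MeasurableSpace X] {μ : Measure X} {f g : X → ℝ≥0∞}

lemma setLAverage_le_maximalFunction (f : X → ℝ≥0∞) {x z : X} {ρ : ℝ} (hx : x ∈ ball z ρ) :
    ⨍⁻ y in ball z ρ, f y ∂μ ≤ maximalFunction μ f x :=
  le_iSup_of_le z <| le_iSup_of_le ρ <| le_iSup_of_le hx le_rfl

lemma maximalFunction_le {x : X} {c : ℝ≥0∞}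
    (h : ∀ z ρ, x ∈ ball z ρ → ⨍⁻ y in ball z ρ, f y ∂μ ≤ c) : maximalFunction μ f x ≤ c :=
  iSup_le fun z => iSup_le fun ρ => iSup_le fun hx => h z ρ hx

lemma lt_maximalFunction_iff {x : X} {c : ℝ≥0∞} :
    c < maximalFunction μ f x ↔ ∃ z ρ, x ∈ ball z ρ ∧ c < ⨍⁻ y in ball z ρ, f y ∂μ := by
  simp only [maximalFunction, lt_iSup_iff, exists_prop]

lemma measurable_maximalFunction [OpensMeasurableSpace X] (f : X → ℝ≥0∞) :
    Measurable (maximalFunction μ f) := by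
  refine measurable_of_Ioi fun c => IsOpen.measurableSet (isOpen_iff_mem_nhds.2 fun x hx => ?_)
  obtain ⟨z, ρ, hxz, hc⟩ := lt_maximalFunction_iff.1 hx
  exact mem_of_superset (isOpen_ball.mem_nhds hxz) fun y hy =>
    lt_maximalFunction_iff.2 ⟨z, ρ, hy, hc⟩

lemma maximalFunction_mono_ae (h : f ≤ᵐ[μ] g) (x : X) :
    maximalFunction μ f x ≤ maximalFunction μ g x :=
  maximalFunction_le fun _ _ hx =>
    (setLAverage_mono_ae _ h).trans (setLAverage_le_maximalFunction g hx)

lemma maximalFunction_const_le (c : ℝ≥0∞) (x : X) : maximalFunction μ (fun _ => c) x ≤ c :=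
  maximalFunction_le fun z ρ _ => by
    rw [setLAverage_eq, setLIntegral_const]
    exact ENNReal.div_le_of_le_mul le_rfl

lemma maximalFunction_const_mul (hf : Measurable f) (c : ℝ≥0∞) (x : X) :
    maximalFunction μ (fun y => c * f y) x = c * maximalFunction μ f x := by
  simp only [maximalFunction, setLAverage_eq, lintegral_const_mul _ hf, ENNReal.mul_iSup,
    mul_div_assoc]

lemma maximalFunction_add_le (hf : Measurable f) (x : X) :
    maximalFunction μ (fun y => f y + g y) x ≤ maximalFunction μ f x + maximalFunction μ g x :=
  maximalFunction_le fun z ρ hx => by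
    calc ⨍⁻ y in ball z ρ, f y + g y ∂μ
        = ⨍⁻ y in ball z ρ, f y ∂μ + ⨍⁻ y in ball z ρ, g y ∂μ := by
          simp only [setLAverage_eq, lintegral_add_left hf, ENNReal.add_div]
      _ ≤ _ := add_le_add (setLAverage_le_maximalFunction f hx)
          (setLAverage_le_maximalFunction g hx)

lemma setLIntegral_ball_le_mul_maximalFunction [ProperSpace X] [IsFiniteMeasureOnCompacts μ]
    (f : X → ℝ≥0∞) {x z : X} {ρ : ℝ} (hx : x ∈ ball z ρ) :
    ∫⁻ y in ball z ρ, f y ∂μ ≤ μ (ball z ρ) * maximalFunction μ f x := by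
  rw [← measure_mul_setLAverage f measure_ball_lt_top.ne]
  gcongr
  exact setLAverage_le_maximalFunction f hx

end PseudoMetricSpace

variable {E : Type*} [NormedAddCommGroup E] [NormedSpace ℝ E] [FiniteDimensional ℝ E]
  [MeasurableSpace E] [BorelSpace E] (μ : Measure E) [μ.IsAddHaarMeasure]

lemma exists_radius_le_of_mul_addHaar_ball_le [Nontrivial E] {a c : ℝ≥0∞} (ha : a ≠ ⊤)
    (hc : c ≠ 0) : ∃ B : ℝ, ∀ (z : E) (ρ : ℝ), c * μ (ball z ρ) ≤ a → ρ ≤ B := by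
  have : NoncompactSpace E := NormedSpace.noncompactSpace ℝ E
  have hlim : Tendsto (fun N : ℕ => μ (ball (0 : E) N)) atTop (𝓝 ⊤) := by
    rw [← measure_univ_of_isAddLeftInvariant μ, ← iUnion_ball_nat (0 : E)]
    exact tendsto_measure_iUnion_atTop fun i j hij => ball_subset_ball (Nat.cast_le.2 hij)
  obtain ⟨N, hN⟩ := (hlim.eventually (lt_mem_nhds (ENNReal.div_lt_top ha hc))).exists
  refine ⟨N, fun z ρ h => ?_⟩
  by_contra! hρ
  refine absurd hN (not_lt.2 ?_)
  calc μ (ball 0 N) ≤ μ (ball z ρ) := by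
        rw [Measure.addHaar_ball_center μ z]
        exact measure_mono (ball_subset_ball hρ.le)
    _ ≤ a / c := ENNReal.le_div_iff_mul_le (Or.inl hc) (Or.inr ha) |>.2 (by rwa [mul_comm])

lemma addHaar_closedBall_five_mul [Nontrivial E] (z : E) (ρ : ℝ) :
    μ (closedBall z (5 * ρ)) = 5 ^ finrank ℝ E * μ (ball z ρ) := by
  rw [Measure.addHaar_closedBall_eq_addHaar_ball, Measure.addHaar_ball_mul _ _ (by norm_num),
    Measure.addHaar_ball_center μ z, ENNReal.ofReal_pow (by norm_num), ENNReal.ofReal_ofNat]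

theorem mul_meas_lt_maximalFunction_le [Nontrivial E] (f : E → ℝ≥0∞) (c : ℝ≥0∞) :
    c * μ {x | c < maximalFunction μ f x} ≤ 5 ^ finrank ℝ E * ∫⁻ y, f y ∂μ := by
  rcases eq_or_ne c 0 with rfl | hc
  · simp
  rcases eq_or_ne (∫⁻ y, f y ∂μ) ⊤ with hI | hI
  · simp [hI]
  set t : Set (E × ℝ) := {q | 0 < q.2 ∧ c < ⨍⁻ y in ball q.1 q.2, f y ∂μ}
  have hball : ∀ q ∈ t, c * μ (ball q.1 q.2) ≤ ∫⁻ y in ball q.1 q.2, f y ∂μ := fun q hq => by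
    rw [← measure_mul_setLAverage f measure_ball_lt_top.ne, mul_comm]
    gcongr
    exact hq.2.le
  obtain ⟨B, hB⟩ := exists_radius_le_of_mul_addHaar_ball_le μ hI hc
  obtain ⟨u, hut, hdisj, hcov⟩ := Vitali.exists_disjoint_subfamily_covering_enlargement_closedBall
    t Prod.fst Prod.snd B (fun q hq => hB _ _ ((hball q hq).trans (setLIntegral_le_lintegral _ _)))
    5 (by norm_num)
  replace hdisj : u.PairwiseDisjoint fun q => ball q.1 q.2 :=
    hdisj.mono fun q => ball_subset_closedBall
  have hcount : u.Countable := hdisj.countable_of_isOpen (fun _ _ => isOpen_ball)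
    fun q hq => nonempty_ball.2 (hut hq).1
  have hsub : {x | c < maximalFunction μ f x} ⊆ ⋃ q ∈ u, closedBall q.1 (5 * q.2) := fun x hx => by
    obtain ⟨z, ρ, hxz, h⟩ := lt_maximalFunction_iff.1 hx
    obtain ⟨q, hq, hsubq⟩ := hcov (z, ρ) ⟨pos_of_mem_ball hxz, h⟩
    exact mem_biUnion hq (hsubq (ball_subset_closedBall hxz))
  calc c * μ {x | c < maximalFunction μ f x}
      ≤ c * ∑' q : u, μ (closedBall q.1.1 (5 * q.1.2)) := by
        gcongr
        exact (measure_mono hsub).trans (measure_biUnion_le _ hcount _)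
    _ = 5 ^ finrank ℝ E * ∑' q : u, c * μ (ball q.1.1 q.1.2) := by
        rw [← ENNReal.tsum_mul_left, ← ENNReal.tsum_mul_left]
        exact tsum_congr fun q => by
          rw [addHaar_closedBall_five_mul, mul_left_comm]
    _ ≤ 5 ^ finrank ℝ E * ∑' q : u, ∫⁻ y in ball q.1.1 q.1.2, f y ∂μ := by
        gcongr with q
        exact hball _ (hut q.2)
    _ = 5 ^ finrank ℝ E * ∫⁻ y in ⋃ q ∈ u, ball q.1 q.2, f y ∂μ := by
        rw [lintegral_biUnion hcount (fun q _ => measurableSet_ball) hdisj]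
    _ ≤ _ := mul_le_mul_right (setLIntegral_le_lintegral _ _) _

/-- Only the part of `f` above the level `c` matters, since `M f ≤ M (f 1_{f > c}) + c`. -/
lemma mul_meas_two_mul_lt_maximalFunction_le [Nontrivial E] {f : E → ℝ≥0∞} (hf : Measurable f)
    (c : ℝ≥0∞) : c * μ {x | 2 * c < maximalFunction μ f x} ≤
      5 ^ finrank ℝ E * ∫⁻ y in {y | c < f y}, f y ∂μ := by
  have hS : MeasurableSet {y | c < f y} := measurableSet_lt measurable_const hf
  set g := {y | c < f y}.indicator f
  have hfg : ∀ y, f y ≤ g y + c := fun y => by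
    by_cases hy : c < f y
    · simp [g, hy]
    · exact (not_lt.1 hy).trans le_add_self
  have hle : ∀ x, maximalFunction μ f x ≤ maximalFunction μ g x + c := fun x =>
    (maximalFunction_mono_ae (ae_of_all _ hfg) x).trans <|
      (maximalFunction_add_le (hf.indicator hS) x).trans <| by
        gcongr
        exact maximalFunction_const_le c x
  have hsub : {x | 2 * c < maximalFunction μ f x} ⊆ {x | c < maximalFunction μ g x} :=
    fun x hx => lt_of_add_lt_add_right ((two_mul c ▸ hx).trans_le (hle x))
  rw [← lintegral_indicator hS]
  exact (mul_le_mul_right (measure_mono hsub) c).trans (mul_meas_lt_maximalFunction_le μ g c)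

lemma meas_ofReal_lt_maximalFunction_le [Nontrivial E] {f : E → ℝ≥0∞} (hf : Measurable f) {t : ℝ}
    (ht : 0 < t) : μ {x | ENNReal.ofReal t < maximalFunction μ f x} ≤ 5 ^ finrank ℝ E *
      ENNReal.ofReal (2 / t) * μ.withDensity f {x | ENNReal.ofReal t < 2 * f x} := by
  have hdouble : ENNReal.ofReal t = 2 * ENNReal.ofReal (t / 2) := by
    rw [← ENNReal.ofReal_ofNat, ← ENNReal.ofReal_mul (by norm_num), mul_div_cancel₀ _ two_ne_zero]
  have hset : {x | ENNReal.ofReal t < 2 * f x} = {x | ENNReal.ofReal (t / 2) < f x} := by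
    simp only [hdouble, ENNReal.mul_lt_mul_iff_right two_ne_zero ENNReal.ofNat_ne_top]
  have hinv : ENNReal.ofReal (2 / t) * ENNReal.ofReal (t / 2) = 1 := by
    rw [← ENNReal.ofReal_mul (by positivity), div_mul_div_cancel₀ ht.ne', div_self two_ne_zero,
      ENNReal.ofReal_one]
  rw [hset, withDensity_apply _ (measurableSet_lt measurable_const hf), hdouble]
  calc μ {x | 2 * ENNReal.ofReal (t / 2) < maximalFunction μ f x}
      = ENNReal.ofReal (2 / t) * (ENNReal.ofReal (t / 2) *
          μ {x | 2 * ENNReal.ofReal (t / 2) < maximalFunction μ f x}) := by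
        rw [← mul_assoc, hinv, one_mul]
    _ ≤ ENNReal.ofReal (2 / t) * (5 ^ finrank ℝ E *
          ∫⁻ y in {y | ENNReal.ofReal (t / 2) < f y}, f y ∂μ) :=
        mul_le_mul_right (mul_meas_two_mul_lt_maximalFunction_le μ hf _) _
    _ = _ := by ring

theorem lintegral_maximalFunction_rpow_le [Nontrivial E] {k : ℝ} (hk : 1 < k) {f : E → ℝ≥0∞}
    (hf : Measurable f) :
    ∫⁻ x, maximalFunction μ f x ^ k ∂μ ≤
      5 ^ finrank ℝ E * ENNReal.ofReal (2 * k / (k - 1)) * 2 ^ (k - 1) * ∫⁻ x, f x ^ k ∂μ := by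
  have hk1 : 0 < k - 1 := by linarith
  have hlevel : ∀ t ∈ Ioi (0 : ℝ),
      ENNReal.ofReal (k * t ^ (k - 1)) * μ {x | ENNReal.ofReal t < maximalFunction μ f x} ≤
        5 ^ finrank ℝ E * ENNReal.ofReal (2 * k / (k - 1)) *
          (ENNReal.ofReal ((k - 1) * t ^ (k - 1 - 1)) *
            μ.withDensity f {x | ENNReal.ofReal t < 2 * f x}) := by
    intro t (ht : 0 < t)
    have hpow : ENNReal.ofReal (k * t ^ (k - 1)) * ENNReal.ofReal (2 / t) =
        ENNReal.ofReal (2 * k / (k - 1)) * ENNReal.ofReal ((k - 1) * t ^ (k - 1 - 1)) := by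
      rw [← ENNReal.ofReal_mul (by positivity), ← ENNReal.ofReal_mul (by positivity),
        Real.rpow_sub_one ht.ne' (k - 1)]
      congr 1
      field_simp
    grw [meas_ofReal_lt_maximalFunction_le μ hf ht]
    rw [← mul_assoc, mul_left_comm, hpow]
    refine le_of_eq ?_
    ring
  calc ∫⁻ x, maximalFunction μ f x ^ k ∂μ
      = ∫⁻ t in Ioi (0 : ℝ), ENNReal.ofReal (k * t ^ (k - 1)) *
          μ {x | ENNReal.ofReal t < maximalFunction μ f x} :=
        lintegral_rpow_eq_lintegral_meas_ofReal_lt (measurable_maximalFunction f) (by linarith)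
    _ ≤ _ := setLIntegral_mono' measurableSet_Ioi hlevel
    _ = 5 ^ finrank ℝ E * ENNReal.ofReal (2 * k / (k - 1)) *
          ∫⁻ x, (2 * f x) ^ (k - 1) ∂μ.withDensity f := by
        rw [lintegral_const_mul' _ _ (by finiteness),
          lintegral_rpow_eq_lintegral_meas_ofReal_lt (by fun_prop) hk1]
    _ = 5 ^ finrank ℝ E * ENNReal.ofReal (2 * k / (k - 1)) *
          ∫⁻ x, 2 ^ (k - 1) * f x ^ k ∂μ := by
        rw [lintegral_withDensity_eq_lintegral_mul _ hf (by fun_prop)]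
        congr 1
        refine lintegral_congr fun x => ?_
        rw [Pi.mul_apply, ENNReal.mul_rpow_of_nonneg _ _ hk1.le, mul_left_comm]
        congr 1
        nth_rw 1 [← ENNReal.rpow_one (f x)]
        rw [← ENNReal.rpow_add_of_nonneg _ _ zero_le_one hk1.le, add_sub_cancel]
    _ = _ := by rw [lintegral_const_mul _ (hf.pow_const k)]; ring

end MaximalFunction

section VariableExponent

section Averages

variable {X : Type*} [MeasurableSpace X] {μ : Measure X} {f g : X → ℝ≥0∞} {q : X → ℝ} {s : Set X}

lemma rpow_laverage_le_laverage_rpow (hf : Measurable f) {k : ℝ} (hk : 1 ≤ k) :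
    (⨍⁻ x, f x ∂μ) ^ k ≤ ⨍⁻ x, f x ^ k ∂μ :=
  rpow_lintegral_le_lintegral_rpow prob_le_one hf.aemeasurable hk

lemma lintegral_add_rpow_le (hf : Measurable f) {k : ℝ} (hk : 1 ≤ k) :
    ∫⁻ x, (f x + g x) ^ k ∂μ ≤ 2 ^ (k - 1) * (∫⁻ x, f x ^ k ∂μ + ∫⁻ x, g x ^ k ∂μ) := by
  rw [← lintegral_add_left (hf.pow_const k), ← lintegral_const_mul' _ _ (by finiteness)]
  exact lintegral_mono fun x => ENNReal.rpow_add_le_mul_rpow_add_rpow _ _ hk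

lemma setLAverage_mono' (hs : MeasurableSet s) (h : ∀ x ∈ s, f x ≤ g x) :
    ⨍⁻ x in s, f x ∂μ ≤ ⨍⁻ x in s, g x ∂μ :=
  laverage_mono_ae (ae_restrict_of_forall_mem hs h)

lemma lintegral_indicator_rpow (hs : MeasurableSet s) (hq : ∀ y, 0 < q y) :
    ∫⁻ y, s.indicator f y ^ q y ∂μ = ∫⁻ y in s, f y ^ q y ∂μ := by
  rw [← lintegral_indicator hs]
  refine lintegral_congr fun y => ?_
  by_cases hy : y ∈ s <;> simp [hy, hq y]

variable [PseudoMetricSpace X]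

lemma maximalFunction_rpow_le {x : X} {k : ℝ} (hk : 0 < k) {c : ℝ≥0∞}
    (h : ∀ z ρ, x ∈ ball z ρ → (⨍⁻ y in ball z ρ, f y ∂μ) ^ k ≤ c) :
    maximalFunction μ f x ^ k ≤ c :=
  (ENNReal.le_rpow_inv_iff hk).1 <| maximalFunction_le fun z ρ hx =>
    (ENNReal.le_rpow_inv_iff hk).2 (h z ρ hx)

lemma maximalFunction_le_indicator_add (hf : Measurable f) (hs : MeasurableSet s) (x : X) :
    maximalFunction μ f x ≤
      maximalFunction μ (s.indicator f) x + maximalFunction μ (sᶜ.indicator f) x := by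
  simpa only [indicator_self_add_compl_apply] using
    maximalFunction_add_le (μ := μ) (g := sᶜ.indicator f) (hf.indicator hs) x

lemma maximalFunction_indicator_rpow_le {x : X} (hq : ∀ y, 0 ≤ q y) :
    maximalFunction μ (fun y => s.indicator f y ^ q y) x ≤
      maximalFunction μ (fun y => f y ^ q y) x :=
  maximalFunction_mono_ae
    (ae_of_all _ fun y => ENNReal.rpow_le_rpow (indicator_le_self _ _ y) (hq y)) x

end Averages

lemma one_le_log_exp_one_add {r : ℝ} (hr : 0 ≤ r) : 1 ≤ Real.log (Real.exp 1 + r) := by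
  rw [Real.le_log_iff_exp_le (by positivity)]; linarith

lemma mul_pow_rpow_div_log_le {W H s : ℝ} (d : ℕ) (hW : 1 ≤ W) (hH : 0 < H)
    (hlog : 1 ≤ Real.log H) (hs : 0 ≤ s) :
    (W * H ^ d) ^ (s / Real.log H) ≤ W ^ s * Real.exp (d * s) := by
  rw [Real.mul_rpow (by positivity) (by positivity)]
  refine mul_le_mul (Real.rpow_le_rpow_of_exponent_le hW (div_le_self hs hlog)) (le_of_eq ?_)
    (by positivity) (by positivity)
  rw [Real.rpow_def_of_pos (by positivity), Real.log_pow]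
  congr 1
  field_simp

section LogHolder

variable {X : Type*} [NormedAddCommGroup X] {q : X → ℝ} {Q C₁ : ℝ}

lemma inv_min_le_of_mem_ball (hC₁ : 0 < C₁) (h1 : ∀ x, 1 ≤ q x)
    (hlog : ∀ x y, x ≠ y → |1 / q x - 1 / q y| ≤ C₁ / Real.log (Real.exp 1 + 1 / ‖x - y‖))
    {x y z : X} {ρ : ℝ} (hx : x ∈ ball z ρ) (hy : y ∈ ball z ρ) :
    (min 1 (1 / q x + C₁ / Real.log (Real.exp 1 + 1 / (2 * ρ))))⁻¹ ≤ q y := by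
  have hρ := pos_of_mem_ball hx
  set L := Real.log (Real.exp 1 + 1 / (2 * ρ))
  have hL : 0 < L := one_pos.trans_le (one_le_log_exp_one_add (by positivity))
  have hq : ∀ y, 0 < q y := fun y => one_pos.trans_le (h1 y)
  have hqx := hq x
  rw [inv_le_comm₀ (lt_min one_pos (by positivity)) (hq y), ← one_div]
  refine le_min ((div_le_one (hq y)).2 (h1 y)) ?_
  rcases eq_or_ne x y with rfl | hxy
  · exact le_add_of_nonneg_right (by positivity)
  have hdist : ‖x - y‖ ≤ 2 * ρ := by
    rw [← dist_eq_norm]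
    linarith [dist_triangle_right x y z, mem_ball.1 hx, mem_ball.1 hy]
  have hpos : 0 < ‖x - y‖ := norm_pos_iff.2 (sub_ne_zero.2 hxy)
  have hL' : L ≤ Real.log (Real.exp 1 + 1 / ‖x - y‖) :=
    Real.log_le_log (by positivity) (by gcongr)
  have hdiv : C₁ / Real.log (Real.exp 1 + 1 / ‖x - y‖) ≤ C₁ / L := by gcongr
  linarith [(abs_le.1 (hlog x y hxy)).1]

/-- With `m = min 1 (1 / u + C / log H)`, the right-hand side is at least `B ^ (u m)`, because
the excess exponent `u m - 1` is at most `u C / log H`. -/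
lemma rpow_le_mul_of_rpow_inv_min_le {a B : ℝ≥0∞} {W H C u : ℝ} (d : ℕ) (hC : 0 < C)
    (hu : 1 ≤ u) (huQ : u ≤ Q) (hW : 1 ≤ W) (hH : 0 < H) (hlog : 1 ≤ Real.log H)
    (hB : B ≤ ENNReal.ofReal (W * H ^ d)) (haB : a ^ (min 1 (1 / u + C / Real.log H))⁻¹ ≤ B) :
    a ^ u ≤ ENNReal.ofReal (W ^ (Q * C) * Real.exp (d * (Q * C))) * B := by
  have hu0 : 0 < u := by linarith
  have hQ0 : 0 < Q := by linarith
  have hcL : 0 < C / Real.log H := by positivity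
  have hWH : 1 ≤ W * H ^ d := one_le_mul_of_one_le_of_one_le hW
    (one_le_pow₀ ((Real.log_pos_iff hH.le).1 (by linarith)).le)
  set m := min 1 (1 / u + C / Real.log H)
  have hm0 : 0 < m := lt_min one_pos (by positivity)
  have hlow : 0 ≤ u * m - 1 := by
    rw [sub_nonneg, ← div_le_iff₀' hu0]
    exact le_min ((div_le_one hu0).2 hu) (by linarith)
  have hupp : u * m - 1 ≤ Q * C / Real.log H := by
    calc u * m - 1 ≤ u * (1 / u + C / Real.log H) - 1 := by gcongr; exact min_le_right _ _
      _ = u * (C / Real.log H) := by field_simp; ring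
      _ ≤ Q * C / Real.log H := by rw [mul_div_assoc]; gcongr
  have hexcess : B ^ (u * m - 1) ≤ ENNReal.ofReal (W ^ (Q * C) * Real.exp (d * (Q * C))) :=
    calc B ^ (u * m - 1) ≤ ENNReal.ofReal (W * H ^ d) ^ (u * m - 1) := by gcongr
      _ ≤ ENNReal.ofReal (W * H ^ d) ^ (Q * C / Real.log H) :=
          ENNReal.rpow_le_rpow_of_exponent_le (by simpa using hWH) hupp
      _ = ENNReal.ofReal ((W * H ^ d) ^ (Q * C / Real.log H)) :=
          ENNReal.ofReal_rpow_of_nonneg (by positivity) (by positivity)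
      _ ≤ _ := ENNReal.ofReal_le_ofReal
          (mul_pow_rpow_div_log_le d hW hH hlog (by positivity))
  calc a ^ u = (a ^ m⁻¹) ^ (u * m - 1 + 1) := by
        rw [← ENNReal.rpow_mul]; congr 1; field_simp; ring
    _ ≤ B ^ (u * m - 1 + 1) := by gcongr
    _ = B ^ (u * m - 1) * B := by
        rw [ENNReal.rpow_add_of_nonneg _ _ hlow zero_le_one, ENNReal.rpow_one]
    _ ≤ _ := by gcongr

lemma real_rpow_le_exp_mul_rpow_add_of_le_one {r : ℝ} (hr0 : 0 ≤ r) (hr1 : r ≤ 1) {u v d D : ℝ}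
    (hd : 0 ≤ d) (hu : 1 ≤ u) (x : X) (huv : |u - v| ≤ D / Real.log (Real.exp 1 + ‖x‖)) :
    r ^ u ≤ Real.exp (d * D) * r ^ v + (1 + ‖x‖) ^ (-d) := by
  set H := Real.exp 1 + ‖x‖
  have hH0 : 0 < H := by positivity
  have hlogH : 0 < Real.log H := one_pos.trans_le (one_le_log_exp_one_add (norm_nonneg x))
  rcases le_or_gt r (H ^ (-d)) with h | h
  · calc r ^ u ≤ r := by simpa using Real.rpow_le_rpow_of_exponent_ge' hr0 hr1 zero_le_one hu
      _ ≤ H ^ (-d) := h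
      _ ≤ (1 + ‖x‖) ^ (-d) := Real.rpow_le_rpow_of_nonpos (by positivity)
          (add_le_add_left (by linarith [Real.add_one_le_exp 1]) _) (by linarith)
      _ ≤ _ := le_add_of_nonneg_left (by positivity)
  · have hr : 0 < r := lt_trans (by positivity) h
    have hlogr : -Real.log r ≤ d * Real.log H := by
      have := Real.log_le_log (by positivity) h.le
      rw [Real.log_rpow hH0] at this
      linarith
    have hquot : r ^ (u - v) ≤ Real.exp (d * D) := by
      rw [Real.rpow_def_of_pos hr, Real.exp_le_exp]
      calc Real.log r * (u - v) ≤ |Real.log r| * |u - v| := by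
            rw [← abs_mul]; exact le_abs_self _
        _ = -Real.log r * |u - v| := by rw [abs_of_nonpos (Real.log_nonpos hr0 hr1)]
        _ ≤ d * Real.log H * (D / Real.log H) := by gcongr
        _ = d * D := by field_simp
    calc r ^ u = r ^ (u - v) * r ^ v := by rw [← Real.rpow_add hr, sub_add_cancel]
      _ ≤ Real.exp (d * D) * r ^ v := by gcongr
      _ ≤ _ := le_add_of_nonneg_right (by positivity)

lemma ennreal_rpow_le_exp_mul_rpow_add_of_le_one {a : ℝ≥0∞} (ha : a ≤ 1) {u v d D : ℝ}
    (hd : 0 ≤ d) (hu : 1 ≤ u) (hv : 0 ≤ v) (x : X)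
    (huv : |u - v| ≤ D / Real.log (Real.exp 1 + ‖x‖)) :
    a ^ u ≤ ENNReal.ofReal (Real.exp (d * D)) * a ^ v + ENNReal.ofReal ((1 + ‖x‖) ^ (-d)) := by
  lift a to ℝ≥0 using ne_top_of_le_ne_top ENNReal.one_ne_top ha
  rw [← ENNReal.ofReal_coe_nnreal, ENNReal.ofReal_rpow_of_nonneg a.coe_nonneg (by linarith),
    ENNReal.ofReal_rpow_of_nonneg a.coe_nonneg hv, ← ENNReal.ofReal_mul (by positivity),
    ← ENNReal.ofReal_add (by positivity) (by positivity)]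
  exact ENNReal.ofReal_le_ofReal
    (real_rpow_le_exp_mul_rpow_add_of_le_one a.2 (by exact_mod_cast ha) hd hu x huv)

/-- A function with values in `[0, 1]` only sees the exponent at infinity, up to the decaying
error `(1 + ‖x‖) ^ (-d)`: compare `q x` with `qi`, average, and compare `qi` with `q y`. -/
lemma maximalFunction_rpow_le_of_le_one [MeasurableSpace X] [OpensMeasurableSpace X] {μ : Measure X}
    {d D qi : ℝ} (hd : 0 ≤ d) (hq : Measurable q) (h1 : ∀ x, 1 ≤ q x) (hqi : 1 ≤ qi)
    (hdecay : ∀ x, |q x - qi| ≤ D / Real.log (Real.exp 1 + ‖x‖))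
    {f : X → ℝ≥0∞} (hf : Measurable f) (hf1 : ∀ y, f y ≤ 1) (x : X) :
    maximalFunction μ f x ^ q x ≤
      ENNReal.ofReal (Real.exp (d * D)) * (ENNReal.ofReal (Real.exp (d * D)) *
        maximalFunction μ (fun y => f y ^ q y) x +
        maximalFunction μ (fun y => ENNReal.ofReal ((1 + ‖y‖) ^ (-d))) x) +
      ENNReal.ofReal ((1 + ‖x‖) ^ (-d)) := by
  set k := ENNReal.ofReal (Real.exp (d * D))
  set h : X → ℝ≥0∞ := fun y => ENNReal.ofReal ((1 + ‖y‖) ^ (-d))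
  refine maximalFunction_rpow_le (one_pos.trans_le (h1 x)) fun z ρ hx => ?_
  have havg : ⨍⁻ y in ball z ρ, f y ∂μ ≤ 1 :=
    calc ⨍⁻ y in ball z ρ, f y ∂μ ≤ ⨍⁻ _ in ball z ρ, 1 ∂μ := laverage_mono_ae (ae_of_all _ hf1)
      _ ≤ 1 := by simp only [laverage, lintegral_one, prob_le_one]
  have hinf : (⨍⁻ y in ball z ρ, f y ∂μ) ^ qi ≤
      k * maximalFunction μ (fun y => f y ^ q y) x + maximalFunction μ h x :=
    calc (⨍⁻ y in ball z ρ, f y ∂μ) ^ qi ≤ ⨍⁻ y in ball z ρ, f y ^ qi ∂μ :=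
          rpow_laverage_le_laverage_rpow hf hqi
      _ ≤ maximalFunction μ (fun y => k * f y ^ q y + h y) x :=
          (laverage_mono_ae <| ae_of_all _ fun y =>
            ennreal_rpow_le_exp_mul_rpow_add_of_le_one (hf1 y) hd hqi (by linarith [h1 y]) y
              (by rw [abs_sub_comm]; exact hdecay y)).trans (setLAverage_le_maximalFunction _ hx)
      _ ≤ k * maximalFunction μ (fun y => f y ^ q y) x + maximalFunction μ h x := by
          rw [← maximalFunction_const_mul (hf.pow hq)]
          exact maximalFunction_add_le ((hf.pow hq).const_mul k) x
  grw [ennreal_rpow_le_exp_mul_rpow_add_of_le_one havg hd (h1 x) (by linarith) x (hdecay x),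
    hinf]

end LogHolder

variable {E : Type*} [NormedAddCommGroup E] [NormedSpace ℝ E] [FiniteDimensional ℝ E]
  [MeasurableSpace E] [BorelSpace E] (μ : Measure E) [μ.IsAddHaarMeasure] {q : E → ℝ}
  {Q C₁ D qi κ : ℝ}

lemma exists_inv_addHaar_ball_le : ∃ W : ℝ, 1 ≤ W ∧ ∀ (z : E) (ρ : ℝ), 0 < ρ →
    (μ (ball z ρ))⁻¹ ≤ ENNReal.ofReal (W * (Real.exp 1 + 1 / (2 * ρ)) ^ finrank ℝ E) := by
  set ω := (μ (ball 0 1)).toReal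
  have hω : 0 < ω := ENNReal.toReal_pos (measure_ball_pos μ _ one_pos).ne' measure_ball_lt_top.ne
  refine ⟨max 1 (2 ^ finrank ℝ E / ω), le_max_left _ _, fun z ρ hρ => ?_⟩
  have hball : μ (ball z ρ) = ENNReal.ofReal (ρ ^ finrank ℝ E * ω) := by
    rw [Measure.addHaar_ball_of_pos μ z hρ, ENNReal.ofReal_mul (by positivity),
      ENNReal.ofReal_toReal measure_ball_lt_top.ne]
  rw [hball, ← ENNReal.ofReal_inv_of_pos (by positivity)]
  apply ENNReal.ofReal_le_ofReal
  calc (ρ ^ finrank ℝ E * ω)⁻¹ = 2 ^ finrank ℝ E / ω * (1 / (2 * ρ)) ^ finrank ℝ E := by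
        rw [div_pow, mul_pow, one_pow]; field_simp
    _ ≤ _ := by
        gcongr
        · exact le_max_right _ _
        · linarith [Real.exp_pos 1]

lemma exists_maximalFunction_rpow_le_of_one_le (hC₁ : 0 < C₁) (h1 : ∀ x, 1 ≤ q x)
    (hQ : ∀ x, q x ≤ Q)
    (hlog : ∀ x y, x ≠ y → |1 / q x - 1 / q y| ≤ C₁ / Real.log (Real.exp 1 + 1 / ‖x - y‖)) :
    ∃ K : ℝ≥0∞, K ≠ ⊤ ∧ ∀ f : E → ℝ≥0∞, Measurable f → (∀ y, f y = 0 ∨ 1 ≤ f y) →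
      ∫⁻ y, f y ^ q y ∂μ ≤ 1 → ∀ x, maximalFunction μ f x ^ q x ≤
      K * maximalFunction μ (fun y => f y ^ q y) x := by
  obtain ⟨W, hW1, hW⟩ := exists_inv_addHaar_ball_le μ
  refine ⟨ENNReal.ofReal (W ^ (Q * C₁) * Real.exp (finrank ℝ E * (Q * C₁))),
    ENNReal.ofReal_ne_top, fun f hf hf01 hint x => maximalFunction_rpow_le (one_pos.trans_le (h1 x))
      fun z ρ hx => ?_⟩
  have hρ := pos_of_mem_ball hx
  grw [← setLAverage_le_maximalFunction _ hx]
  have hL := one_le_log_exp_one_add (r := 1 / (2 * ρ)) (by positivity)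
  have hqx : 0 < q x := one_pos.trans_le (h1 x)
  refine rpow_le_mul_of_rpow_inv_min_le (finrank ℝ E) hC₁ (h1 x) (hQ x) hW1
    (by positivity) hL ?_ ?_
  · calc ⨍⁻ y in ball z ρ, f y ^ q y ∂μ ≤ (μ (ball z ρ))⁻¹ * 1 := by
          rw [setLAverage_eq, ENNReal.div_eq_inv_mul]
          gcongr
          exact (setLIntegral_le_lintegral _ _).trans hint
      _ ≤ _ := by rw [mul_one]; exact hW z ρ hρ
  · set m := min 1 (1 / q x + C₁ / Real.log (Real.exp 1 + 1 / (2 * ρ)))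
    have hm0 : 0 < m := lt_min one_pos (by positivity)
    calc (⨍⁻ y in ball z ρ, f y ∂μ) ^ m⁻¹ ≤ ⨍⁻ y in ball z ρ, f y ^ m⁻¹ ∂μ :=
          rpow_laverage_le_laverage_rpow hf ((one_le_inv₀ hm0).2 (min_le_left _ _))
      _ ≤ ⨍⁻ y in ball z ρ, f y ^ q y ∂μ := setLAverage_mono' measurableSet_ball fun y hy => by
          rcases hf01 y with h0 | h0
          · simp [h0, ENNReal.zero_rpow_of_pos (inv_pos.2 hm0)]
          · exact ENNReal.rpow_le_rpow_of_exponent_le h0 (inv_min_le_of_mem_ball hC₁ h1 hlog hx hy)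

theorem exists_maximalFunction_rpow_le (hq : Measurable q) {d : ℝ} (hd : 0 ≤ d) (hC₁ : 0 < C₁)
    (h1 : ∀ x, 1 ≤ q x) (hQ : ∀ x, q x ≤ Q)
    (hlog : ∀ x y, x ≠ y → |1 / q x - 1 / q y| ≤ C₁ / Real.log (Real.exp 1 + 1 / ‖x - y‖))
    (hqi : 1 ≤ qi) (hdecay : ∀ x, |q x - qi| ≤ D / Real.log (Real.exp 1 + ‖x‖)) :
    ∃ A : ℝ≥0∞, A ≠ ⊤ ∧ ∀ f : E → ℝ≥0∞, Measurable f →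
      ∫⁻ x in {x | 1 ≤ f x}, f x ^ q x ∂μ ≤ 1 → ∀ x, maximalFunction μ f x ^ q x ≤
        A * (maximalFunction μ (fun y => f y ^ q y) x +
          (maximalFunction μ (fun y => ENNReal.ofReal ((1 + ‖y‖) ^ (-d))) x +
            ENNReal.ofReal ((1 + ‖x‖) ^ (-d)))) := by
  obtain ⟨K, hK, hlarge⟩ := exists_maximalFunction_rpow_le_of_one_le μ hC₁ h1 hQ hlog
  set k := ENNReal.ofReal (Real.exp (d * D))
  set h : E → ℝ≥0∞ := fun y => ENNReal.ofReal ((1 + ‖y‖) ^ (-d))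
  refine ⟨2 ^ Q * (K + k * (k + 1) + 1), by finiteness, fun f hf hint x => ?_⟩
  set F : E → ℝ≥0∞ := fun y => f y ^ q y
  set S := maximalFunction μ F x + (maximalFunction μ h x + h x)
  have hq0 : ∀ y, 0 < q y := fun y => one_pos.trans_le (h1 y)
  have hlevel : MeasurableSet {y | 1 ≤ f y} := measurableSet_le measurable_const hf
  set f₁ := {y | 1 ≤ f y}.indicator f
  set f₂ := {y | 1 ≤ f y}ᶜ.indicator f
  have hf₁ : Measurable f₁ := hf.indicator hlevel
  have hf₁01 : ∀ y, f₁ y = 0 ∨ 1 ≤ f₁ y := fun y => by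
    by_cases hy : 1 ≤ f y <;> simp [f₁, hy]
  have hf₂1 : ∀ y, f₂ y ≤ 1 := fun y => by
    by_cases hy : 1 ≤ f y
    · simp [f₂, hy]
    · simpa [f₂, indicator, hy] using (not_le.1 hy).le
  calc maximalFunction μ f x ^ q x
      ≤ (maximalFunction μ f₁ x + maximalFunction μ f₂ x) ^ q x := by
        gcongr
        exacts [(hq0 x).le, maximalFunction_le_indicator_add hf hlevel x]
    _ ≤ 2 ^ Q * (maximalFunction μ f₁ x ^ q x + maximalFunction μ f₂ x ^ q x) := by
        grw [ENNReal.rpow_add_le_mul_rpow_add_rpow _ _ (h1 x),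
          ENNReal.rpow_le_rpow_of_exponent_le one_le_two ((sub_le_self _ zero_le_one).trans (hQ x))]
    _ ≤ 2 ^ Q * (K * maximalFunction μ F x +
          (k * (k * maximalFunction μ F x + maximalFunction μ h x) + h x)) := by
        grw [hlarge f₁ hf₁ hf₁01
          ((lintegral_indicator_rpow hlevel hq0).trans_le hint) x,
          maximalFunction_rpow_le_of_le_one hd hq h1 hqi hdecay (hf.indicator hlevel.compl) hf₂1 x,
          maximalFunction_indicator_rpow_le fun y => (hq0 y).le,
          maximalFunction_indicator_rpow_le fun y => (hq0 y).le]
    _ ≤ 2 ^ Q * (K * S + (k * (k * S + S) + S)) := by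
        gcongr
        exacts [le_self_add, le_self_add, le_self_add.trans le_add_self,
          le_add_self.trans le_add_self]
    _ = _ := by ring

variable [Nontrivial E]

theorem exists_lintegral_maximalFunction_rpow_le_of_logHolder (hq : Measurable q) (hC₁ : 0 < C₁)
    (h1 : ∀ x, 1 ≤ q x) (hQ : ∀ x, q x ≤ Q)
    (hlog : ∀ x y, x ≠ y → |1 / q x - 1 / q y| ≤ C₁ / Real.log (Real.exp 1 + 1 / ‖x - y‖))
    (hqi : 1 ≤ qi) (hdecay : ∀ x, |q x - qi| ≤ D / Real.log (Real.exp 1 + ‖x‖)) (hκ : 1 < κ) :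
    ∃ K : ℝ≥0∞, K ≠ ⊤ ∧ ∀ f : E → ℝ≥0∞, Measurable f →
      ∫⁻ x, f x ^ (q x * κ) ∂μ ≤ 1 → ∫⁻ x, maximalFunction μ f x ^ (q x * κ) ∂μ ≤ K := by
  have hκ0 : 0 < κ := by linarith
  obtain ⟨A, hA, hpoint⟩ := exists_maximalFunction_rpow_le μ hq (d := finrank ℝ E)
    (Nat.cast_nonneg _) hC₁ h1 hQ hlog hqi hdecay
  set h : E → ℝ≥0∞ := fun y => ENNReal.ofReal ((1 + ‖y‖) ^ (-(finrank ℝ E : ℝ)))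
  have hh : Measurable h := by fun_prop
  have hhint : ∫⁻ y, h y ^ κ ∂μ ≠ ⊤ := by
    have hdim : (finrank ℝ E : ℝ) < finrank ℝ E * κ :=
      lt_mul_of_one_lt_right (Nat.cast_pos.2 finrank_pos) hκ
    refine ((lintegral_congr fun y => ?_).trans_lt (finite_integral_one_add_norm hdim)).ne
    rw [ENNReal.ofReal_rpow_of_nonneg (by positivity) hκ0.le, ← Real.rpow_mul (by positivity),
      neg_mul]
  set C := 5 ^ finrank ℝ E * ENNReal.ofReal (2 * κ / (κ - 1)) * 2 ^ (κ - 1)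
  have hC : C ≠ ⊤ := by finiteness
  refine ⟨A ^ κ * (2 ^ (κ - 1) * (C + 2 ^ (κ - 1) * (C * ∫⁻ y, h y ^ κ ∂μ + ∫⁻ y, h y ^ κ ∂μ))),
    by finiteness, fun f hf hint => ?_⟩
  set F : E → ℝ≥0∞ := fun y => f y ^ q y
  have hF : ∫⁻ x, F x ^ κ ∂μ ≤ 1 := by simpa only [F, ← ENNReal.rpow_mul] using hint
  have hlarge : ∫⁻ x in {x | 1 ≤ f x}, f x ^ q x ∂μ ≤ 1 := by
    refine (setLIntegral_mono' (measurableSet_le measurable_const hf) fun x hx => ?_).trans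
      ((setLIntegral_le_lintegral _ _).trans hint)
    exact ENNReal.rpow_le_rpow_of_exponent_le hx
      (le_mul_of_one_le_right (by linarith [h1 x]) hκ.le)
  calc ∫⁻ x, maximalFunction μ f x ^ (q x * κ) ∂μ
      ≤ ∫⁻ x, A ^ κ * (maximalFunction μ F x + (maximalFunction μ h x + h x)) ^ κ ∂μ :=
        lintegral_mono fun x => by
          rw [ENNReal.rpow_mul, ← ENNReal.mul_rpow_of_nonneg _ _ hκ0.le]
          exact ENNReal.rpow_le_rpow (hpoint f hf hlarge x) hκ0.le
    _ = A ^ κ * ∫⁻ x, (maximalFunction μ F x + (maximalFunction μ h x + h x)) ^ κ ∂μ :=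
        lintegral_const_mul' _ _ (by finiteness)
    _ ≤ A ^ κ * (2 ^ (κ - 1) * (∫⁻ x, maximalFunction μ F x ^ κ ∂μ + 2 ^ (κ - 1) *
          (∫⁻ x, maximalFunction μ h x ^ κ ∂μ + ∫⁻ x, h x ^ κ ∂μ))) := by
        grw [lintegral_add_rpow_le (measurable_maximalFunction F) hκ.le,
          lintegral_add_rpow_le (measurable_maximalFunction h) hκ.le]
    _ ≤ _ := by
        grw [lintegral_maximalFunction_rpow_le μ hκ (hf.pow hq),
          lintegral_maximalFunction_rpow_le μ hκ hh, hF, mul_one]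

end VariableExponent

section IsPLog

lemma tendsto_cobounded_of_abs_sub_le_div_log {X : Type*} [NormedAddCommGroup X] {g : X → ℝ}
    {a C : ℝ} (h : ∀ x, |g x - a| ≤ C / Real.log (Real.exp 1 + ‖x‖)) :
    Tendsto g (Bornology.cobounded X) (𝓝 a) :=
  tendsto_sub_nhds_zero_iff.1 <| squeeze_zero_norm h <| tendsto_const_nhds.div_atTop <|
    Real.tendsto_log_atTop.comp <| tendsto_atTop_add_const_left _ _ tendsto_norm_cobounded_atTop

lemma continuous_of_abs_sub_le_div_log {X : Type*} [NormedAddCommGroup X] {g : X → ℝ} {C : ℝ}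
    (h : ∀ x y, x ≠ y → |g x - g y| ≤ C / Real.log (Real.exp 1 + 1 / ‖x - y‖)) :
    Continuous g := by
  refine continuous_iff_continuousAt.2 fun x => continuousAt_iff_punctured_nhds.2 ?_
  have hlim : Tendsto (fun y => C / Real.log (Real.exp 1 + 1 / ‖y - x‖)) (𝓝[≠] x) (𝓝 0) := by
    simp only [one_div]
    exact tendsto_const_nhds.div_atTop <| Real.tendsto_log_atTop.comp <|
      tendsto_atTop_add_const_left _ _ <| tendsto_inv_nhdsGT_zero.comp <|
        tendsto_norm_sub_self_nhdsNE x
  exact tendsto_sub_nhds_zero_iff.1 <| squeeze_zero_norm'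
    (eventually_mem_nhdsWithin.mono fun y hy => h y x hy) hlim

variable {E : Type*} [NormedAddCommGroup E] [MeasurableSpace E] {p : E → ℝ}

lemma IsPLog.pos (hp : IsPLog univ p) (x : E) : 0 < p x :=
  one_pos.trans_le (hp.2.1 x (mem_univ x))

lemma IsPLog.continuous (hp : IsPLog univ p) : Continuous p := by
  have hpos := hp.pos
  obtain ⟨-, -, C₁, -, -, -, -, hlog, -⟩ := hp
  have hinv : Continuous fun x => 1 / p x :=
    continuous_of_abs_sub_le_div_log fun x y => hlog x (mem_univ x) y (mem_univ y)
  exact (hinv.inv₀ fun x => (one_div_pos.2 (hpos x)).ne').congr fun x => by simp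

lemma IsPLog.mem_of_ae_mem {μ : Measure E} [μ.IsOpenPosMeasure] (hp : IsPLog univ p) {s : Set ℝ}
    (hs : IsClosed s) (h : ∀ᵐ x ∂μ, p x ∈ s) (x : E) : p x ∈ s :=
  (hs.preimage hp.continuous).closure_eq.subset ((Measure.dense_of_ae h).closure_eq ▸ mem_univ x)

variable [NormedSpace ℝ E] [Nontrivial E] {l u : ℝ}

lemma IsPLog.exists_abs_div_sub_le (hp : IsPLog univ p) (hl : 0 < l) (h : ∀ x, p x ∈ Icc l u) :
    ∃ D qi : ℝ, 1 ≤ qi ∧ ∀ x, |p x / l - qi| ≤ D / Real.log (Real.exp 1 + ‖x‖) := by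
  have hpos := hp.pos
  obtain ⟨-, -, -, -, C₂, _, pinf, -, hdecay⟩ := hp
  have hu : 0 < u := (hpos 0).trans_le (h 0).2
  have hmem : 1 / pinf ∈ Icc (1 / u) (1 / l) :=
    isClosed_Icc.mem_of_tendsto
      (tendsto_cobounded_of_abs_sub_le_div_log fun x => hdecay x (mem_univ x)) <|
      .of_forall fun x => ⟨one_div_le_one_div_of_le (hpos x) (h x).2,
        one_div_le_one_div_of_le hl (h x).1⟩
  have hpinf : 0 < pinf := one_div_pos.1 ((one_div_pos.2 hu).trans_le hmem.1)
  have hlpinf : l ≤ pinf := (one_div_le_one_div hpinf hl).1 hmem.2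
  have hpinfu : pinf ≤ u := (one_div_le_one_div hu hpinf).1 hmem.1
  refine ⟨u * u / l * C₂, pinf / l, (one_le_div hl).2 hlpinf, fun x => ?_⟩
  have hpx := hpos x
  have hdiff : p x / l - pinf / l = -(p x * pinf / l * (1 / p x - 1 / pinf)) := by
    field_simp
    ring
  rw [hdiff, abs_neg, abs_mul, abs_of_pos (by positivity), mul_div_assoc (u * u / l)]
  gcongr
  exacts [(h x).2, hdecay x (mem_univ x)]

theorem IsPLog.exists_lintegral_maximalFunction_rpow_le [FiniteDimensional ℝ E] [BorelSpace E]
    (μ : Measure E) [μ.IsAddHaarMeasure] (hp : IsPLog univ p) {c : ℝ} (hc : 0 < c) (hcl : c < l)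
    (h : ∀ᵐ x ∂μ, p x ∈ Icc l u) :
    ∃ K : ℝ≥0∞, K ≠ ⊤ ∧ ∀ f : E → ℝ≥0∞, Measurable f →
      ∫⁻ x, f x ^ (p x / c) ∂μ ≤ 1 → ∫⁻ x, maximalFunction μ f x ^ (p x / c) ∂μ ≤ K := by
  have hl : 0 < l := hc.trans hcl
  have hmem := hp.mem_of_ae_mem isClosed_Icc h
  have hpos := hp.pos
  obtain ⟨D, qi, hqi, hdecay⟩ := hp.exists_abs_div_sub_le hl hmem
  obtain ⟨hpm, -, C₁, hC₁, -, -, -, hlog, -⟩ := hp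
  have hlog' : ∀ x y, x ≠ y → |1 / (p x / l) - 1 / (p y / l)| ≤
      l * C₁ / Real.log (Real.exp 1 + 1 / ‖x - y‖) := fun x y hxy => by
    have hdiff : 1 / (p x / l) - 1 / (p y / l) = l * (1 / p x - 1 / p y) := by
      have := hpos x
      have := hpos y
      field_simp
    rw [hdiff, abs_mul, abs_of_pos hl, mul_div_assoc]
    gcongr
    exact hlog x (mem_univ x) y (mem_univ y) hxy
  have hcancel : ∀ x, p x / l * (l / c) = p x / c := fun x => by field_simp
  simpa only [hcancel] using exists_lintegral_maximalFunction_rpow_le_of_logHolder μ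
    (Q := u / l)
    (hpm.div_const l) (by positivity) (fun x => (one_le_div hl).2 (hmem x).1)
    (fun x => div_le_div_of_nonneg_right (hmem x).2 hl.le) hlog' hqi hdecay
    ((one_lt_div hc).2 hcl)

end IsPLog

section MaximalKernel

variable {E : Type*} [NormedAddCommGroup E] [InnerProductSpace ℝ E] [FiniteDimensional ℝ E]
  [MeasurableSpace E] [BorelSpace E]

/-- A nonnegative convolution kernel which is dominated by the maximal function. -/
def IsMaximalKernel (k : E → ℝ) : Prop :=
  (∀ x, 0 ≤ k x) ∧ ∀ f : E → ℝ≥0∞, Measurable f → ∀ x,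
    ∫⁻ y, ENNReal.ofReal (k (x - y)) * f y ≤ maximalFunction volume f x

lemma lintegral_ofReal_sub_mul_le_maximalFunction {k : E → ℝ} (hk : Measurable k)
    (hk0 : ∀ x, 0 ≤ k x) (hball : ∀ t > 0, ∃ ρ : ℝ, {z | t < k z} = ball 0 ρ) {f : E → ℝ≥0∞}
    (hf : Measurable f) (x : E) :
    ∫⁻ y, ENNReal.ofReal (k (x - y)) * f y ≤
      (∫⁻ y, ENNReal.ofReal (k y)) * maximalFunction volume f x := by
  have hkx : Measurable fun y => k (x - y) := by fun_prop
  have hset : ∀ t > 0, ∃ ρ : ℝ, {y | t < k (x - y)} = ball x ρ := fun t ht => by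
    obtain ⟨ρ, hρ⟩ := hball t ht
    refine ⟨ρ, ext fun y => ?_⟩
    have := Set.ext_iff.1 hρ (x - y)
    simp only [mem_ofPred_eq, mem_ball_zero_iff] at this
    rw [mem_ofPred_eq, this, mem_ball_iff_norm, norm_sub_rev]
  have hmeas : Measurable fun t : ℝ => volume {y | t < k (x - y)} :=
    Antitone.measurable fun a b hab => measure_mono fun y hy => hab.trans_lt hy
  calc ∫⁻ y, ENNReal.ofReal (k (x - y)) * f y
      = ∫⁻ y, ENNReal.ofReal (k (x - y)) ∂volume.withDensity f := by
        rw [lintegral_withDensity_eq_lintegral_mul _ hf (by fun_prop)]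
        simp only [Pi.mul_apply, mul_comm]
    _ = ∫⁻ t in Ioi 0, volume.withDensity f {y | t < k (x - y)} :=
        lintegral_eq_lintegral_meas_lt _ (.of_forall fun y => hk0 _) hkx.aemeasurable
    _ ≤ ∫⁻ t in Ioi 0, volume {y | t < k (x - y)} * maximalFunction volume f x := by
        refine setLIntegral_mono (hmeas.mul_const _) fun t ht => ?_
        obtain ⟨ρ, hρ⟩ := hset t ht
        rw [hρ, withDensity_apply _ isOpen_ball.measurableSet]
        rcases le_or_gt ρ 0 with h | h
        · simp [ball_eq_empty.2 h]
        · exact setLIntegral_ball_le_mul_maximalFunction f (mem_ball_self h)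
    _ = (∫⁻ y, ENNReal.ofReal (k (x - y))) * maximalFunction volume f x := by
        rw [lintegral_mul_const _ hmeas, lintegral_eq_lintegral_meas_lt _
          (.of_forall fun y => hk0 _) hkx.aemeasurable]
    _ = _ := by rw [lintegral_sub_left_eq_self fun y => ENNReal.ofReal (k y)]

lemma IsMaximalKernel.of_tendsto {k : ℕ → E → ℝ} {k' : E → ℝ} (hk : ∀ j, IsMaximalKernel (k j))
    (hkm : ∀ j, Measurable (k j)) (h : ∀ x, Tendsto (fun j => k j x) atTop (𝓝 (k' x))) :
    IsMaximalKernel k' := by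
  refine ⟨fun x => ge_of_tendsto' (h x) fun j => (hk j).1 x, fun f hf x => ?_⟩
  have hlim : ∀ y, ENNReal.ofReal (k' (x - y)) * f y ≤
      liminf (fun j => ENNReal.ofReal (k j (x - y)) * f y) atTop := fun y => by
    rcases eq_or_ne (ENNReal.ofReal (k' (x - y))) 0 with h0 | h0
    · simp [h0]
    · exact (ENNReal.Tendsto.mul_const (ENNReal.tendsto_ofReal (h _)) (.inl h0)).liminf_eq.ge
  calc ∫⁻ y, ENNReal.ofReal (k' (x - y)) * f y
      ≤ ∫⁻ y, liminf (fun j => ENNReal.ofReal (k j (x - y)) * f y) atTop := lintegral_mono hlim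
    _ ≤ liminf (fun j => ∫⁻ y, ENNReal.ofReal (k j (x - y)) * f y) atTop :=
        lintegral_liminf_le fun j => by fun_prop
    _ ≤ liminf (fun _ : ℕ => maximalFunction volume f x) atTop :=
        liminf_le_liminf (.of_forall fun j => (hk j).2 f hf x)
    _ = maximalFunction volume f x := liminf_const _

lemma IsMaximalKernel.integral {ι : Type*} [MeasurableSpace ι] {μ : Measure ι} [SFinite μ]
    (hμ : μ univ ≤ 1) {k : ι → E → ℝ} (hk : ∀ s, IsMaximalKernel (k s))
    (hkm : Measurable fun q : ι × E => k q.1 q.2) : IsMaximalKernel fun x => ∫ s, k s x ∂μ := by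
  refine ⟨fun x => integral_nonneg fun s => (hk s).1 x, fun f hf x => ?_⟩
  have hle : ∀ z, ENNReal.ofReal (∫ s, k s z ∂μ) ≤ ∫⁻ s, ENNReal.ofReal (k s z) ∂μ := fun z => by
    rw [integral_eq_lintegral_of_nonneg_ae (.of_forall fun s => (hk s).1 z)
      (by fun_prop : Measurable fun s => k s z).aestronglyMeasurable]
    exact ENNReal.ofReal_toReal_le
  calc ∫⁻ y, ENNReal.ofReal (∫ s, k s (x - y) ∂μ) * f y
      ≤ ∫⁻ y, (∫⁻ s, ENNReal.ofReal (k s (x - y)) ∂μ) * f y := by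
        gcongr
        exact hle _
    _ = ∫⁻ y, ∫⁻ s, ENNReal.ofReal (k s (x - y)) * f y ∂μ :=
        lintegral_congr fun y => (lintegral_mul_const _ (by fun_prop)).symm
    _ = ∫⁻ s, (∫⁻ y, ENNReal.ofReal (k s (x - y)) * f y) ∂μ :=
        lintegral_lintegral_swap (Measurable.aemeasurable (by fun_prop))
    _ ≤ ∫⁻ _, maximalFunction volume f x ∂μ := lintegral_mono fun s => (hk s).2 f hf x
    _ ≤ maximalFunction volume f x := by
        rw [lintegral_const]
        exact mul_le_of_le_one_right' hμ

end MaximalKernel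

section CosTransform

lemma setOf_lt_mul_exp_neg_mul_norm_sq_eq_ball {E : Type*} [NormedAddCommGroup E] {c a t : ℝ}
    (hc : 0 < c) (ha : 0 < a) (ht : 0 < t) :
    {z : E | t < c * Real.exp (-a * ‖z‖ ^ 2)} = ball 0 √(Real.log (c / t) / a) := by
  ext z
  rw [mem_ofPred_eq, mem_ball_zero_iff, Real.lt_sqrt (norm_nonneg z), lt_div_iff₀ ha,
    Real.lt_log_iff_exp_lt (by positivity), lt_div_iff₀ ht, neg_mul, Real.exp_neg,
    ← div_eq_mul_inv, lt_div_iff₀ (Real.exp_pos _), mul_comm (‖z‖ ^ 2) a, mul_comm t]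

variable {E : Type*} [NormedAddCommGroup E] [InnerProductSpace ℝ E] [FiniteDimensional ℝ E]
  [MeasurableSpace E] [BorelSpace E]

/-- The cosine transform, the real part of the inverse Fourier transform of a real function. -/
def cosTransform (ψ : E → ℝ) (x : E) : ℝ :=
  ∫ ξ, Real.cos (2 * Real.pi * inner ℝ ξ x) * ψ ξ

lemma re_fourierInv_ofReal {ψ : E → ℝ} (hψ : Integrable ψ) (x : E) :
    (𝓕⁻ (fun ξ => (ψ ξ : ℂ)) x).re = cosTransform ψ x := by
  have hint : Integrable fun ξ : E =>
      Complex.exp (↑(2 * Real.pi * inner ℝ ξ x) * Complex.I) • (ψ ξ : ℂ) :=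
    (hψ.ofReal (𝕜 := ℂ)).bdd_mul (c := 1) (by fun_prop)
      (.of_forall fun ξ => (Complex.norm_exp_ofReal_mul_I _).le)
  have hre := integral_re hint
  simp only [RCLike.re_eq_complex_re] at hre
  rw [Real.fourierInv_eq', ← hre, cosTransform]
  simp only [smul_eq_mul, Complex.re_mul_ofReal,
    Complex.exp_ofReal_mul_I_re]

lemma measurable_cosTransform {ψ : E → ℝ} (hψ : Measurable ψ) : Measurable (cosTransform ψ) :=
  (StronglyMeasurable.integral_prod_right' (ν := (volume : Measure E))
    (f := fun q : E × E => Real.cos (2 * Real.pi * inner ℝ q.2 q.1) * ψ q.2)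
    (Measurable.stronglyMeasurable (by fun_prop))).measurable

lemma abs_cosTransform_le {ψ : E → ℝ} (hψ : Integrable ψ) (hψ0 : ∀ ξ, 0 ≤ ψ ξ) (x : E) :
    |cosTransform ψ x| ≤ ∫ ξ, ψ ξ := by
  rw [← Real.norm_eq_abs]
  refine norm_integral_le_of_norm_le hψ (.of_forall fun ξ => ?_)
  rw [norm_mul, Real.norm_of_nonneg (hψ0 ξ)]
  exact mul_le_of_le_one_left (hψ0 ξ) (Real.abs_cos_le_one _)

lemma tendsto_cosTransform_of_dominated {ψ : ℕ → E → ℝ} {ψ' g : E → ℝ} (hψ : ∀ j, Measurable (ψ j))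
    (hg : Integrable g) (hle : ∀ j ξ, |ψ j ξ| ≤ g ξ)
    (h : ∀ ξ, Tendsto (fun j => ψ j ξ) atTop (𝓝 (ψ' ξ))) (x : E) :
    Tendsto (fun j => cosTransform (ψ j) x) atTop (𝓝 (cosTransform ψ' x)) := by
  refine tendsto_integral_of_dominated_convergence g
    (fun j => Measurable.aestronglyMeasurable (by fun_prop)) hg
    (fun j => .of_forall fun ξ => ?_) (.of_forall fun ξ => (h ξ).const_mul _)
  exact (norm_mul_le _ _).trans <|
    (mul_le_of_le_one_left (norm_nonneg _) (Real.abs_cos_le_one _)).trans (hle j ξ)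

lemma integrable_exp_neg_mul_norm_sq {s : ℝ} (hs : 0 < s) :
    Integrable fun ξ : E => Real.exp (-s * ‖ξ‖ ^ 2) :=
  .of_integral_ne_zero <| by
    rw [GaussianFourier.integral_rexp_neg_mul_sq_norm hs]
    positivity

lemma cosTransform_exp_neg_mul_norm_sq {s : ℝ} (hs : 0 < s) (x : E) :
    cosTransform (fun ξ : E => Real.exp (-s * ‖ξ‖ ^ 2)) x =
      (Real.pi / s) ^ ((finrank ℝ E : ℝ) / 2) * Real.exp (-(Real.pi ^ 2 / s) * ‖x‖ ^ 2) := by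
  have h := fourier_gaussian_innerProductSpace (V := E) (b := (s : ℂ)) (by simpa using hs) (-x)
  rw [← re_fourierInv_ofReal (integrable_exp_neg_mul_norm_sq hs), Real.fourierInv_eq_fourier_neg]
  push_cast
  rw [h, ← Complex.ofReal_re (_ * Real.exp _), Complex.ofReal_mul,
    Complex.ofReal_cpow (by positivity)]
  push_cast
  rw [norm_neg]
  congr 3
  ring

lemma integral_cosTransform_exp_neg_mul_norm_sq {s : ℝ} (hs : 0 < s) :
    ∫ x : E, cosTransform (fun ξ : E => Real.exp (-s * ‖ξ‖ ^ 2)) x = 1 := by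
  have hinv : Real.pi / s * (Real.pi / (Real.pi ^ 2 / s)) = 1 := by field_simp
  simp only [cosTransform_exp_neg_mul_norm_sq hs]
  rw [integral_const_mul, GaussianFourier.integral_rexp_neg_mul_sq_norm (by positivity),
    ← Real.mul_rpow (by positivity) (by positivity), hinv, Real.one_rpow]

lemma isMaximalKernel_cosTransform_exp_neg_mul_norm_sq {s : ℝ} (hs : 0 < s) :
    IsMaximalKernel (cosTransform fun ξ : E => Real.exp (-s * ‖ξ‖ ^ 2)) := by
  have h0 : ∀ x : E, 0 ≤ cosTransform (fun ξ : E => Real.exp (-s * ‖ξ‖ ^ 2)) x := fun x => by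
    rw [cosTransform_exp_neg_mul_norm_sq hs]
    positivity
  have hmass : ∫⁻ x : E, ENNReal.ofReal (cosTransform (fun ξ : E => Real.exp (-s * ‖ξ‖ ^ 2)) x)
      = 1 := by
    rw [← ofReal_integral_eq_lintegral_ofReal
      (integrable_of_integral_eq_one (integral_cosTransform_exp_neg_mul_norm_sq hs))
      (.of_forall h0), integral_cosTransform_exp_neg_mul_norm_sq hs, ENNReal.ofReal_one]
  refine ⟨h0, fun f hf x => ?_⟩
  have h := lintegral_ofReal_sub_mul_le_maximalFunction (measurable_cosTransform (by fun_prop)) h0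
    (fun t ht => ?_) hf x
  · rwa [hmass, one_mul] at h
  · simp only [cosTransform_exp_neg_mul_norm_sq hs]
    exact ⟨_, setOf_lt_mul_exp_neg_mul_norm_sq_eq_ball (by positivity) (by positivity) ht⟩

end CosTransform

section Subordination

/-- `φ` is, on `[0,∞)`, the Laplace transform of a finite measure on `[0,∞)`. -/
def IsLaplaceTransform (φ : ℝ → ℝ) : Prop :=
  ∃ μ : Measure ℝ≥0, IsFiniteMeasure μ ∧ ∀ l, 0 ≤ l → φ l = ∫ s, Real.exp (-(s * l)) ∂μ

lemma integrable_exp_neg_coe_mul (μ : Measure ℝ≥0) [IsFiniteMeasure μ] {l : ℝ} (hl : 0 ≤ l) :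
    Integrable (fun s : ℝ≥0 => Real.exp (-(s * l))) μ :=
  .of_bound (by fun_prop) 1 <| .of_forall fun s => by
    rw [Real.norm_of_nonneg (Real.exp_pos _).le, Real.exp_le_one_iff, neg_nonpos]
    positivity

namespace IsLaplaceTransform

variable {φ χ : ℝ → ℝ}

lemma nonneg (h : IsLaplaceTransform φ) {l : ℝ} (hl : 0 ≤ l) : 0 ≤ φ l := by
  obtain ⟨μ, _, hμ⟩ := h
  rw [hμ l hl]
  positivity

lemma const {c : ℝ} (hc : 0 ≤ c) : IsLaplaceTransform fun _ => c := by
  refine ⟨c.toNNReal • Measure.dirac 0, inferInstance, fun l _ => ?_⟩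
  rw [integral_smul_nnreal_measure, integral_dirac]
  simp [NNReal.smul_def, hc]

lemma add (h : IsLaplaceTransform φ) (h' : IsLaplaceTransform χ) :
    IsLaplaceTransform fun l => φ l + χ l := by
  obtain ⟨μ, _, hμ⟩ := h
  obtain ⟨ν, _, hν⟩ := h'
  refine ⟨μ + ν, inferInstance, fun l hl => ?_⟩
  rw [integral_add_measure (integrable_exp_neg_coe_mul μ hl) (integrable_exp_neg_coe_mul ν hl),
    ← hμ l hl, ← hν l hl]

lemma mul (h : IsLaplaceTransform φ) (h' : IsLaplaceTransform χ) :
    IsLaplaceTransform fun l => φ l * χ l := by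
  obtain ⟨μ, _, hμ⟩ := h
  obtain ⟨ν, _, hν⟩ := h'
  refine ⟨μ ∗ ν, inferInstance, fun l hl => ?_⟩
  simp only [integral_conv (integrable_exp_neg_coe_mul (μ ∗ ν) hl), NNReal.coe_add, add_mul,
    neg_add, Real.exp_add, integral_const_mul, integral_mul_const, hμ l hl, hν l hl]

lemma pow (h : IsLaplaceTransform φ) (k : ℕ) : IsLaplaceTransform fun l => φ l ^ k := by
  induction k with
  | zero => simpa using const zero_le_one
  | succ k ih => simpa only [pow_succ] using ih.mul h

end IsLaplaceTransform

variable {E : Type*} [NormedAddCommGroup E] [InnerProductSpace ℝ E] [FiniteDimensional ℝ E]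
  [MeasurableSpace E] [BorelSpace E]

variable (E) in
/-- The Gaussian regularisations of the radial multiplier `ξ ↦ ψ (‖ξ‖ ^ 2)` have maximal kernels.
The regularisation makes the kernel an honest integral, whether or not `ψ` is integrable. -/
def IsMaximalMultiplier (ψ : ℝ → ℝ) : Prop :=
  ∀ ε : ℝ, 0 < ε →
    IsMaximalKernel (cosTransform fun ξ : E => Real.exp (-ε * ‖ξ‖ ^ 2) * ψ (‖ξ‖ ^ 2))

lemma cosTransform_exp_neg_mul_norm_sq_mul_integral (μ : Measure ℝ≥0) [IsFiniteMeasure μ] {ε : ℝ}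
    (hε : 0 < ε) (x : E) :
    cosTransform (fun ξ : E => Real.exp (-ε * ‖ξ‖ ^ 2) * ∫ s, Real.exp (-(s * ‖ξ‖ ^ 2)) ∂μ) x =
      ∫ s : ℝ≥0, cosTransform (fun ξ : E => Real.exp (-(ε + s) * ‖ξ‖ ^ 2)) x ∂μ := by
  have hint : Integrable (Function.uncurry fun (ξ : E) (s : ℝ≥0) =>
      Real.cos (2 * Real.pi * inner ℝ ξ x) * Real.exp (-(ε + s) * ‖ξ‖ ^ 2))
      (volume.prod μ) := by
    refine ((integrable_exp_neg_mul_norm_sq hε).mul_prod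
      (integrable_const (1 : ℝ))).mono' (Measurable.aestronglyMeasurable (by fun_prop)) ?_
    refine .of_forall fun ⟨ξ, s⟩ => ?_
    rw [mul_one, Function.uncurry_apply_pair, norm_mul, Real.norm_of_nonneg (Real.exp_pos _).le]
    refine (mul_le_of_le_one_left (Real.exp_pos _).le (Real.abs_cos_le_one _)).trans ?_
    gcongr
    exact le_add_of_nonneg_right s.coe_nonneg
  simp only [cosTransform]
  rw [← integral_integral_swap hint]
  refine integral_congr_ae (.of_forall fun ξ => ?_)
  simp only [integral_const_mul, neg_add, add_mul, Real.exp_add, neg_mul]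

lemma IsLaplaceTransform.isMaximalMultiplier {φ : ℝ → ℝ} (h : IsLaplaceTransform φ)
    (h0 : φ 0 ≤ 1) : IsMaximalMultiplier E φ := by
  obtain ⟨μ, _, hμ⟩ := h
  have hmass : μ univ ≤ 1 := by
    rw [← ENNReal.toReal_le_toReal (by finiteness) ENNReal.one_ne_top, ENNReal.toReal_one]
    simpa [hμ 0 le_rfl, Measure.real] using h0
  intro ε hε
  have hεs : ∀ s : ℝ≥0, 0 < ε + s := fun s => by positivity
  simp only [hμ _ (sq_nonneg _)]
  rw [funext (cosTransform_exp_neg_mul_norm_sq_mul_integral (E := E) μ hε)]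
  refine .integral hmass (fun s => isMaximalKernel_cosTransform_exp_neg_mul_norm_sq (hεs s)) ?_
  simp only [cosTransform_exp_neg_mul_norm_sq (hεs _)]
  fun_prop

lemma IsMaximalMultiplier.of_tendsto {ψ : ℕ → ℝ → ℝ} {ψ' : ℝ → ℝ}
    (h : ∀ j, IsMaximalMultiplier E (ψ j)) (hm : ∀ j, Measurable (ψ j))
    (hb : ∀ j l, 0 ≤ l → |ψ j l| ≤ 1)
    (hlim : ∀ l, 0 ≤ l → Tendsto (fun j => ψ j l) atTop (𝓝 (ψ' l))) :
    IsMaximalMultiplier E ψ' := fun ε hε =>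
  .of_tendsto (fun j => h j ε hε) (fun j => measurable_cosTransform (by fun_prop)) <|
    tendsto_cosTransform_of_dominated (fun j => by fun_prop) (integrable_exp_neg_mul_norm_sq hε)
      (fun j ξ => by
        rw [abs_mul, Real.abs_exp]
        exact mul_le_of_le_one_right (Real.exp_pos _).le (hb j _ (sq_nonneg _)))
      fun ξ => (hlim _ (sq_nonneg _)).const_mul _

-- The compound Poisson semigroup is the limit of the mixtures `e^{-m} (1 + φ / k) ^ k`.
lemma IsLaplaceTransform.isMaximalMultiplier_exp_sub {φ : ℝ → ℝ} (h : IsLaplaceTransform φ)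
    (hm : Measurable φ) {m : ℝ} (hle : ∀ l, 0 ≤ l → φ l ≤ m) :
    IsMaximalMultiplier E fun l => Real.exp (φ l - m) := by
  have hb : ∀ (k : ℕ) (l : ℝ), 0 ≤ l → Real.exp (-m) * (1 + φ l / k) ^ k ≤ 1 := fun k l hl => by
    have hφ := h.nonneg hl
    calc _ ≤ Real.exp (-m) * Real.exp (φ l) := by
          gcongr
          simpa [neg_div] using Real.one_sub_div_pow_le_exp_neg (n := k) (t := -φ l)
            ((neg_nonpos.2 hφ).trans k.cast_nonneg)
      _ ≤ Real.exp (-m) * Real.exp m := by grw [hle l hl]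
      _ = 1 := by rw [← Real.exp_add, neg_add_cancel, Real.exp_zero]
  refine .of_tendsto (ψ := fun k l => Real.exp (-m) * (1 + φ l / k) ^ k)
    (fun k => isMaximalMultiplier ?_ (hb k 0 le_rfl)) (fun k => by fun_prop)
    (fun k l hl => ?_) fun l _ => ?_
  · simp only [div_eq_mul_inv]
    exact (const (Real.exp_pos _).le).mul <|
      ((const zero_le_one).add (h.mul (const (by positivity)))).pow k
  · have := h.nonneg hl
    rw [abs_of_nonneg (by positivity)]
    exact hb k l hl
  · rw [sub_eq_neg_add, Real.exp_add]
    exact (Real.tendsto_one_add_div_pow_exp _).const_mul _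

section Levy

variable {w : ℝ → ℝ} {d l : ℝ}

lemma integrableOn_exp_neg_mul_mul (hd : 0 ≤ d) (hw : IntegrableOn w (Ioi d)) (hl : 0 ≤ l) :
    IntegrableOn (fun s => Real.exp (-(s * l)) * w s) (Ioi d) := by
  refine hw.bdd_mul (c := 1) (by fun_prop) ?_
  filter_upwards [ae_restrict_mem measurableSet_Ioi] with s hs
  rw [Real.norm_of_nonneg (Real.exp_pos _).le, Real.exp_le_one_iff, neg_nonpos]
  exact mul_nonneg (hd.trans (le_of_lt hs)) hl

lemma setIntegral_exp_neg_mul_mul_sub (hd : 0 ≤ d) (hw : IntegrableOn w (Ioi d)) (hl : 0 ≤ l) :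
    (∫ s in Ioi d, Real.exp (-(s * l)) * w s) - ∫ s in Ioi d, w s =
      -∫ s in Ioi d, (1 - Real.exp (-(s * l))) * w s := by
  simp only [← integral_sub (integrableOn_exp_neg_mul_mul hd hw hl) hw, ← integral_neg, sub_mul,
    one_mul, neg_sub]

lemma setIntegral_one_sub_exp_neg_mul_mul_nonneg (hd : 0 ≤ d) (hw0 : ∀ s ∈ Ioi d, 0 ≤ w s)
    (hl : 0 ≤ l) : 0 ≤ ∫ s in Ioi d, (1 - Real.exp (-(s * l))) * w s := by
  refine setIntegral_nonneg measurableSet_Ioi fun s hs => mul_nonneg ?_ (hw0 s hs)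
  rw [sub_nonneg, Real.exp_le_one_iff, neg_nonpos]
  exact mul_nonneg (hd.trans (le_of_lt hs)) hl

lemma isLaplaceTransform_setIntegral (hd : 0 ≤ d) (hw : IntegrableOn w (Ioi d))
    (hw0 : ∀ s ∈ Ioi d, 0 ≤ w s) :
    IsLaplaceTransform fun l => ∫ s in Ioi d, Real.exp (-(s * l)) * w s := by
  set ν : Measure ℝ := (volume.restrict (Ioi d)).withDensity fun s => ENNReal.ofReal (w s) with hν
  have : IsFiniteMeasure ν := isFiniteMeasure_withDensity_ofReal hw.2
  refine ⟨ν.map Real.toNNReal, inferInstance, fun l _ => ?_⟩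
  rw [integral_map (by fun_prop) (by fun_prop), hν,
    integral_withDensity_eq_integral_toReal_smul₀ hw.aemeasurable.ennreal_ofReal
      (.of_forall fun _ => ENNReal.ofReal_lt_top)]
  refine setIntegral_congr_fun measurableSet_Ioi fun s hs => ?_
  simp only [smul_eq_mul]
  rw [ENNReal.toReal_ofReal (hw0 s hs), Real.coe_toNNReal _ (hd.trans (le_of_lt hs)), mul_comm]

lemma measurable_setIntegral_exp_neg_mul_mul (hw : Measurable w) :
    Measurable fun l => ∫ s in Ioi d, Real.exp (-(s * l)) * w s :=
  (StronglyMeasurable.integral_prod_right' (ν := volume.restrict (Ioi d))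
    (f := fun q : ℝ × ℝ => Real.exp (-(q.2 * q.1)) * w q.2)
    (Measurable.stronglyMeasurable (by fun_prop))).measurable

-- Truncating the Lévy measure `w s ds` to `(1 / (N + 1), ∞)` makes it finite.
theorem isMaximalMultiplier_exp_neg_setIntegral {Ψ : ℝ → ℝ} (hwm : Measurable w)
    (hw0 : ∀ s > 0, 0 ≤ w s) (hw : ∀ d > 0, IntegrableOn w (Ioi d))
    (hint : ∀ l, 0 ≤ l → IntegrableOn (fun s => (1 - Real.exp (-(s * l))) * w s) (Ioi 0))
    (hΨ : ∀ l, 0 ≤ l → ∫ s in Ioi 0, (1 - Real.exp (-(s * l))) * w s = Ψ l) :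
    IsMaximalMultiplier E fun l => Real.exp (-Ψ l) := by
  set d : ℕ → ℝ := fun N => 1 / ((N : ℝ) + 1)
  have hd : ∀ N, 0 < d N := fun N => by positivity
  have hw0' : ∀ N, ∀ s ∈ Ioi (d N), 0 ≤ w s := fun N s hs => hw0 s ((hd N).trans hs)
  have hsub : ∀ N (l : ℝ), 0 ≤ l → _ := fun N l hl =>
    setIntegral_exp_neg_mul_mul_sub (hd N).le (hw _ (hd N)) hl
  have hle : ∀ N (l : ℝ), 0 ≤ l →
      ∫ s in Ioi (d N), Real.exp (-(s * l)) * w s ≤ ∫ s in Ioi (d N), w s := fun N l hl => by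
    rw [← sub_nonpos, hsub N l hl, neg_nonpos]
    exact setIntegral_one_sub_exp_neg_mul_mul_nonneg (hd N).le (hw0' N) hl
  refine .of_tendsto (fun N => (isLaplaceTransform_setIntegral (hd N).le (hw _ (hd N))
      (hw0' N)).isMaximalMultiplier_exp_sub (measurable_setIntegral_exp_neg_mul_mul hwm) (hle N))
    (fun N => (((measurable_setIntegral_exp_neg_mul_mul hwm).sub_const _).exp))
    (fun N l hl => ?_) fun l hl => (Real.continuous_exp.tendsto _).comp ?_
  · rw [Real.abs_exp, Real.exp_le_one_iff, sub_nonpos]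
    exact hle N l hl
  · have hU : ⋃ N, Ioi (d N) = Ioi 0 := by
      ext s
      simp only [mem_iUnion, mem_Ioi]
      exact ⟨fun ⟨N, h⟩ => (hd N).trans h, exists_nat_one_div_lt⟩
    simp only [hsub _ l hl]
    rw [← hΨ l hl, ← hU]
    refine (tendsto_setIntegral_of_monotone (fun _ => measurableSet_Ioi) (fun a b hab => ?_)
      (by rw [hU]; exact hint l hl)).neg
    exact Ioi_subset_Ioi (one_div_le_one_div_of_le (by positivity) (by gcongr))

end Levy

section FractionalPower

variable {α l : ℝ}

lemma integrableOn_one_sub_exp_neg_mul_mul_rpow (h0 : 0 < α) (h1 : α < 1) (hl : 0 ≤ l) :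
    IntegrableOn (fun s : ℝ => (1 - Real.exp (-(s * l))) * s ^ (-1 - α)) (Ioi 0) := by
  have hmeas : AEStronglyMeasurable (fun s : ℝ => (1 - Real.exp (-(s * l))) * s ^ (-1 - α)) :=
    Measurable.aestronglyMeasurable (by fun_prop)
  have hnorm : ∀ s > 0, ‖(1 - Real.exp (-(s * l))) * s ^ (-1 - α)‖ =
      (1 - Real.exp (-(s * l))) * s ^ (-1 - α) := fun s hs => by
    refine Real.norm_of_nonneg (mul_nonneg ?_ (Real.rpow_nonneg hs.le _))
    rw [sub_nonneg, Real.exp_le_one_iff, neg_nonpos]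
    positivity
  rw [← Ioc_union_Ioi_eq_Ioi (zero_le_one (α := ℝ))]
  refine IntegrableOn.union ?_ ?_
  · have h : IntegrableOn (fun s : ℝ => l * s ^ (-α)) (Ioc 0 1) :=
      ((intervalIntegral.intervalIntegrable_rpow' (by linarith)).1).const_mul l
    refine h.mono' hmeas.restrict ?_
    filter_upwards [ae_restrict_mem measurableSet_Ioc] with s hs
    have hpow : s * s ^ (-1 - α) = s ^ (-α) := by
      rw [← Real.rpow_one_add' hs.1.le (by linarith)]
      ring_nf
    rw [hnorm s hs.1, ← hpow, mul_left_comm, ← mul_assoc]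
    gcongr
    · exact Real.rpow_nonneg hs.1.le _
    · linarith [Real.one_sub_le_exp_neg (s * l)]
  · refine (integrableOn_Ioi_rpow_of_lt (a := -1 - α) (by linarith) one_pos).mono' hmeas.restrict ?_
    filter_upwards [ae_restrict_mem measurableSet_Ioi] with s hs
    have hs0 : 0 < s := one_pos.trans hs
    rw [hnorm s hs0]
    exact mul_le_of_le_one_left (Real.rpow_nonneg hs0.le _) (sub_le_self _ (Real.exp_pos _).le)

lemma setIntegral_one_sub_exp_neg_mul_mul_rpow (h0 : 0 < α) (hl : 0 ≤ l) :
    ∫ s in Ioi (0 : ℝ), (1 - Real.exp (-(s * l))) * s ^ (-1 - α) =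
      l ^ α * ∫ s in Ioi (0 : ℝ), (1 - Real.exp (-s)) * s ^ (-1 - α) := by
  rcases hl.eq_or_lt with rfl | hl
  · simp [Real.zero_rpow h0.ne']
  have hscale := integral_comp_mul_left_Ioi
    (fun s : ℝ => (1 - Real.exp (-s)) * s ^ (-1 - α)) 0 hl
  rw [mul_zero, smul_eq_mul] at hscale
  calc ∫ s in Ioi (0 : ℝ), (1 - Real.exp (-(s * l))) * s ^ (-1 - α)
      = l ^ (1 + α) * ∫ s in Ioi (0 : ℝ), (1 - Real.exp (-(l * s))) * (l * s) ^ (-1 - α) := by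
        rw [← integral_const_mul]
        refine setIntegral_congr_fun measurableSet_Ioi fun s hs => ?_
        have hcancel : l ^ (1 + α) * l ^ (-1 - α) = 1 := by
          rw [← Real.rpow_add hl, add_add_sub_cancel, add_neg_cancel, Real.rpow_zero]
        rw [Real.mul_rpow hl.le (le_of_lt hs), mul_left_comm, ← mul_assoc (l ^ (1 + α)), hcancel,
          one_mul, mul_comm l]
    _ = _ := by
        rw [hscale, ← mul_assoc, Real.rpow_one_add' hl.le (by positivity)]
        field_simp

lemma setIntegral_one_sub_exp_neg_mul_rpow_pos (h0 : 0 < α) (h1 : α < 1) :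
    0 < ∫ s in Ioi (0 : ℝ), (1 - Real.exp (-s)) * s ^ (-1 - α) := by
  have hpos : ∀ s ∈ Ioi (0 : ℝ), 0 < (1 - Real.exp (-s)) * s ^ (-1 - α) := fun s hs =>
    mul_pos (sub_pos.2 (Real.exp_lt_one_iff.2 (neg_lt_zero.2 hs))) (Real.rpow_pos_of_pos hs _)
  have hint := integrableOn_one_sub_exp_neg_mul_mul_rpow h0 h1 zero_le_one
  simp only [mul_one] at hint
  rw [setIntegral_pos_iff_support_of_nonneg_ae
    (ae_restrict_of_forall_mem measurableSet_Ioi fun s hs => (hpos s hs).le) hint]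
  exact (by simp : 0 < volume (Ioi (0 : ℝ))).trans_le
    (measure_mono fun s hs => ⟨(hpos s hs).ne', hs⟩)

theorem isMaximalMultiplier_exp_neg_mul_rpow (h0 : 0 < α) (h1 : α ≤ 1) {t : ℝ} (ht : 0 ≤ t) :
    IsMaximalMultiplier E fun l => Real.exp (-(t * l ^ α)) := by
  rcases h1.eq_or_lt with rfl | h1
  · refine IsLaplaceTransform.isMaximalMultiplier
      ⟨Measure.dirac t.toNNReal, inferInstance, fun l _ => ?_⟩ (by simp)
    simp [integral_dirac, ht]
  set c := ∫ s in Ioi (0 : ℝ), (1 - Real.exp (-s)) * s ^ (-1 - α) with hc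
  have hc0 : 0 < c := setIntegral_one_sub_exp_neg_mul_rpow_pos h0 h1
  refine isMaximalMultiplier_exp_neg_setIntegral (w := fun s => s ^ (-1 - α) * (t / c))
    (by fun_prop) (fun s hs => by positivity)
    (fun d hd => (integrableOn_Ioi_rpow_of_lt (by linarith) hd).mul_const _) (fun l hl => ?_)
    fun l hl => ?_
  · simp only [← mul_assoc]
    exact (integrableOn_one_sub_exp_neg_mul_mul_rpow h0 h1 hl).mul_const _
  · simp only [← mul_assoc]
    rw [integral_mul_const, setIntegral_one_sub_exp_neg_mul_mul_rpow h0 hl, ← hc]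
    field_simp

end FractionalPower

end Subordination

section HeatKernel

section RadialExponential

variable {E : Type*} [NormedAddCommGroup E] [InnerProductSpace ℝ E] [FiniteDimensional ℝ E]
  [MeasurableSpace E] [BorelSpace E]

lemma integrable_exp_neg_mul_norm_rpow [Nontrivial E] {q t : ℝ} (hq : 0 < q) (ht : 0 < t) :
    Integrable fun ξ : E => Real.exp (-t * ‖ξ‖ ^ q) := by
  refine (integrable_fun_norm_addHaar volume (f := fun y : ℝ => Real.exp (-t * y ^ q))).2 ?_
  have hs : (-1 : ℝ) < (finrank ℝ E - 1 : ℕ) := neg_one_lt_zero.trans_le (Nat.cast_nonneg _)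
  simpa using integrableOn_rpow_mul_exp_neg_mul_rpow hs hq ht

lemma integral_exp_neg_mul_norm_rpow {q t : ℝ} (hq : 0 < q) (ht : 0 < t) :
    ∫ ξ : E, Real.exp (-t * ‖ξ‖ ^ q) =
      (∫ ξ : E, Real.exp (-1 * ‖ξ‖ ^ q)) * t ^ (-(finrank ℝ E / q)) := by
  have hpow (ξ : E) : -1 * ‖t ^ q⁻¹ • ξ‖ ^ q = -t * ‖ξ‖ ^ q := by
    rw [norm_smul, Real.norm_of_nonneg (by positivity), Real.mul_rpow (by positivity)
      (norm_nonneg _), Real.rpow_inv_rpow ht.le hq.ne']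
    ring
  have h := Measure.integral_comp_smul volume (fun ξ : E => Real.exp (-1 * ‖ξ‖ ^ q)) (t ^ q⁻¹)
  simp only [hpow] at h
  rw [h, smul_eq_mul, abs_of_nonneg (by positivity), ← Real.rpow_natCast, ← Real.rpow_mul ht.le,
    ← Real.rpow_neg ht.le, mul_comm, inv_mul_eq_div]

end RadialExponential

variable {n : ℕ} {α : ℝ}

lemma gKer_eq_cosTransform [NeZero n] (hα : 0 < α) {t : ℝ} (ht : 0 < t) (x : Rn n) :
    gKer n α t x = cosTransform (fun ξ : Rn n => Real.exp (-t * ‖ξ‖ ^ (2 * α))) x :=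
  re_fourierInv_ofReal (integrable_exp_neg_mul_norm_rpow (by positivity) ht) x

lemma isMaximalKernel_gKer_of_pos [NeZero n] (hα : 0 < α) (hα1 : α ≤ 1) {t : ℝ} (ht : 0 < t) :
    IsMaximalKernel (gKer n α t) := by
  have hpow (ξ : Rn n) : (‖ξ‖ ^ 2) ^ α = ‖ξ‖ ^ (2 * α) := by
    rw [Real.rpow_mul (norm_nonneg ξ), Real.rpow_two]
  have hk (j : ℕ) := isMaximalMultiplier_exp_neg_mul_rpow (E := Rn n) hα hα1 ht.le
    (1 / ((j : ℝ) + 1)) Nat.one_div_pos_of_nat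
  simp only [hpow, ← neg_mul] at hk
  refine .of_tendsto hk (fun j => measurable_cosTransform (by fun_prop)) fun x => ?_
  rw [gKer_eq_cosTransform hα ht]
  refine tendsto_cosTransform_of_dominated (fun j => by fun_prop)
    (integrable_exp_neg_mul_norm_rpow (q := 2 * α) (by positivity) ht) (fun j ξ => ?_)
    (fun ξ => ?_) x
  · rw [abs_of_nonneg (by positivity)]
    refine mul_le_of_le_one_left (by positivity) (Real.exp_le_one_iff.2 ?_)
    have : 0 ≤ 1 / ((j : ℝ) + 1) * ‖ξ‖ ^ 2 := by positivity
    linarith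
  · have h := (((tendsto_one_div_add_atTop_nhds_zero_nat (𝕜 := ℝ)).neg.mul_const
      (‖ξ‖ ^ 2)).rexp).mul_const (Real.exp (-t * ‖ξ‖ ^ (2 * α)))
    simpa using h

lemma gKer_of_nonpos [NeZero n] {t : ℝ} (ht : t ≤ 0) (x : Rn n) : gKer n α t x = 0 := by
  rw [gKer, Real.fourierInv_eq', integral_undef, Complex.zero_re]
  intro h
  have h1 : Integrable fun _ : Rn n => (1 : ℝ) := by
    refine h.norm.mono' (by fun_prop) (.of_forall fun ξ => ?_)
    rw [norm_smul, Complex.norm_exp_ofReal_mul_I, one_mul, Complex.norm_real, norm_one,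
      Real.norm_of_nonneg (Real.exp_pos _).le, Real.one_le_exp_iff]
    exact mul_nonneg (neg_nonneg.2 ht) (by positivity)
  rcases integrable_const_iff.1 h1 with h1 | h1
  · exact one_ne_zero h1
  · exact absurd (measure_lt_top (volume : Measure (Rn n)) univ) (by simp)

theorem isMaximalKernel_gKer [NeZero n] (hα : 0 < α) (hα1 : α ≤ 1) (t : ℝ) :
    IsMaximalKernel (gKer n α t) := by
  rcases le_or_gt t 0 with ht | ht
  · exact ⟨fun x => (gKer_of_nonpos ht x).ge, fun f _ x => by simp [gKer_of_nonpos ht]⟩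
  · exact isMaximalKernel_gKer_of_pos hα hα1 ht

lemma exists_abs_gKer_le [NeZero n] (hα : 0 < α) : ∃ C : ℝ, 0 ≤ C ∧
    ∀ t > 0, ∀ x : Rn n, |gKer n α t x| ≤ C * t ^ (-((n : ℝ) / (2 * α))) := by
  refine ⟨∫ ξ : Rn n, Real.exp (-1 * ‖ξ‖ ^ (2 * α)), integral_nonneg fun ξ => (Real.exp_pos _).le,
    fun t ht x => ?_⟩
  have h := integral_exp_neg_mul_norm_rpow (E := Rn n) (q := 2 * α) (by positivity) ht
  rw [finrank_euclideanSpace_fin] at h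
  rw [gKer_eq_cosTransform hα ht, ← h]
  exact abs_cosTransform_le (integrable_exp_neg_mul_norm_rpow (by positivity) ht)
    (fun ξ => (Real.exp_pos _).le) x

lemma measurable_gKer : Measurable fun q : ℝ × Rn n => gKer n α q.1 q.2 := by
  simp only [gKer, Real.fourierInv_eq']
  exact Complex.measurable_re.comp (StronglyMeasurable.integral_prod_right'
    (ν := (volume : Measure (Rn n))) (f := fun q : (ℝ × Rn n) × Rn n =>
      Complex.exp (↑(2 * Real.pi * inner ℝ q.2 q.1.2) * Complex.I) •
        (Real.exp (-q.1.1 * ‖q.2‖ ^ (2 * α)) : ℂ))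
    (Measurable.stronglyMeasurable (by fun_prop))).measurable

@[fun_prop]
lemma measurable_gKer_comp {X : Type*} [MeasurableSpace X] {f : X → ℝ} {g : X → Rn n}
    (hf : Measurable f) (hg : Measurable g) : Measurable fun x => gKer n α (f x) (g x) := by
  have h := Measurable.comp (measurable_gKer (n := n) (α := α)) (hf.prodMk hg)
  simpa only [Function.comp_def] using h

lemma lintegral_ofReal_gKer_mul_rpow_le [NeZero n] (hα : 0 < α) (hα1 : α ≤ 1) {q : ℝ} (hq : 1 ≤ q)
    {h : Rn n → ℝ≥0∞} (hh : Measurable h) (s : ℝ) (x : Rn n) :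
    (∫⁻ y, ENNReal.ofReal (gKer n α s (x - y)) * h y) ^ q ≤
      ∫⁻ y, ENNReal.ofReal (gKer n α s (x - y)) * h y ^ q := by
  have hg : Measurable fun y : Rn n => ENNReal.ofReal (gKer n α s (x - y)) := by fun_prop
  have hmass : volume.withDensity (fun y => ENNReal.ofReal (gKer n α s (x - y))) univ ≤ 1 := by
    have h1 := (isMaximalKernel_gKer hα hα1 s).2 (fun _ => 1) measurable_const x
    rw [withDensity_apply _ MeasurableSet.univ, setLIntegral_univ]
    simpa only [mul_one] using h1.trans (maximalFunction_const_le 1 x)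
  have h2 := rpow_lintegral_le_lintegral_rpow hmass hh.aemeasurable hq
  rwa [lintegral_withDensity_eq_lintegral_mul _ hg hh,
    lintegral_withDensity_eq_lintegral_mul _ hg (hh.pow_const q)] at h2

lemma exists_lintegral_ofReal_gKer_mul_le [NeZero n] (hα : 0 < α) (hα1 : α ≤ 1) {q : ℝ}
    (hq : 1 ≤ q) : ∃ C : ℝ, 0 ≤ C ∧ ∀ h : Rn n → ℝ≥0∞, Measurable h → ∫⁻ y, h y ^ q ≤ 1 →
      ∀ s > 0, ∀ x, ∫⁻ y, ENNReal.ofReal (gKer n α s (x - y)) * h y ≤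
        ENNReal.ofReal (C * s ^ (-((n : ℝ) / (2 * α) / q))) := by
  obtain ⟨C, hC0, hC⟩ := exists_abs_gKer_le (n := n) hα
  have hq0 : 0 < q := by linarith
  refine ⟨C ^ q⁻¹, by positivity, fun h hh hint s hs x => ?_⟩
  have hle : (∫⁻ y, ENNReal.ofReal (gKer n α s (x - y)) * h y) ^ q ≤
      ENNReal.ofReal (C * s ^ (-((n : ℝ) / (2 * α)))) :=
    calc (∫⁻ y, ENNReal.ofReal (gKer n α s (x - y)) * h y) ^ q
        ≤ ∫⁻ y, ENNReal.ofReal (gKer n α s (x - y)) * h y ^ q :=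
          lintegral_ofReal_gKer_mul_rpow_le hα hα1 hq hh s x
      _ ≤ ∫⁻ y, ENNReal.ofReal (C * s ^ (-((n : ℝ) / (2 * α)))) * h y ^ q := by
          gcongr with y
          exact (le_abs_self _).trans (hC s hs _)
      _ ≤ ENNReal.ofReal (C * s ^ (-((n : ℝ) / (2 * α)))) := by
          rw [lintegral_const_mul _ (hh.pow_const q)]
          exact mul_le_of_le_one_right' hint
  refine ((ENNReal.le_rpow_inv_iff hq0).2 hle).trans_eq ?_
  rw [ENNReal.ofReal_rpow_of_nonneg (by positivity) (by positivity),
    Real.mul_rpow hC0 (by positivity), ← Real.rpow_mul hs.le, neg_mul, ← div_eq_mul_inv]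

end HeatKernel

section RieszPotential

variable {n : ℕ} {α : ℝ}

/-- The time integral of the fractional heat kernel: up to a constant, the Riesz kernel
`‖z‖ ^ (2 * α - n)` when `2 * α < n`. -/
def rieszKernel (α : ℝ) (z : Rn n) : ℝ≥0∞ := ∫⁻ s in Ioi (0 : ℝ), ENNReal.ofReal (gKer n α s z)

/-- The potential of `h` with kernel `rieszKernel α`. It dominates Duhamel integrals. -/
def rieszPotential (α : ℝ) (h : Rn n → ℝ≥0∞) (x : Rn n) : ℝ≥0∞ :=
  ∫⁻ y, rieszKernel α (x - y) * h y

@[fun_prop]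
lemma measurable_rieszKernel : Measurable (rieszKernel (n := n) α) := by
  have h : Measurable fun q : Rn n × ℝ => ENNReal.ofReal (gKer n α q.2 q.1) := by fun_prop
  exact h.lintegral_prod_right'

lemma measurable_rieszPotential {h : Rn n → ℝ≥0∞} (hh : Measurable h) :
    Measurable (rieszPotential α h) := by
  have : Measurable fun q : Rn n × Rn n => rieszKernel α (q.1 - q.2) * h q.2 := by fun_prop
  exact this.lintegral_prod_right'

lemma rieszPotential_mono_ae {h k : Rn n → ℝ≥0∞} (hhk : h ≤ᵐ[volume] k) (x : Rn n) :
    rieszPotential α h x ≤ rieszPotential α k x :=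
  lintegral_mono_ae (hhk.mono fun _ hy => by gcongr)

lemma rieszPotential_const_mul {h : Rn n → ℝ≥0∞} (hh : Measurable h) (c : ℝ≥0∞) (x : Rn n) :
    rieszPotential α (fun y => c * h y) x = c * rieszPotential α h x := by
  rw [rieszPotential, rieszPotential, ← lintegral_const_mul _ (by fun_prop)]
  simp only [mul_left_comm]

lemma rieszPotential_iSup {h : ℕ → Rn n → ℝ≥0∞} (hh : ∀ k, Measurable (h k))
    (hmono : Monotone h) (x : Rn n) :
    rieszPotential α (fun y => ⨆ k, h k y) x = ⨆ k, rieszPotential α (h k) x := by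
  simp only [rieszPotential, ENNReal.mul_iSup]
  exact lintegral_iSup (fun k => by fun_prop) fun i j hij y =>
    mul_le_mul_right (hmono hij y) _

lemma rieszPotential_eq_setLIntegral_lintegral {h : Rn n → ℝ≥0∞} (hh : Measurable h) (x : Rn n) :
    rieszPotential α h x =
      ∫⁻ s in Ioi (0 : ℝ), ∫⁻ y, ENNReal.ofReal (gKer n α s (x - y)) * h y := by
  have hm : Measurable fun q : ℝ × Rn n => ENNReal.ofReal (gKer n α q.1 (x - q.2)) * h q.2 := by
    fun_prop
  rw [lintegral_lintegral_swap hm.aemeasurable, rieszPotential]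
  exact lintegral_congr fun y => (lintegral_mul_const _ (by fun_prop)).symm

lemma setLIntegral_Ioi_ofReal_rpow {β T : ℝ} (hβ : 0 < β) (hT : 0 < T) :
    ∫⁻ s in Ioi T, ENNReal.ofReal (s ^ (-(1 + β))) = ENNReal.ofReal (β⁻¹ * T ^ (-β)) := by
  rw [← ofReal_integral_eq_lintegral_ofReal (integrableOn_Ioi_rpow_of_lt (by linarith) hT)
    (ae_restrict_of_forall_mem measurableSet_Ioi fun s hs => Real.rpow_nonneg (hT.trans hs).le _),
    integral_Ioi_rpow_of_lt (by linarith) hT]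
  congr 1
  rw [show -(1 + β) + 1 = -β by ring]
  field_simp

-- Cutting at `T = m ^ (-1 / (1 + β))` balances the two bounds.
lemma setLIntegral_Ioi_le_mul_rpow {φ : ℝ → ℝ≥0∞} {M : ℝ≥0∞} {C β : ℝ} (hC : 0 ≤ C) (hβ : 0 < β)
    (hsmall : ∀ s > 0, φ s ≤ M) (hlarge : ∀ s > 0, φ s ≤ ENNReal.ofReal (C * s ^ (-(1 + β)))) :
    ∫⁻ s in Ioi (0 : ℝ), φ s ≤ ENNReal.ofReal (1 + C * β⁻¹) * M ^ (β / (1 + β)) := by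
  have hexp : 0 < β / (1 + β) := by positivity
  rcases eq_or_ne M 0 with rfl | hM0
  · have h0 : ∀ s ∈ Ioi (0 : ℝ), φ s ≤ 0 := hsmall
    exact (setLIntegral_mono (by fun_prop) h0).trans (by simp)
  rcases eq_or_ne M ⊤ with rfl | hMt
  · rw [ENNReal.top_rpow_of_pos hexp, ENNReal.mul_top (by positivity)]
    exact le_top
  lift M to ℝ≥0 using hMt
  obtain ⟨m, hm⟩ : ∃ m : ℝ, m = M := ⟨M, rfl⟩
  have hm0 : 0 < m := hm ▸ NNReal.coe_pos.2 (pos_iff_ne_zero.2 (by simpa using hM0))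
  have hMm : (M : ℝ≥0∞) = ENNReal.ofReal m := by rw [hm, ENNReal.ofReal_coe_nnreal]
  rw [hMm] at hsmall ⊢
  set T : ℝ := m ^ (-(1 + β)⁻¹) with hT
  have hT0 : 0 < T := by positivity
  have hTm : m * T = m ^ (β / (1 + β)) := by
    have hexp' : 1 + -(1 + β)⁻¹ = β / (1 + β) := by
      field_simp
      ring
    rw [hT, ← Real.rpow_one_add' hm0.le (hexp' ▸ hexp.ne'), hexp']
  have hTβ : T ^ (-β) = m ^ (β / (1 + β)) := by
    rw [hT, ← Real.rpow_mul hm0.le]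
    congr 1
    ring
  calc ∫⁻ s in Ioi (0 : ℝ), φ s
      ≤ (∫⁻ s in Ioc 0 T, φ s) + ∫⁻ s in Ioi T, φ s := by
        rw [← Ioc_union_Ioi_eq_Ioi hT0.le]
        exact lintegral_union_le _ _ _
    _ ≤ (∫⁻ _ in Ioc 0 T, ENNReal.ofReal m) +
          ∫⁻ s in Ioi T, ENNReal.ofReal (C * s ^ (-(1 + β))) :=
        add_le_add (setLIntegral_mono (by fun_prop) fun s hs => hsmall s hs.1)
          (setLIntegral_mono (by fun_prop) fun s hs => hlarge s (hT0.trans hs))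
    _ = ENNReal.ofReal (m * T) + ENNReal.ofReal (C * (β⁻¹ * T ^ (-β))) := by
        simp only [ENNReal.ofReal_mul hC, ENNReal.ofReal_mul hm0.le]
        rw [setLIntegral_const, Real.volume_Ioc, sub_zero, lintegral_const_mul _ (by fun_prop),
          setLIntegral_Ioi_ofReal_rpow hβ hT0]
    _ = ENNReal.ofReal (1 + C * β⁻¹) * ENNReal.ofReal m ^ (β / (1 + β)) := by
        rw [hTm, hTβ, ENNReal.ofReal_rpow_of_pos hm0, ← ENNReal.ofReal_mul (by positivity),
          ← ENNReal.ofReal_add (by positivity) (by positivity)]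
        ring_nf

-- Hedberg's inequality: small times are controlled by the maximal function, large times by the
-- decay of the kernel.
theorem exists_rieszPotential_le_mul_maximalFunction_rpow [NeZero n] (hα : 0 < α) (hα1 : α ≤ 1)
    {q β : ℝ} (hq : 1 ≤ q) (hβ : 0 < β) (hqβ : (n : ℝ) / (2 * α) / q = 1 + β) :
    ∃ C : ℝ≥0∞, C ≠ ⊤ ∧ ∀ h : Rn n → ℝ≥0∞, Measurable h → ∫⁻ y, h y ^ q ≤ 1 → ∀ x,
      rieszPotential α h x ≤ C * maximalFunction volume h x ^ (β / (1 + β)) := by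
  obtain ⟨C, hC0, hC⟩ := exists_lintegral_ofReal_gKer_mul_le (n := n) hα hα1 hq
  refine ⟨ENNReal.ofReal (1 + C * β⁻¹), ENNReal.ofReal_ne_top, fun h hh hint x => ?_⟩
  rw [rieszPotential_eq_setLIntegral_lintegral hh]
  exact setLIntegral_Ioi_le_mul_rpow hC0 hβ
    (fun s _ => (isMaximalKernel_gKer hα hα1 s).2 h hh x) fun s hs => hqβ ▸ hC h hh hint s hs x

end RieszPotential

section LuxemburgNorm

lemma le_const_mul_of_forall_gt {a b c : ℝ≥0∞} (hc : c ≠ 0) (hc' : c ≠ ⊤)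
    (h : ∀ d, b < d → d ≠ ⊤ → a ≤ c * d) : a ≤ c * b := by
  rw [← ENNReal.div_le_iff' hc hc']
  refine le_of_forall_gt_imp_ge_of_dense fun d hd => ?_
  rcases eq_or_ne d ⊤ with rfl | hdt
  · exact le_top
  · exact (ENNReal.div_le_iff' hc hc').2 (h d hd hdt)

variable {X : Type*} [MeasurableSpace X] {μ : Measure X} {p : X → ℝ} {f g : X → ℝ≥0∞} {c : ℝ≥0∞}

lemma luxNorm_le_of_lintegral_div_rpow_le_one (hc : 0 < c) (h : ∫⁻ x, (f x / c) ^ p x ∂μ ≤ 1) :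
    luxNorm μ p f ≤ c :=
  sInf_le ⟨hc, h⟩

lemma lintegral_div_rpow_le_one_of_luxNorm_lt (hp : ∀ x, 0 ≤ p x) (h : luxNorm μ p f < c) :
    ∫⁻ x, (f x / c) ^ p x ∂μ ≤ 1 := by
  obtain ⟨d, ⟨-, hd⟩, hdc⟩ := sInf_lt_iff.1 h
  refine le_trans (lintegral_mono fun x => ?_) hd
  have := hp x
  gcongr

lemma luxNorm_mono_ae (hp : ∀ x, 0 ≤ p x) (h : f ≤ᵐ[μ] g) : luxNorm μ p f ≤ luxNorm μ p g := by
  refine le_of_forall_gt_imp_ge_of_dense fun c hc => ?_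
  refine luxNorm_le_of_lintegral_div_rpow_le_one (pos_of_gt hc)
    (le_trans (lintegral_mono_ae ?_) (lintegral_div_rpow_le_one_of_luxNorm_lt hp hc))
  filter_upwards [h] with x hx
  have := hp x
  gcongr

lemma luxNorm_const_mul_le (hp : ∀ x, 0 ≤ p x) (hc : c ≠ 0) (hc' : c ≠ ⊤) :
    luxNorm μ p (fun x => c * f x) ≤ c * luxNorm μ p f := by
  refine le_const_mul_of_forall_gt hc hc' fun d hd _ => ?_
  refine luxNorm_le_of_lintegral_div_rpow_le_one
    (ENNReal.mul_pos hc (pos_of_gt hd).ne') ?_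
  simpa only [ENNReal.mul_div_mul_left _ _ hc hc'] using
    lintegral_div_rpow_le_one_of_luxNorm_lt hp hd

-- Convexity of the powers, with weights `c / (c + d)` and `d / (c + d)`.
lemma lintegral_add_div_add_rpow_le_one {d : ℝ≥0∞} (hpm : Measurable p) (hp : ∀ x, 1 ≤ p x)
    (hf : Measurable f) (hc : c ≠ 0) (hc' : c ≠ ⊤) (hd : d ≠ 0) (hd' : d ≠ ⊤)
    (hfc : ∫⁻ x, (f x / c) ^ p x ∂μ ≤ 1) (hgd : ∫⁻ x, (g x / d) ^ p x ∂μ ≤ 1) :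
    ∫⁻ x, ((f x + g x) / (c + d)) ^ p x ∂μ ≤ 1 := by
  have hw : c / (c + d) + d / (c + d) = 1 := by
    rw [← ENNReal.add_div, ENNReal.div_self (by simp [hc]) (by finiteness)]
  have hsplit (x : X) : (f x + g x) / (c + d) =
      c / (c + d) * (f x / c) + d / (c + d) * (g x / d) := by
    rw [ENNReal.add_div, ← ENNReal.mul_div_right_comm, ← ENNReal.mul_div_right_comm,
      ENNReal.mul_div_cancel hc hc', ENNReal.mul_div_cancel hd hd']
  calc ∫⁻ x, ((f x + g x) / (c + d)) ^ p x ∂μ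
      ≤ ∫⁻ x, c / (c + d) * (f x / c) ^ p x + d / (c + d) * (g x / d) ^ p x ∂μ :=
        lintegral_mono fun x => by
          rw [hsplit]
          exact ENNReal.rpow_arith_mean_le_arith_mean2_rpow _ _ _ _ hw (hp x)
    _ = c / (c + d) * ∫⁻ x, (f x / c) ^ p x ∂μ + d / (c + d) * ∫⁻ x, (g x / d) ^ p x ∂μ := by
        rw [lintegral_add_left (by fun_prop), lintegral_const_mul _ (by fun_prop),
          lintegral_const_mul' _ _ (ENNReal.div_ne_top hd' (by simp [hc]))]
    _ ≤ 1 := by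
        grw [hfc, hgd, mul_one, mul_one, hw]

lemma luxNorm_add_le (hpm : Measurable p) (hp : ∀ x, 1 ≤ p x) (hf : Measurable f) :
    luxNorm μ p (fun x => f x + g x) ≤ luxNorm μ p f + luxNorm μ p g := by
  have hp0 (x : X) : 0 ≤ p x := zero_le_one.trans (hp x)
  refine ENNReal.le_of_forall_pos_le_add fun ε hε hlt => ?_
  obtain ⟨hft, hgt⟩ := ENNReal.add_lt_top.1 hlt
  have hε2 : (ε / 2 : ℝ≥0∞) ≠ 0 := by simpa using hε.ne'
  have hlux {h : X → ℝ≥0∞} (hh : luxNorm μ p h < ⊤) :=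
    lintegral_div_rpow_le_one_of_luxNorm_lt hp0 (ENNReal.lt_add_right hh.ne hε2)
  calc luxNorm μ p (fun x => f x + g x)
      ≤ luxNorm μ p f + ε / 2 + (luxNorm μ p g + ε / 2) :=
        luxNorm_le_of_lintegral_div_rpow_le_one (by positivity)
          (lintegral_add_div_add_rpow_le_one hpm hp hf (by positivity) (by finiteness)
            (by positivity) (by finiteness) (hlux hft) (hlux hgt))
    _ = luxNorm μ p f + luxNorm μ p g + ε := by
        rw [add_add_add_comm, ENNReal.add_halves]

lemma luxNorm_rpow_le {κ : ℝ} (hκ : 0 < κ) (hp : ∀ x, 0 ≤ p x) :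
    luxNorm μ p (fun x => f x ^ κ) ≤ luxNorm μ (fun x => κ * p x) f ^ κ := by
  refine le_of_forall_gt_imp_ge_of_dense fun c hc => ?_
  have hlt : luxNorm μ (fun x => κ * p x) f < c ^ κ⁻¹ := (ENNReal.lt_rpow_inv_iff hκ).2 hc
  refine luxNorm_le_of_lintegral_div_rpow_le_one (pos_of_gt hc) ?_
  have h := lintegral_div_rpow_le_one_of_luxNorm_lt (fun x => mul_nonneg hκ.le (hp x)) hlt
  simpa only [ENNReal.rpow_mul, ENNReal.div_rpow_of_nonneg _ _ hκ.le,
    ENNReal.rpow_inv_rpow hκ.ne'] using h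

lemma luxNorm_iSup_le {f : ℕ → X → ℝ≥0∞} (hpm : Measurable p) (hp : ∀ x, 0 < p x)
    (hf : ∀ k, Measurable (f k)) (hmono : Monotone f) (h : ∀ k, luxNorm μ p (f k) ≤ c) :
    luxNorm μ p (fun x => ⨆ k, f k x) ≤ c := by
  refine le_of_forall_gt_imp_ge_of_dense fun d hd => ?_
  refine luxNorm_le_of_lintegral_div_rpow_le_one (pos_of_gt hd) ?_
  have hsup (x : X) : ((⨆ k, f k x) / d) ^ p x = ⨆ k, (f k x / d) ^ p x := by
    rw [ENNReal.iSup_div]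
    exact (ENNReal.orderIsoRpow (p x) (hp x)).map_iSup _
  simp only [hsup]
  rw [lintegral_iSup (fun k => by fun_prop) fun i j hij x => ?_]
  · exact iSup_le fun k => lintegral_div_rpow_le_one_of_luxNorm_lt (fun x => (hp x).le)
      ((h k).trans_lt hd)
  · have := (hp x).le
    have := hmono hij x
    dsimp only
    gcongr

lemma luxNorm_zero (hp : ∀ x, 0 < p x) : luxNorm μ p (fun _ => 0) = 0 := by
  refine nonpos_iff_eq_zero.1 (le_of_forall_gt_imp_ge_of_dense fun c hc => ?_)
  exact luxNorm_le_of_lintegral_div_rpow_le_one hc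
    (by simp [ENNReal.zero_rpow_of_pos (hp _)])

lemma luxNorm_tsum_le {f : ℕ → X → ℝ≥0∞} (hpm : Measurable p) (hp : ∀ x, 1 ≤ p x)
    (hf : ∀ k, Measurable (f k)) :
    luxNorm μ p (fun x => ∑' k, f k x) ≤ ∑' k, luxNorm μ p (f k) := by
  have hp0 (x : X) : 0 < p x := zero_lt_one.trans_le (hp x)
  have hsum (N : ℕ) : luxNorm μ p (fun x => ∑ k ∈ Finset.range N, f k x) ≤
      ∑ k ∈ Finset.range N, luxNorm μ p (f k) := by
    induction N with
    | zero => simp [luxNorm_zero hp0]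
    | succ N ih =>
      simp only [Finset.sum_range_succ]
      grw [luxNorm_add_le hpm hp (Finset.measurable_fun_sum _ fun k _ => hf k), ih]
  simp only [ENNReal.tsum_eq_iSup_nat (f := fun k => f k _)]
  refine luxNorm_iSup_le hpm hp0 (fun N => Finset.measurable_fun_sum _ fun k _ => hf k)
    (fun i j hij x => ?_) fun N => (hsum N).trans (ENNReal.sum_le_tsum _)
  exact Finset.sum_le_sum_of_subset (Finset.range_mono hij)

lemma ae_lt_top_of_luxNorm_lt_top (hpm : Measurable p) (hp : ∀ x, 0 < p x) (hf : Measurable f)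
    (h : luxNorm μ p f < ⊤) : ∀ᵐ x ∂μ, f x < ⊤ := by
  obtain ⟨c, hc, hct⟩ := exists_between h
  have hint := lintegral_div_rpow_le_one_of_luxNorm_lt (fun x => (hp x).le) hc
  filter_upwards [ae_lt_top (by fun_prop) (hint.trans_lt ENNReal.one_lt_top).ne] with x hx
  contrapose! hx
  rw [top_le_iff.1 hx, ENNReal.top_div_of_lt_top hct, ENNReal.top_rpow_of_pos (hp x)]

-- If the norm of `f` vanishes, then so does that of every multiple of `f`, hence that of `∞ * f`.
lemma ae_eq_zero_of_luxNorm_eq_zero (hpm : Measurable p) (hp : ∀ x, 0 < p x) (hf : Measurable f)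
    (h : luxNorm μ p f = 0) : f =ᵐ[μ] 0 := by
  have hmul (k : ℕ) : luxNorm μ p (fun x => k * f x) ≤ 0 := by
    rcases eq_or_ne k 0 with rfl | hk
    · simp [luxNorm_zero hp]
    · grw [luxNorm_const_mul_le (fun x => (hp x).le) (by simpa using hk) (by finiteness), h,
        mul_zero]
  have hsup := luxNorm_iSup_le hpm hp (fun k => by fun_prop)
    (fun i j hij x => by dsimp only; gcongr) hmul
  filter_upwards [ae_lt_top_of_luxNorm_lt_top hpm hp (by fun_prop)
    (hsup.trans_lt ENNReal.zero_lt_top)] with x hx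
  contrapose! hx
  rw [← ENNReal.iSup_mul, ENNReal.iSup_natCast, ENNReal.top_mul hx]

end LuxemburgNorm

section MixedNorm

variable {X : Type*} [MeasurableSpace X] {μ : Measure X} {p : X → ℝ} {r : ℝ} {f g : X → ℝ≥0∞}
  {c : ℝ≥0∞}

/-- The norm of `L^{p(·)} ∩ L^r` on `ℝ≥0∞`-valued functions: `mixedNorm n p r f` is its value at
`|f|`, and `mixedN n p r u` its value at `timeSup n u`. -/
def mixedLuxNorm (μ : Measure X) (p : X → ℝ) (r : ℝ) (f : X → ℝ≥0∞) : ℝ≥0∞ :=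
  max (luxNorm μ p f) (luxNorm μ (fun _ => r) f)

lemma mixedLuxNorm_mono_ae (hp : ∀ x, 0 ≤ p x) (hr : 0 ≤ r) (h : f ≤ᵐ[μ] g) :
    mixedLuxNorm μ p r f ≤ mixedLuxNorm μ p r g :=
  max_le_max (luxNorm_mono_ae hp h) (luxNorm_mono_ae (fun _ => hr) h)

lemma mixedLuxNorm_const_mul_le (hp : ∀ x, 0 ≤ p x) (hr : 0 ≤ r) (hc : c ≠ 0) (hc' : c ≠ ⊤) :
    mixedLuxNorm μ p r (fun x => c * f x) ≤ c * mixedLuxNorm μ p r f := by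
  rw [mixedLuxNorm, mixedLuxNorm, mul_max]
  exact max_le_max (luxNorm_const_mul_le hp hc hc') (luxNorm_const_mul_le (fun _ => hr) hc hc')

lemma mixedLuxNorm_add_le (hpm : Measurable p) (hp : ∀ x, 1 ≤ p x) (hr : 1 ≤ r)
    (hf : Measurable f) :
    mixedLuxNorm μ p r (fun x => f x + g x) ≤ mixedLuxNorm μ p r f + mixedLuxNorm μ p r g :=
  max_le
    ((luxNorm_add_le hpm hp hf).trans (add_le_add (le_max_left _ _) (le_max_left _ _)))
    ((luxNorm_add_le measurable_const (fun _ => hr) hf).trans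
      (add_le_add (le_max_right _ _) (le_max_right _ _)))

lemma mixedLuxNorm_rpow_le {κ : ℝ} (hκ : 0 < κ) (hp : ∀ x, 0 ≤ p x) (hr : 0 ≤ r) :
    mixedLuxNorm μ p r (fun x => f x ^ κ) ≤ mixedLuxNorm μ (fun x => κ * p x) (κ * r) f ^ κ :=
  max_le
    ((luxNorm_rpow_le hκ hp).trans (ENNReal.rpow_le_rpow (le_max_left _ _) hκ.le))
    ((luxNorm_rpow_le hκ fun _ => hr).trans (ENNReal.rpow_le_rpow (le_max_right _ _) hκ.le))

lemma mixedLuxNorm_iSup_le {f : ℕ → X → ℝ≥0∞} (hpm : Measurable p) (hp : ∀ x, 0 < p x)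
    (hr : 0 < r) (hf : ∀ k, Measurable (f k)) (hmono : Monotone f)
    (h : ∀ k, mixedLuxNorm μ p r (f k) ≤ c) : mixedLuxNorm μ p r (fun x => ⨆ k, f k x) ≤ c :=
  max_le (luxNorm_iSup_le hpm hp hf hmono fun k => (le_max_left _ _).trans (h k))
    (luxNorm_iSup_le measurable_const (fun _ => hr) hf hmono fun k =>
      (le_max_right _ _).trans (h k))

lemma mixedLuxNorm_pow_succ_le (b : ℕ) (hp : ∀ x, 0 ≤ p x) (hr : 0 ≤ r) :
    mixedLuxNorm μ (fun x => p x / ((b : ℝ) + 1)) (r / ((b : ℝ) + 1)) (fun x => f x ^ (b + 1)) ≤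
      mixedLuxNorm μ p r f ^ (b + 1) := by
  have hκ : (0 : ℝ) < (b : ℝ) + 1 := by positivity
  have h := mixedLuxNorm_rpow_le (μ := μ) (f := f) hκ (fun x => div_nonneg (hp x) hκ.le)
    (div_nonneg hr hκ.le)
  simp only [mul_div_cancel₀ _ hκ.ne'] at h
  simpa only [← Nat.cast_add_one, ENNReal.rpow_natCast] using h

lemma pow_mul_le_add_pow_succ (a d : ℝ≥0∞) (b : ℕ) : a ^ b * d ≤ (a + d) ^ (b + 1) := by
  rw [pow_succ]
  gcongr
  exacts [le_self_add, le_add_self]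

-- A form of Hölder's inequality: normalise both factors and bound their product by a power of
-- their sum.
lemma mixedLuxNorm_pow_mul_le {b : ℕ} {P D : ℝ≥0∞} (hpm : Measurable p) (hp : ∀ x, 1 ≤ p x)
    (hr : 1 ≤ r) (hf : Measurable f) (hP : P ≠ 0) (hP' : P ≠ ⊤) (hD : D ≠ 0) (hD' : D ≠ ⊤)
    (hfP : mixedLuxNorm μ p r f ≤ P) (hgD : mixedLuxNorm μ p r g ≤ D) :
    mixedLuxNorm μ (fun x => p x / ((b : ℝ) + 1)) (r / ((b : ℝ) + 1)) (fun x => f x ^ b * g x) ≤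
      P ^ b * D * 2 ^ (b + 1) := by
  have hp0 (x : X) : 0 ≤ p x := zero_le_one.trans (hp x)
  have hr0 : 0 ≤ r := zero_le_one.trans hr
  have hnorm {h : X → ℝ≥0∞} {c : ℝ≥0∞} (hc : c ≠ 0) (hc' : c ≠ ⊤)
      (hh : mixedLuxNorm μ p r h ≤ c) : mixedLuxNorm μ p r (fun x => c⁻¹ * h x) ≤ 1 := by
    grw [mixedLuxNorm_const_mul_le hp0 hr0 (ENNReal.inv_ne_zero.2 hc') (ENNReal.inv_ne_top.2 hc),
      hh, ENNReal.inv_mul_cancel hc hc']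
  have hsum : mixedLuxNorm μ p r (fun x => P⁻¹ * f x + D⁻¹ * g x) ≤ 2 := by
    grw [mixedLuxNorm_add_le hpm hp hr (by fun_prop), hnorm hP hP' hfP, hnorm hD hD' hgD,
      one_add_one_eq_two]
  have hpt (x : X) : f x ^ b * g x ≤ P ^ b * D * (P⁻¹ * f x + D⁻¹ * g x) ^ (b + 1) :=
    calc f x ^ b * g x = P ^ b * D * ((P⁻¹ * f x) ^ b * (D⁻¹ * g x)) := by
          rw [mul_pow, mul_mul_mul_comm, ← mul_assoc (P ^ b), ← mul_pow,
            ENNReal.mul_inv_cancel hP hP', one_pow, one_mul, ← mul_assoc D,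
            ENNReal.mul_inv_cancel hD hD', one_mul]
      _ ≤ _ := by
          gcongr
          exact pow_mul_le_add_pow_succ _ _ b
  have hκ : (0 : ℝ) < (b : ℝ) + 1 := by positivity
  grw [mixedLuxNorm_mono_ae (fun x => div_nonneg (hp0 x) hκ.le) (div_nonneg hr0 hκ.le)
    (.of_forall hpt), mixedLuxNorm_const_mul_le (fun x => div_nonneg (hp0 x) hκ.le)
    (div_nonneg hr0 hκ.le) (by simp [hP, hD]) (by finiteness), mixedLuxNorm_pow_succ_le b hp0 hr0,
    hsum]

end MixedNorm

section PotentialBounds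

variable {n : ℕ} {α κ r l u : ℝ} {p : Rn n → ℝ}

lemma lintegral_div_rpow_le_one_of_lintegral_le {X : Type*} [MeasurableSpace X] {μ : Measure X}
    {p : X → ℝ} {f : X → ℝ≥0∞} {K : ℝ≥0∞} (hp : ∀ x, 1 ≤ p x) (hK : 1 ≤ K) (hK' : K ≠ ⊤)
    (h : ∫⁻ x, f x ^ p x ∂μ ≤ K) : ∫⁻ x, (f x / K) ^ p x ∂μ ≤ 1 := by
  have hK0 : K ≠ 0 := (zero_lt_one.trans_le hK).ne'
  calc ∫⁻ x, (f x / K) ^ p x ∂μ ≤ ∫⁻ x, K⁻¹ * f x ^ p x ∂μ := lintegral_mono fun x => by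
        rw [div_eq_mul_inv, mul_comm, ENNReal.mul_rpow_of_nonneg _ _ (zero_le_one.trans (hp x))]
        gcongr
        exact ENNReal.rpow_le_self_of_le_one (ENNReal.inv_le_one.2 hK) (hp x)
    _ = K⁻¹ * ∫⁻ x, f x ^ p x ∂μ := lintegral_const_mul' _ _ (ENNReal.inv_ne_top.2 hK0)
    _ ≤ 1 := by
        grw [h, ENNReal.inv_mul_cancel hK0 hK']

theorem IsPLog.exists_luxNorm_maximalFunction_le [NeZero n] (hp : IsPLog univ p) (hκ : 0 < κ)
    (hl : κ < l) (h : ∀ᵐ x, p x ∈ Icc l u) :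
    ∃ K : ℝ≥0, 1 ≤ K ∧ ∀ f : Rn n → ℝ≥0∞, Measurable f →
      luxNorm volume (fun x => p x / κ) (maximalFunction volume f) ≤
        K * luxNorm volume (fun x => p x / κ) f := by
  obtain ⟨K, hK, hbound⟩ := hp.exists_lintegral_maximalFunction_rpow_le volume hκ hl h
  lift K to ℝ≥0 using hK
  have hq (x : Rn n) : 1 ≤ p x / κ :=
    (one_le_div hκ).2 (hl.le.trans (hp.mem_of_ae_mem isClosed_Icc h x).1)
  have hK1 : 1 ≤ max 1 K := le_max_left _ _
  refine ⟨max 1 K, hK1, fun f hf => ?_⟩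
  refine le_const_mul_of_forall_gt (by positivity) (by finiteness) fun d hd hdt => ?_
  have hd0 : d ≠ 0 := (pos_of_gt hd).ne'
  have hq0 (x : Rn n) : 0 ≤ p x / κ := zero_le_one.trans (hq x)
  have hMf : maximalFunction volume f =
      fun x => d * maximalFunction volume (fun y => f y / d) x := by
    funext x
    rw [← maximalFunction_const_mul (by fun_prop)]
    simp only [ENNReal.mul_div_cancel hd0 hdt]
  have hMd : luxNorm volume (fun x => p x / κ) (maximalFunction volume fun y => f y / d) ≤
      (max 1 K : ℝ≥0) := by
    refine luxNorm_le_of_lintegral_div_rpow_le_one (by positivity)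
      (lintegral_div_rpow_le_one_of_lintegral_le hq (by exact_mod_cast hK1) (by finiteness) ?_)
    refine (hbound _ (by fun_prop) (lintegral_div_rpow_le_one_of_luxNorm_lt hq0 hd)).trans ?_
    exact_mod_cast le_max_right 1 K
  rw [hMf]
  grw [luxNorm_const_mul_le hq0 hd0 hdt, hMd, mul_comm]

lemma isPLog_const {E : Type*} [NormedAddCommGroup E] [MeasurableSpace E] (Ω : Set E)
    (hr : 1 ≤ r) : IsPLog Ω (fun _ : E => r) := by
  refine ⟨measurable_const, fun _ _ => hr, 1, one_pos, 1, one_pos, r, fun x _ y _ _ => ?_,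
    fun x _ => ?_⟩
  · have : 0 ≤ 1 / ‖x - y‖ := by positivity
    rw [sub_self, abs_zero]
    exact one_div_nonneg.2 (Real.log_nonneg (by linarith [Real.add_one_le_exp 1]))
  · have := norm_nonneg x
    rw [sub_self, abs_zero]
    exact one_div_nonneg.2 (Real.log_nonneg (by linarith [Real.add_one_le_exp 1]))

theorem IsPLog.exists_mixedLuxNorm_maximalFunction_le [NeZero n] (hp : IsPLog univ p) (hκ : 1 ≤ κ)
    (hr : κ < r) (hl : κ < l) (h : ∀ᵐ x, p x ∈ Icc l u) :
    ∃ K : ℝ≥0, 1 ≤ K ∧ ∀ f : Rn n → ℝ≥0∞, Measurable f →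
      mixedLuxNorm volume (fun x => p x / κ) (r / κ) (maximalFunction volume f) ≤
        K * mixedLuxNorm volume (fun x => p x / κ) (r / κ) f := by
  have hκ0 : 0 < κ := by linarith
  obtain ⟨K, hK1, hK⟩ := hp.exists_luxNorm_maximalFunction_le hκ0 hl h
  obtain ⟨L, -, hL⟩ := (isPLog_const (E := Rn n) univ (by linarith : 1 ≤ r)
    ).exists_luxNorm_maximalFunction_le hκ0 hr (.of_forall fun _ => ⟨le_rfl, le_rfl⟩)
  refine ⟨max K L, hK1.trans (le_max_left _ _), fun f hf => ?_⟩
  rw [mixedLuxNorm, mixedLuxNorm, mul_max]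
  refine max_le_max ((hK f hf).trans ?_) ((hL f hf).trans ?_)
  all_goals gcongr; simp

lemma exists_rieszPotential_le_of_luxNorm_lt [NeZero n] (hα : 0 < α) (hα1 : α ≤ 1)
    (hκ : 1 < κ) (hr : κ < r) (hrn : 2 * α * r = n * (κ - 1)) :
    ∃ C : ℝ≥0, C ≠ 0 ∧ ∀ h : Rn n → ℝ≥0∞, Measurable h → ∀ d ≠ ⊤,
      luxNorm volume (fun _ => r / κ) h < d → ∀ x, rieszPotential α h x ≤
        d * C * maximalFunction volume (fun y => d⁻¹ * h y) x ^ κ⁻¹ := by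
  have hκ0 : 0 < κ := by linarith
  have hr0 : 0 < r := by linarith
  have hκ1 : 0 < κ - 1 := by linarith
  have hβ : (κ - 1)⁻¹ / (1 + (κ - 1)⁻¹) = κ⁻¹ := by
    field_simp
    ring
  have hβn : (n : ℝ) / (2 * α) / (r / κ) = 1 + (κ - 1)⁻¹ := by
    field_simp
    rw [hrn]
    ring
  obtain ⟨C, hC, hedberg⟩ := exists_rieszPotential_le_mul_maximalFunction_rpow (n := n) hα hα1
    ((one_le_div hκ0).2 hr.le) (inv_pos.2 hκ1) hβn
  lift C to ℝ≥0 using hC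
  refine ⟨C + 1, by positivity, fun h hh d hdt hd x => ?_⟩
  have hd0 : d ≠ 0 := (pos_of_gt hd).ne'
  have hint := lintegral_div_rpow_le_one_of_luxNorm_lt (fun _ => div_nonneg hr0.le hκ0.le) hd
  simp only [div_eq_mul_inv _ d, mul_comm _ d⁻¹] at hint
  calc rieszPotential α h x = d * rieszPotential α (fun y => d⁻¹ * h y) x := by
        rw [← rieszPotential_const_mul (by fun_prop)]
        simp only [← mul_assoc, ENNReal.mul_inv_cancel hd0 hdt, one_mul]
    _ ≤ d * (C * maximalFunction volume (fun y => d⁻¹ * h y) x ^ κ⁻¹) := by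
        grw [hedberg _ (by fun_prop) hint x, hβ]
    _ ≤ d * (C + 1 : ℝ≥0) * maximalFunction volume (fun y => d⁻¹ * h y) x ^ κ⁻¹ := by
        rw [mul_assoc]
        gcongr
        exact le_self_add

theorem IsPLog.exists_mixedLuxNorm_rieszPotential_le [NeZero n] (hp : IsPLog univ p) (hα : 0 < α)
    (hα1 : α ≤ 1) (hκ : 1 < κ) (hr : κ < r) (hrn : 2 * α * r = n * (κ - 1)) (hl : κ < l)
    (h : ∀ᵐ x, p x ∈ Icc l u) :
    ∃ K : ℝ≥0, ∀ h : Rn n → ℝ≥0∞, Measurable h →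
      mixedLuxNorm volume p r (rieszPotential α h) ≤
        K * mixedLuxNorm volume (fun x => p x / κ) (r / κ) h := by
  have hκ0 : 0 < κ := by linarith
  have hr0 : 0 ≤ r := by linarith
  have hp0 (x : Rn n) : 0 ≤ p x := (hp.pos x).le
  obtain ⟨C, hC0, hC⟩ := exists_rieszPotential_le_of_luxNorm_lt (n := n) hα hα1 hκ hr hrn
  obtain ⟨K, hK1, hK⟩ := hp.exists_mixedLuxNorm_maximalFunction_le hκ.le hr hl h
  refine ⟨C * K, fun h hh => le_const_mul_of_forall_gt (by positivity) (by finiteness)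
    fun d hd hdt => ?_⟩
  have hd0 : d ≠ 0 := (pos_of_gt hd).ne'
  have hnorm : mixedLuxNorm volume (fun x => p x / κ) (r / κ) (fun x => d⁻¹ * h x) ≤ 1 := by
    grw [mixedLuxNorm_const_mul_le (fun x => div_nonneg (hp0 x) hκ0.le)
      (div_nonneg hr0 hκ0.le) (ENNReal.inv_ne_zero.2 hdt) (ENNReal.inv_ne_top.2 hd0), hd,
      ENNReal.inv_mul_cancel hd0 hdt]
  calc mixedLuxNorm volume p r (rieszPotential α h)
      ≤ d * C * mixedLuxNorm volume (fun x => p x / κ) (r / κ)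
          (maximalFunction volume fun x => d⁻¹ * h x) ^ κ⁻¹ := by
        simp only [div_eq_inv_mul]
        grw [mixedLuxNorm_mono_ae hp0 hr0
            (.of_forall (hC h hh d hdt ((le_max_right _ _).trans_lt hd))),
          mixedLuxNorm_const_mul_le hp0 hr0 (by positivity) (by finiteness),
          mixedLuxNorm_rpow_le (inv_pos.2 hκ0) hp0 hr0]
    _ ≤ d * C * (K : ℝ≥0∞) ^ κ⁻¹ := by
        grw [hK _ (by fun_prop), hnorm, mul_one]
    _ ≤ (C * K : ℝ≥0) * d := by
        have hKκ := ENNReal.rpow_le_rpow_of_exponent_le (ENNReal.one_le_coe_iff.2 hK1)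
          (inv_le_one_of_one_le₀ hκ.le)
        grw [hKκ, ENNReal.rpow_one, ENNReal.coe_mul, mul_assoc, mul_comm]

/-- The two estimates, with constant `K`, on which the fixed point argument in `L^{p(·)} ∩ L^r`
rests: the maximal function controls the linear evolution of the data, the potential the Duhamel
integrals. -/
structure PotentialBounds (α κ : ℝ) (p : Rn n → ℝ) (r : ℝ) (K : ℝ≥0) : Prop where
  maximalFunction_le : ∀ f, Measurable f →
    mixedLuxNorm volume p r (maximalFunction volume f) ≤ K * mixedLuxNorm volume p r f
  rieszPotential_le : ∀ h, Measurable h → mixedLuxNorm volume p r (rieszPotential α h) ≤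
    K * mixedLuxNorm volume (fun x => p x / κ) (r / κ) h

theorem IsPLog.exists_potentialBounds [NeZero n] (hp : IsPLog univ p) (hα : 0 < α) (hα1 : α ≤ 1)
    (hκ : 1 < κ) (hr : κ < r) (hrn : 2 * α * r = n * (κ - 1)) (hl : κ < l)
    (h : ∀ᵐ x, p x ∈ Icc l u) : ∃ K, PotentialBounds α κ p r K := by
  obtain ⟨K, -, hK⟩ := hp.exists_mixedLuxNorm_maximalFunction_le le_rfl (hκ.trans hr)
    (hκ.trans hl) h
  obtain ⟨L, hL⟩ := hp.exists_mixedLuxNorm_rieszPotential_le hα hα1 hκ hr hrn hl h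
  simp only [div_one] at hK
  refine ⟨max K L, fun f hf => (hK f hf).trans ?_, fun h hh => (hL h hh).trans ?_⟩
  all_goals gcongr; simp

end PotentialBounds

section FixedPoint

variable {n b : ℕ} {α r : ℝ} {p : Rn n → ℝ} {K R P : ℝ≥0}

/-- The linearisation at `G` of the nonlinear map `h ↦ rieszPotential α (h ^ (b + 1))`, applied
to `δ`. -/
def linearizedPotential (α : ℝ) (b : ℕ) (G δ : Rn n → ℝ≥0∞) : Rn n → ℝ≥0∞ :=
  rieszPotential α fun y => ((b : ℝ≥0∞) + 1) * (G y ^ b * δ y)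

/-- The operator norm bound for `linearizedPotential α b G` when `G` has norm at most `P` and the
potential bounds hold with constant `K`. -/
def linearizationConst (b : ℕ) (K P : ℝ≥0) : ℝ≥0 := K * (((b : ℝ≥0) + 1) * (P ^ b * 2 ^ (b + 1)))

lemma exists_linearizationConst_le (hb : b ≠ 0) (K : ℝ≥0) :
    ∃ R : ℝ≥0, 0 < R ∧ (linearizationConst b K (2 * R) : ℝ≥0∞) ≤ 2⁻¹ := by
  have hlim : Tendsto (fun R : ℝ≥0 => linearizationConst b K (2 * R)) (𝓝[>] 0) (𝓝 0) := by
    have h : Continuous fun R : ℝ≥0 => linearizationConst b K (2 * R) := by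
      unfold linearizationConst
      fun_prop
    simpa [linearizationConst, hb] using (h.tendsto 0).mono_left nhdsWithin_le_nhds
  have hev := (hlim.eventually_le_const (u := 2⁻¹) (by positivity)).and self_mem_nhdsWithin
  obtain ⟨R, hR, hR0⟩ := hev.exists
  exact ⟨R, hR0, (ENNReal.coe_le_coe.2 hR).trans_eq (by simp)⟩

lemma linearizationConst_mono (h : R ≤ P) :
    linearizationConst b K R ≤ linearizationConst b K P := by
  unfold linearizationConst
  gcongr

lemma mul_pow_le_linearizationConst : K * R ^ b ≤ linearizationConst b K R := by
  have h2 : (1 : ℝ≥0) ≤ 2 ^ (b + 1) := one_le_pow₀ one_le_two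
  unfold linearizationConst
  gcongr
  exact (le_mul_of_one_le_right zero_le h2).trans (le_mul_of_one_le_left zero_le le_add_self)

namespace PotentialBounds

lemma mixedLuxNorm_linearizedPotential_le (hK : PotentialBounds α ((b : ℝ) + 1) p r K)
    (hpm : Measurable p) (hp : ∀ x, 1 ≤ p x) (hr : 1 ≤ r) {G δ : Rn n → ℝ≥0∞} (hG : Measurable G)
    (hδ : Measurable δ) (hP : P ≠ 0) {D : ℝ≥0∞} (hD : D ≠ 0) (hD' : D ≠ ⊤)
    (hGP : mixedLuxNorm volume p r G ≤ P) (hδD : mixedLuxNorm volume p r δ ≤ D) :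
    mixedLuxNorm volume p r (linearizedPotential α b G δ) ≤ linearizationConst b K P * D := by
  have hκ : (0 : ℝ) ≤ (b : ℝ) + 1 := by positivity
  have hp0 (x : Rn n) : 0 ≤ p x / ((b : ℝ) + 1) := div_nonneg (zero_le_one.trans (hp x)) hκ
  have hr0 : 0 ≤ r / ((b : ℝ) + 1) := div_nonneg (zero_le_one.trans hr) hκ
  grw [linearizedPotential, hK.rieszPotential_le _ (by fun_prop),
    mixedLuxNorm_const_mul_le hp0 hr0 (by positivity) (by finiteness),
    mixedLuxNorm_pow_mul_le hpm hp hr hG (by exact_mod_cast hP) (by finiteness) hD hD' hGP hδD]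
  push_cast [linearizationConst]
  exact le_of_eq (by ring)

lemma ae_eq_zero_of_le_linearizedPotential (hK : PotentialBounds α ((b : ℝ) + 1) p r K)
    (hpm : Measurable p) (hp : ∀ x, 1 ≤ p x) (hr : 1 ≤ r) {G w : Rn n → ℝ≥0∞} (hG : Measurable G)
    (hw : Measurable w) (hP : P ≠ 0) (hPK : (linearizationConst b K P : ℝ≥0∞) ≤ 2⁻¹)
    (hGP : mixedLuxNorm volume p r G ≤ P) (hwt : mixedLuxNorm volume p r w ≠ ⊤)
    (hle : w ≤ᵐ[volume] linearizedPotential α b G w) : w =ᵐ[volume] 0 := by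
  suffices h : mixedLuxNorm volume p r w = 0 from
    ae_eq_zero_of_luxNorm_eq_zero hpm (fun x => zero_lt_one.trans_le (hp x)) hw
      (nonpos_iff_eq_zero.1 ((le_max_left _ _).trans h.le))
  by_contra h0
  refine (ENNReal.half_lt_self h0 hwt).not_ge ?_
  calc mixedLuxNorm volume p r w
      ≤ mixedLuxNorm volume p r (linearizedPotential α b G w) :=
        mixedLuxNorm_mono_ae (fun x => zero_le_one.trans (hp x)) (zero_le_one.trans hr) hle
    _ ≤ linearizationConst b K P * mixedLuxNorm volume p r w :=
        hK.mixedLuxNorm_linearizedPotential_le hpm hp hr hG hw hP h0 hwt hGP le_rfl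
    _ ≤ mixedLuxNorm volume p r w / 2 := by
        grw [hPK, ENNReal.div_eq_inv_mul]

end PotentialBounds

/-- The monotone iteration for the equation `E = A + rieszPotential α (E ^ (b + 1))`. -/
def majorantSeq (α : ℝ) (b : ℕ) (A : Rn n → ℝ≥0∞) : ℕ → Rn n → ℝ≥0∞
  | 0 => fun _ => 0
  | k + 1 => fun x => A x + rieszPotential α (fun y => majorantSeq α b A k y ^ (b + 1)) x

section

variable {A E : Rn n → ℝ≥0∞}

lemma measurable_majorantSeq (hA : Measurable A) : ∀ k, Measurable (majorantSeq α b A k)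
  | 0 => measurable_const
  | k + 1 => hA.add (measurable_rieszPotential ((measurable_majorantSeq hA k).pow_const _))

lemma monotone_majorantSeq : Monotone (majorantSeq α b A) := by
  refine monotone_nat_of_le_succ fun k => ?_
  induction k with
  | zero => exact fun _ => zero_le
  | succ k ih =>
    exact fun x => add_le_add_right
      (rieszPotential_mono_ae (.of_forall fun y => pow_le_pow_left' (ih y) _) x) _

lemma PotentialBounds.mixedLuxNorm_majorantSeq_le (hK : PotentialBounds α ((b : ℝ) + 1) p r K)
    (hpm : Measurable p) (hp : ∀ x, 1 ≤ p x) (hr : 1 ≤ r) (hA : Measurable A)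
    (hAR : mixedLuxNorm volume p r A ≤ R / 2)
    (hRK : (linearizationConst b K R : ℝ≥0∞) ≤ 2⁻¹) (k : ℕ) :
    mixedLuxNorm volume p r (majorantSeq α b A k) ≤ R := by
  have hp0 (x : Rn n) : 0 < p x := zero_lt_one.trans_le (hp x)
  have hr0 : 0 < r := zero_lt_one.trans_le hr
  have hKR : (K * R ^ b : ℝ≥0∞) ≤ 2⁻¹ :=
    le_trans (by exact_mod_cast mul_pow_le_linearizationConst) hRK
  induction k with
  | zero => simp [majorantSeq, mixedLuxNorm, luxNorm_zero hp0, luxNorm_zero fun _ : Rn n => hr0]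
  | succ k ih =>
    calc mixedLuxNorm volume p r (majorantSeq α b A (k + 1))
        ≤ R / 2 + K * (R : ℝ≥0∞) ^ (b + 1) := by
          simp only [majorantSeq]
          grw [mixedLuxNorm_add_le hpm hp hr hA, hAR, hK.rieszPotential_le _
            ((measurable_majorantSeq hA k).pow_const _),
            mixedLuxNorm_pow_succ_le b (fun x => (hp0 x).le) hr0.le, ih]
      _ = R / 2 + K * (R : ℝ≥0∞) ^ b * R := by ring
      _ ≤ R / 2 + R / 2 := by grw [hKR, ENNReal.div_eq_inv_mul]
      _ = R := ENNReal.add_halves _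

lemma iSup_majorantSeq_eq (hA : Measurable A) (x : Rn n) :
    ⨆ k, majorantSeq α b A k x =
      A x + rieszPotential α (fun y => (⨆ k, majorantSeq α b A k y) ^ (b + 1)) x := by
  have hmono : Monotone fun k y => majorantSeq α b A k y ^ (b + 1) := fun i j hij y =>
    pow_le_pow_left' (monotone_majorantSeq hij y) _
  simp only [ENNReal.iSup_pow]
  rw [rieszPotential_iSup (fun k => (measurable_majorantSeq hA k).pow_const _) hmono,
    ENNReal.add_iSup, ← Monotone.iSup_nat_add (fun i j hij => monotone_majorantSeq hij x) 1]
  rfl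

theorem PotentialBounds.exists_majorant (hK : PotentialBounds α ((b : ℝ) + 1) p r K)
    (hpm : Measurable p) (hp : ∀ x, 1 ≤ p x) (hr : 1 ≤ r) (hA : Measurable A)
    (hAR : mixedLuxNorm volume p r A ≤ R / 2) (hRK : (linearizationConst b K R : ℝ≥0∞) ≤ 2⁻¹) :
    ∃ E : Rn n → ℝ≥0∞, Measurable E ∧ mixedLuxNorm volume p r E ≤ R ∧
      ∀ x, E x = A x + rieszPotential α (fun y => E y ^ (b + 1)) x :=
  ⟨fun x => ⨆ k, majorantSeq α b A k x, .iSup (measurable_majorantSeq hA),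
    mixedLuxNorm_iSup_le hpm (fun x => zero_lt_one.trans_le (hp x)) (zero_lt_one.trans_le hr)
      (measurable_majorantSeq hA) monotone_majorantSeq
      (hK.mixedLuxNorm_majorantSeq_le hpm hp hr hA hAR hRK), iSup_majorantSeq_eq hA⟩

/-- The iterates of the linearisation at `E`, started at `E`; they dominate the increments of the
Picard iteration. -/
def linearizedSeq (α : ℝ) (b : ℕ) (E : Rn n → ℝ≥0∞) : ℕ → Rn n → ℝ≥0∞
  | 0 => E
  | k + 1 => linearizedPotential α b E (linearizedSeq α b E k)

lemma measurable_linearizedSeq (hE : Measurable E) : ∀ k, Measurable (linearizedSeq α b E k)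
  | 0 => hE
  | k + 1 => measurable_rieszPotential
      (((hE.pow_const b).mul (measurable_linearizedSeq hE k)).const_mul _)

lemma PotentialBounds.mixedLuxNorm_linearizedSeq_le (hK : PotentialBounds α ((b : ℝ) + 1) p r K)
    (hpm : Measurable p) (hp : ∀ x, 1 ≤ p x) (hr : 1 ≤ r) (hE : Measurable E) (hR : R ≠ 0)
    (hER : mixedLuxNorm volume p r E ≤ R)
    (hRK : (linearizationConst b K R : ℝ≥0∞) ≤ 2⁻¹) (k : ℕ) :
    mixedLuxNorm volume p r (linearizedSeq α b E k) ≤ R * 2⁻¹ ^ k := by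
  induction k with
  | zero => simpa [linearizedSeq] using hER
  | succ k ih =>
    grw [linearizedSeq, hK.mixedLuxNorm_linearizedPotential_le hpm hp hr hE
      (measurable_linearizedSeq hE k) hR (mul_ne_zero (by simpa using hR) (by simp))
      (by finiteness) hER ih, hRK]
    exact le_of_eq (by ring)

theorem PotentialBounds.ae_tsum_linearizedSeq_lt_top
    (hK : PotentialBounds α ((b : ℝ) + 1) p r K)
    (hpm : Measurable p) (hp : ∀ x, 1 ≤ p x) (hr : 1 ≤ r) (hE : Measurable E) (hR : R ≠ 0)
    (hER : mixedLuxNorm volume p r E ≤ R) (hRK : (linearizationConst b K R : ℝ≥0∞) ≤ 2⁻¹) :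
    ∀ᵐ x, ∑' k, linearizedSeq α b E k x < ⊤ := by
  refine ae_lt_top_of_luxNorm_lt_top hpm (fun x => zero_lt_one.trans_le (hp x))
    (.tsum (measurable_linearizedSeq hE)) ?_
  calc luxNorm volume p (fun x => ∑' k, linearizedSeq α b E k x)
      ≤ ∑' k, luxNorm volume p (linearizedSeq α b E k) :=
        luxNorm_tsum_le hpm hp (measurable_linearizedSeq hE)
    _ ≤ ∑' k, (R : ℝ≥0∞) * 2⁻¹ ^ k := ENNReal.tsum_le_tsum fun k => (le_max_left _ _).trans
        (hK.mixedLuxNorm_linearizedSeq_le hpm hp hr hE hR hER hRK k)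
    _ = R * 2 := by
        rw [ENNReal.tsum_mul_left, ENNReal.tsum_geometric, ENNReal.one_sub_inv_two, inv_inv]
    _ < ⊤ := by finiteness

end

end FixedPoint

/-- The measure on the space-time domain `(0, ∞) × ℝ^n`. -/
abbrev spaceTime (n : ℕ) : Measure (ℝ × Rn n) := (volume.restrict (Ioi (0 : ℝ))).prod volume

section TimeSup

variable {n : ℕ} {u : ℝ → Rn n → ℝ}

lemma ae_spaceTime_of_ae {P : Rn n → Prop} (h : ∀ᵐ x, P x) : ∀ᵐ q ∂(spaceTime n), P q.2 :=
  Measure.quasiMeasurePreserving_snd.ae h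

lemma ae_ae_of_ae_spaceTime {P : ℝ × Rn n → Prop} (h : ∀ᵐ q ∂(spaceTime n), P q) :
    ∀ᵐ x, ∀ᵐ t ∂(volume.restrict (Ioi 0)), P (t, x) := by
  rw [spaceTime, ← Measure.prod_swap] at h
  exact Measure.ae_ae_of_ae_prod (ae_of_ae_map measurable_swap.aemeasurable h)

lemma timeSup_eq_essSup_enorm (u : ℝ → Rn n → ℝ) (x : Rn n) :
    timeSup n u x = essSup (fun t => ‖u t x‖ₑ) (volume.restrict (Ioi 0)) := by
  simp only [timeSup, Real.enorm_eq_ofReal_abs]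

lemma timeSup_le_iff {c : ℝ≥0∞} {x : Rn n} :
    timeSup n u x ≤ c ↔ ∀ᵐ t ∂(volume.restrict (Ioi 0)), ‖u t x‖ₑ ≤ c := by
  rw [timeSup_eq_essSup_enorm]
  exact ⟨fun h => (ENNReal.ae_le_essSup _).mono fun _ ht => ht.trans h, essSup_le_of_ae_le _⟩

lemma measurable_timeSup (hu : Measurable (Function.uncurry u)) : Measurable (timeSup n u) := by
  refine measurable_of_Iic fun c => ?_
  have hs : MeasurableSet {q : Rn n × ℝ | ‖u q.2 q.1‖ₑ ≤ c} :=
    measurableSet_le (hu.comp measurable_swap).enorm measurable_const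
  convert (measurable_measure_prodMk_left (ν := volume.restrict (Ioi 0)) hs.compl)
    (measurableSet_singleton 0) using 1
  ext x
  exact timeSup_le_iff

lemma ae_enorm_le_timeSup (hu : Measurable (Function.uncurry u)) :
    ∀ᵐ q ∂(spaceTime n), ‖u q.1 q.2‖ₑ ≤ timeSup n u q.2 := by
  have hs : MeasurableSet {q : Rn n × ℝ | ‖u q.2 q.1‖ₑ ≤ timeSup n u q.1} :=
    measurableSet_le (hu.comp measurable_swap).enorm
      ((measurable_timeSup hu).comp measurable_fst)
  have h : ∀ᵐ q ∂(volume.prod (volume.restrict (Ioi 0))), ‖u q.2 q.1‖ₑ ≤ timeSup n u q.1 :=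
    (Measure.ae_prod_iff_ae_ae hs).2 (.of_forall fun x => timeSup_le_iff.1 le_rfl)
  rw [← Measure.prod_swap] at h
  exact ae_of_ae_map measurable_swap.aemeasurable h

lemma timeSup_ae_le {g : Rn n → ℝ≥0∞} (h : ∀ᵐ q ∂(spaceTime n), ‖u q.1 q.2‖ₑ ≤ g q.2) :
    timeSup n u ≤ᵐ[volume] g :=
  (ae_ae_of_ae_spaceTime h).mono fun _ hx => timeSup_le_iff.2 hx

end TimeSup

section AbsPowMul

variable {b : ℕ}

/-- The nonlinearity `a ↦ |a|^b a`. -/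
def absPowMul (b : ℕ) (a : ℝ) : ℝ := |a| ^ b * a

lemma continuous_absPowMul : Continuous (absPowMul b) :=
  (continuous_abs.pow b).mul continuous_id

@[fun_prop]
lemma measurable_absPowMul_comp {X : Type*} [MeasurableSpace X] {f : X → ℝ} (hf : Measurable f) :
    Measurable fun x => absPowMul b (f x) :=
  continuous_absPowMul.measurable.comp hf

lemma enorm_absPowMul (b : ℕ) (a : ℝ) : ‖absPowMul b a‖ₑ = ‖a‖ₑ ^ (b + 1) := by
  rw [absPowMul, enorm_mul, enorm_pow, Real.enorm_abs, pow_succ]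

lemma abs_absPowMul_sub_le (b : ℕ) (a c : ℝ) :
    |absPowMul b a - absPowMul b c| ≤ (b + 1) * (max |a| |c| ^ b * |a - c|) := by
  set m := max |a| |c|
  have ha : |a| ≤ m := le_max_left _ _
  have hc : |c| ≤ m := le_max_right _ _
  induction b with
  | zero => simp [absPowMul]
  | succ b ih =>
    have hcb : |absPowMul b c| ≤ m ^ b * m := by
      rw [absPowMul, abs_mul, abs_pow, abs_abs]
      gcongr
    calc |absPowMul (b + 1) a - absPowMul (b + 1) c|
        = |(|a| * (absPowMul b a - absPowMul b c) + absPowMul b c * (|a| - |c|))| := by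
          congr 1
          simp only [absPowMul]
          ring
      _ ≤ |a| * |absPowMul b a - absPowMul b c| + |absPowMul b c| * |(|a| - |c|)| := by
          grw [abs_add_le, abs_mul, abs_mul, abs_abs]
      _ ≤ m * ((b + 1) * (m ^ b * |a - c|)) + m ^ b * m * |a - c| := by
          grw [ih, hcb, abs_abs_sub_abs_le_abs_sub, ha]
      _ = ((b + 1 : ℕ) + 1) * (m ^ (b + 1) * |a - c|) := by
          push_cast
          ring

lemma enorm_absPowMul_sub_le (b : ℕ) (a c : ℝ) :
    ‖absPowMul b a - absPowMul b c‖ₑ ≤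
      ((b : ℝ≥0∞) + 1) * (max ‖a‖ₑ ‖c‖ₑ ^ b * ‖a - c‖ₑ) := by
  have h := ENNReal.ofReal_le_ofReal (abs_absPowMul_sub_le b a c)
  simpa (disch := positivity) only [Real.enorm_eq_ofReal_abs, ENNReal.ofReal_mul,
    ENNReal.ofReal_pow, ENNReal.ofReal_max, ENNReal.ofReal_add, ENNReal.ofReal_natCast,
    ENNReal.ofReal_one] using h

end AbsPowMul

section Duhamel

variable {n b : ℕ} {α : ℝ} {f g : ℝ × Rn n → ℝ} {h : Rn n → ℝ≥0∞} {q : ℝ × Rn n}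

/-- The integrand of the Duhamel integral of `f` at the space-time point `q`. -/
def duhamelIntegrand (α : ℝ) (f : ℝ × Rn n → ℝ) (q z : ℝ × Rn n) : ℝ :=
  gKer n α (q.1 - z.1) (q.2 - z.2) * f z

/-- The Duhamel integral `∫_0^t 𝔤_{t-s} ∗ f(s) ds`. Since the kernel vanishes at nonpositive times,
it is written as an integral over all of space-time. -/
def duhamel (α : ℝ) (f : ℝ × Rn n → ℝ) (q : ℝ × Rn n) : ℝ :=
  ∫ z, duhamelIntegrand α f q z ∂(spaceTime n)

lemma measurable_duhamelIntegrand (hf : Measurable f) : Measurable (duhamelIntegrand α f q) := by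
  unfold duhamelIntegrand
  fun_prop

lemma measurable_duhamel (hf : Measurable f) : Measurable (duhamel α f) := by
  have hm : Measurable fun z : (ℝ × Rn n) × (ℝ × Rn n) => duhamelIntegrand α f z.1 z.2 := by
    unfold duhamelIntegrand
    fun_prop
  exact hm.stronglyMeasurable.integral_prod_right'.measurable

lemma lintegral_enorm_gKer_mul_le [NeZero n] (hα : 0 < α) (hα1 : α ≤ 1) (hh : Measurable h)
    (q : ℝ × Rn n) :
    ∫⁻ z, ‖gKer n α (q.1 - z.1) (q.2 - z.2)‖ₑ * h z.2 ∂(spaceTime n) ≤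
      rieszPotential α h q.2 := by
  let φ (s : ℝ) : ℝ≥0∞ := ∫⁻ y, ENNReal.ofReal (gKer n α s (q.2 - y)) * h y
  have henorm (s : ℝ) (y : Rn n) : ‖gKer n α s y‖ₑ = ENNReal.ofReal (gKer n α s y) :=
    Real.enorm_of_nonneg ((isMaximalKernel_gKer hα hα1 s).1 y)
  have hsupp : φ.support ⊆ Ioi 0 := fun s hs => by
    contrapose! hs
    simp [φ, gKer_of_nonpos (not_lt.1 hs)]
  calc ∫⁻ z, ‖gKer n α (q.1 - z.1) (q.2 - z.2)‖ₑ * h z.2 ∂(spaceTime n)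
      = ∫⁻ s in Ioi 0, φ (q.1 - s) := by
        simp only [henorm]
        exact lintegral_prod _ (by fun_prop)
    _ ≤ ∫⁻ s, φ (q.1 - s) := setLIntegral_le_lintegral _ _
    _ = ∫⁻ s, φ s := lintegral_sub_left_eq_self φ q.1
    _ = rieszPotential α h q.2 := by
        rw [rieszPotential_eq_setLIntegral_lintegral hh,
          setLIntegral_eq_of_support_subset hsupp]

lemma enorm_duhamelIntegrand_le {z : ℝ × Rn n} (hz : ‖f z‖ₑ ≤ h z.2) :
    ‖duhamelIntegrand α f q z‖ₑ ≤ ‖gKer n α (q.1 - z.1) (q.2 - z.2)‖ₑ * h z.2 := by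
  rw [duhamelIntegrand, enorm_mul]
  gcongr

lemma lintegral_enorm_duhamelIntegrand_le [NeZero n] (hα : 0 < α) (hα1 : α ≤ 1)
    (hh : Measurable h) (hfh : ∀ᵐ z ∂(spaceTime n), ‖f z‖ₑ ≤ h z.2) (q : ℝ × Rn n) :
    ∫⁻ z, ‖duhamelIntegrand α f q z‖ₑ ∂(spaceTime n) ≤ rieszPotential α h q.2 :=
  (lintegral_mono_ae (hfh.mono fun _ hz => enorm_duhamelIntegrand_le hz)).trans
    (lintegral_enorm_gKer_mul_le hα hα1 hh q)

lemma integrable_duhamelIntegrand [NeZero n] (hα : 0 < α) (hα1 : α ≤ 1) (hf : Measurable f)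
    (hh : Measurable h) (hfh : ∀ᵐ z ∂(spaceTime n), ‖f z‖ₑ ≤ h z.2)
    (hq : rieszPotential α h q.2 < ⊤) : Integrable (duhamelIntegrand α f q) (spaceTime n) :=
  ⟨(measurable_duhamelIntegrand hf).aestronglyMeasurable,
    (lintegral_enorm_duhamelIntegrand_le hα hα1 hh hfh q).trans_lt hq⟩

lemma enorm_duhamel_le [NeZero n] (hα : 0 < α) (hα1 : α ≤ 1)
    (hh : Measurable h) (hfh : ∀ᵐ z ∂(spaceTime n), ‖f z‖ₑ ≤ h z.2) (q : ℝ × Rn n) :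
    ‖duhamel α f q‖ₑ ≤ rieszPotential α h q.2 :=
  (enorm_integral_le_lintegral_enorm _).trans (lintegral_enorm_duhamelIntegrand_le hα hα1 hh hfh q)

lemma duhamel_sub (hf : Integrable (duhamelIntegrand α f q) (spaceTime n))
    (hg : Integrable (duhamelIntegrand α g q) (spaceTime n)) :
    duhamel α (fun z => f z - g z) q = duhamel α f q - duhamel α g q := by
  rw [duhamel, duhamel, duhamel, ← integral_sub hf hg]
  simp only [duhamelIntegrand, mul_sub]

lemma tendsto_duhamel [NeZero n] (hα : 0 < α) (hα1 : α ≤ 1) {w : ℕ → ℝ × Rn n → ℝ}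
    (hw : ∀ k, Measurable (w k)) (hh : Measurable h)
    (hwh : ∀ k, ∀ᵐ z ∂(spaceTime n), ‖w k z‖ₑ ≤ h z.2)
    (hlim : ∀ᵐ z ∂(spaceTime n), Tendsto (w · z) atTop (𝓝 (f z)))
    (hq : rieszPotential α h q.2 < ⊤) :
    Tendsto (fun k => duhamel α (w k) q) atTop (𝓝 (duhamel α f q)) := by
  have hm : Measurable fun z : ℝ × Rn n =>
      ‖gKer n α (q.1 - z.1) (q.2 - z.2)‖ₑ * h z.2 := by fun_prop
  have hfin := ((lintegral_enorm_gKer_mul_le hα hα1 hh q).trans_lt hq).ne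
  refine tendsto_integral_of_dominated_convergence _
    (fun k => (measurable_duhamelIntegrand (hw k)).aestronglyMeasurable)
    (integrable_toReal_of_lintegral_ne_top hm.aemeasurable hfin) (fun k => ?_) ?_
  · filter_upwards [hwh k, ae_lt_top hm hfin] with z hz hzt
    rw [← toReal_enorm]
    exact ENNReal.toReal_mono hzt.ne (enorm_duhamelIntegrand_le hz)
  · filter_upwards [hlim] with z hz
    exact hz.const_mul _

lemma duhamelIntegrand_eq_zero [NeZero n] {z : ℝ × Rn n}
    (hz : z ∈ Ioi 0 ×ˢ univ \ Ioc 0 q.1 ×ˢ univ) : duhamelIntegrand α f q z = 0 := by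
  have hle : q.1 ≤ z.1 := by
    by_contra! hlt
    exact hz.2 ⟨⟨hz.1.1, hlt.le⟩, mem_univ _⟩
  rw [duhamelIntegrand, gKer_of_nonpos (sub_nonpos.2 hle), zero_mul]

lemma spaceTime_eq_restrict : spaceTime n = (volume.prod volume).restrict (Ioi 0 ×ˢ univ) := by
  rw [← Measure.prod_restrict, Measure.restrict_univ]

lemma integrable_duhamelIntegrand_iff [NeZero n] :
    Integrable (duhamelIntegrand α f q) (spaceTime n) ↔
      IntegrableOn (duhamelIntegrand α f q) (Ioc 0 q.1 ×ˢ univ) (volume.prod volume) := by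
  rw [spaceTime_eq_restrict]
  exact ⟨fun h => IntegrableOn.mono_set h (prod_mono Ioc_subset_Ioi_self subset_rfl),
    fun h => h.of_forall_sdiff_eq_zero (measurableSet_Ioi.prod .univ)
      fun z hz => duhamelIntegrand_eq_zero hz⟩

lemma duhamel_eq_integral_conv [NeZero n]
    (hf : Integrable (duhamelIntegrand α f q) (spaceTime n)) :
    duhamel α f q =
      ∫ s in Ioc 0 q.1, conv n (gKer n α (q.1 - s)) (fun y => f (s, y)) q.2 := by
  have hIoc : duhamel α f q =
      ∫ z in Ioc 0 q.1 ×ˢ univ, duhamelIntegrand α f q z ∂(volume.prod volume) := by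
    rw [duhamel, spaceTime_eq_restrict]
    exact setIntegral_eq_of_subset_of_forall_sdiff_eq_zero (measurableSet_Ioi.prod .univ)
      (prod_mono Ioc_subset_Ioi_self subset_rfl) fun z hz => duhamelIntegrand_eq_zero hz
  rw [hIoc, setIntegral_prod _ (integrable_duhamelIntegrand_iff.1 hf)]
  simp only [Measure.restrict_univ, conv, duhamelIntegrand]

end Duhamel

section HeatSemigroup

variable {n : ℕ} {α : ℝ} {u₀ : Rn n → ℝ}

lemma lintegral_enorm_gKer_mul_le_maximalFunction [NeZero n] (hα : 0 < α) (hα1 : α ≤ 1)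
    (hu₀ : Measurable u₀) (t : ℝ) (x : Rn n) :
    ∫⁻ y, ‖gKer n α t (x - y) * u₀ y‖ₑ ≤ maximalFunction volume (fun y => ‖u₀ y‖ₑ) x := by
  have hk := isMaximalKernel_gKer (n := n) hα hα1 t
  simp_rw [enorm_mul, Real.enorm_of_nonneg (hk.1 _)]
  exact hk.2 _ hu₀.enorm x

lemma integrable_gKer_mul [NeZero n] (hα : 0 < α) (hα1 : α ≤ 1) (hu₀ : Measurable u₀) {x : Rn n}
    (hx : maximalFunction volume (fun y => ‖u₀ y‖ₑ) x < ⊤) (t : ℝ) :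
    Integrable fun y => gKer n α t (x - y) * u₀ y :=
  ⟨Measurable.aestronglyMeasurable (by fun_prop),
    (lintegral_enorm_gKer_mul_le_maximalFunction hα hα1 hu₀ t x).trans_lt hx⟩

lemma enorm_conv_gKer_le [NeZero n] (hα : 0 < α) (hα1 : α ≤ 1) (hu₀ : Measurable u₀) (t : ℝ)
    (x : Rn n) : ‖conv n (gKer n α t) u₀ x‖ₑ ≤ maximalFunction volume (fun y => ‖u₀ y‖ₑ) x :=
  (enorm_integral_le_lintegral_enorm _).trans
    (lintegral_enorm_gKer_mul_le_maximalFunction hα hα1 hu₀ t x)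

lemma measurable_conv_gKer (hu₀ : Measurable u₀) :
    Measurable fun q : ℝ × Rn n => conv n (gKer n α q.1) u₀ q.2 := by
  have hm : Measurable fun z : (ℝ × Rn n) × Rn n => gKer n α z.1.1 (z.1.2 - z.2) * u₀ z.2 := by
    fun_prop
  exact hm.stronglyMeasurable.integral_prod_right'.measurable

end HeatSemigroup

section Picard

variable {n b : ℕ} {α : ℝ} {F : ℝ → Rn n → ℝ} {u₀ : Rn n → ℝ} {E : Rn n → ℝ≥0∞}

/-- The right-hand side of the Duhamel formula as a map of the unknown `u`, whose fixed points are
the mild solutions. -/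
def picardMap (α : ℝ) (b : ℕ) (F : ℝ → Rn n → ℝ) (u₀ : Rn n → ℝ) (u : ℝ × Rn n → ℝ)
    (q : ℝ × Rn n) : ℝ :=
  conv n (gKer n α q.1) u₀ q.2 + duhamel α (Function.uncurry F) q -
    duhamel α (fun z => absPowMul b (u z)) q

lemma measurable_picardMap (hF : Measurable (Function.uncurry F)) (hu₀ : Measurable u₀)
    {u : ℝ × Rn n → ℝ} (hu : Measurable u) : Measurable (picardMap α b F u₀ u) :=
  ((measurable_conv_gKer hu₀).add (measurable_duhamel hF)).sub (measurable_duhamel (by fun_prop))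

lemma isMildSol0_iff [NeZero n] {u : ℝ → Rn n → ℝ} :
    IsMildSol0 n α b (Ioi 0) F u₀ u ↔ ∀ᵐ q ∂(spaceTime n),
      Integrable (fun y => gKer n α q.1 (q.2 - y) * u₀ y) ∧
      Integrable (duhamelIntegrand α (Function.uncurry F) q) (spaceTime n) ∧
      Integrable (duhamelIntegrand α (fun z => absPowMul b (u z.1 z.2)) q) (spaceTime n) ∧
      u q.1 q.2 = picardMap α b F u₀ (fun z => u z.1 z.2) q := by
  refine eventually_congr (.of_forall fun q => and_congr_right fun _ => ?_)
  change IntegrableOn (duhamelIntegrand α (Function.uncurry F) q) _ _ ∧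
    IntegrableOn (duhamelIntegrand α (fun z => absPowMul b (u z.1 z.2)) q) _ _ ∧ _ ↔ _
  rw [← integrable_duhamelIntegrand_iff, ← integrable_duhamelIntegrand_iff]
  refine and_congr_right fun hF => and_congr_right fun hu => ?_
  rw [picardMap, duhamel_eq_integral_conv hF, duhamel_eq_integral_conv hu]
  rfl

/-- A function of `x` which dominates the linear part of the Duhamel formula at all times. -/
def dataMajorant (α : ℝ) (F : ℝ → Rn n → ℝ) (u₀ : Rn n → ℝ) (x : Rn n) : ℝ≥0∞ :=
  maximalFunction volume (fun y => ‖u₀ y‖ₑ) x + rieszPotential α (timeSup n F) x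

lemma measurable_dataMajorant (hF : Measurable (Function.uncurry F)) :
    Measurable (dataMajorant α F u₀) :=
  (measurable_maximalFunction _).add (measurable_rieszPotential (measurable_timeSup hF))

lemma PotentialBounds.mixedLuxNorm_dataMajorant_le {κ r : ℝ} {p : Rn n → ℝ} {K : ℝ≥0}
    (hK : PotentialBounds α κ p r K) (hpm : Measurable p) (hp : ∀ x, 1 ≤ p x) (hr : 1 ≤ r)
    (hF : Measurable (Function.uncurry F)) (hu₀ : Measurable u₀) :
    mixedLuxNorm volume p r (dataMajorant α F u₀) ≤
      K * (mixedLuxNorm volume p r (fun x => ‖u₀ x‖ₑ) +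
        mixedLuxNorm volume (fun x => p x / κ) (r / κ) (timeSup n F)) := by
  unfold dataMajorant
  grw [mixedLuxNorm_add_le hpm hp hr (measurable_maximalFunction _),
    hK.maximalFunction_le _ hu₀.enorm, hK.rieszPotential_le _ (measurable_timeSup hF), mul_add]

lemma enorm_absPowMul_le {a : ℝ} {c : ℝ≥0∞} (h : ‖a‖ₑ ≤ c) : ‖absPowMul b a‖ₑ ≤ c ^ (b + 1) := by
  grw [enorm_absPowMul, h]

lemma enorm_picardMap_le [NeZero n] (hα : 0 < α) (hα1 : α ≤ 1)
    (hF : Measurable (Function.uncurry F)) (hu₀ : Measurable u₀) (hE : Measurable E)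
    {u : ℝ × Rn n → ℝ} (huE : ∀ q, ‖u q‖ₑ ≤ E q.2) (q : ℝ × Rn n) :
    ‖picardMap α b F u₀ u q‖ₑ ≤
      dataMajorant α F u₀ q.2 + rieszPotential α (fun y => E y ^ (b + 1)) q.2 := by
  unfold picardMap dataMajorant
  grw [enorm_sub_le, enorm_add_le, enorm_conv_gKer_le hα hα1 hu₀,
    enorm_duhamel_le (f := Function.uncurry F) hα hα1 (measurable_timeSup hF)
      (ae_enorm_le_timeSup hF),
    enorm_duhamel_le hα hα1 (hE.pow_const _) (.of_forall fun z => enorm_absPowMul_le (huE z))]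

lemma enorm_picardMap_sub_le [NeZero n] (hα : 0 < α) (hα1 : α ≤ 1) {G δ : Rn n → ℝ≥0∞}
    (hG : Measurable G) (hδ : Measurable δ) {u v : ℝ × Rn n → ℝ}
    (huG : ∀ᵐ z ∂(spaceTime n), ‖u z‖ₑ ≤ G z.2) (hvG : ∀ᵐ z ∂(spaceTime n), ‖v z‖ₑ ≤ G z.2)
    (huv : ∀ᵐ z ∂(spaceTime n), ‖u z - v z‖ₑ ≤ δ z.2) {q : ℝ × Rn n}
    (hu : Integrable (duhamelIntegrand α (fun z => absPowMul b (u z)) q) (spaceTime n))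
    (hv : Integrable (duhamelIntegrand α (fun z => absPowMul b (v z)) q) (spaceTime n)) :
    ‖picardMap α b F u₀ u q - picardMap α b F u₀ v q‖ₑ ≤ linearizedPotential α b G δ q.2 := by
  rw [picardMap, picardMap, sub_sub_sub_cancel_left, ← enorm_neg, neg_sub, ← duhamel_sub hu hv]
  refine enorm_duhamel_le hα hα1 (by fun_prop) ?_ q
  filter_upwards [huG, hvG, huv] with z hzu hzv hz
  grw [enorm_absPowMul_sub_le, max_le hzu hzv, hz]

/-- The Picard iterates for the Duhamel formula, started at zero. -/
def picardSeq (α : ℝ) (b : ℕ) (F : ℝ → Rn n → ℝ) (u₀ : Rn n → ℝ) (k : ℕ) : ℝ × Rn n → ℝ :=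
  (picardMap α b F u₀)^[k] 0

lemma picardSeq_succ (k : ℕ) :
    picardSeq α b F u₀ (k + 1) = picardMap α b F u₀ (picardSeq α b F u₀ k) :=
  Function.iterate_succ_apply' _ _ _

lemma measurable_picardSeq (hF : Measurable (Function.uncurry F)) (hu₀ : Measurable u₀) (k : ℕ) :
    Measurable (picardSeq α b F u₀ k) := by
  induction k with
  | zero => exact measurable_const
  | succ k ih => exact picardSeq_succ (α := α) k ▸ measurable_picardMap hF hu₀ ih

lemma integrable_duhamelIntegrand_absPowMul [NeZero n] (hα : 0 < α) (hα1 : α ≤ 1)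
    (hE : Measurable E) {u : ℝ × Rn n → ℝ} (hu : Measurable u)
    (huE : ∀ᵐ z ∂(spaceTime n), ‖u z‖ₑ ≤ E z.2) {q : ℝ × Rn n}
    (hq : rieszPotential α (fun y => E y ^ (b + 1)) q.2 < ⊤) :
    Integrable (duhamelIntegrand α (fun z => absPowMul b (u z)) q) (spaceTime n) :=
  integrable_duhamelIntegrand hα hα1 (by fun_prop) (hE.pow_const _)
    (huE.mono fun _ hz => enorm_absPowMul_le hz) hq

lemma enorm_picardSeq_le [NeZero n] (hα : 0 < α) (hα1 : α ≤ 1)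
    (hF : Measurable (Function.uncurry F)) (hu₀ : Measurable u₀) (hE : Measurable E)
    (hfix : ∀ x, E x = dataMajorant α F u₀ x + rieszPotential α (fun y => E y ^ (b + 1)) x)
    (k : ℕ) (q : ℝ × Rn n) : ‖picardSeq α b F u₀ k q‖ₑ ≤ E q.2 := by
  induction k generalizing q with
  | zero => simp [picardSeq]
  | succ k ih =>
    rw [picardSeq_succ, hfix]
    exact enorm_picardMap_le hα hα1 hF hu₀ hE ih q

lemma enorm_picardSeq_sub_succ_le [NeZero n] (hα : 0 < α) (hα1 : α ≤ 1)
    (hF : Measurable (Function.uncurry F)) (hu₀ : Measurable u₀) (hE : Measurable E)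
    (hfix : ∀ x, E x = dataMajorant α F u₀ x + rieszPotential α (fun y => E y ^ (b + 1)) x)
    (hEt : ∀ᵐ x, E x < ⊤) (k : ℕ) :
    ∀ᵐ q ∂(spaceTime n), ‖picardSeq α b F u₀ k q - picardSeq α b F u₀ (k + 1) q‖ₑ ≤
      linearizedSeq α b E k q.2 := by
  have hle := enorm_picardSeq_le hα hα1 hF hu₀ hE hfix
  induction k with
  | zero => exact .of_forall fun q => by simpa [picardSeq, linearizedSeq] using hle 1 q
  | succ k ih =>
    filter_upwards [ae_spaceTime_of_ae hEt] with q hq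
    have hint (j : ℕ) := integrable_duhamelIntegrand_absPowMul hα hα1 hE
      (measurable_picardSeq hF hu₀ j) (.of_forall (hle j))
      ((self_le_add_left _ _).trans_lt (hfix q.2 ▸ hq))
    rw [picardSeq_succ, picardSeq_succ (k + 1)]
    exact enorm_picardMap_sub_le hα hα1 hE (measurable_linearizedSeq hE k) (.of_forall (hle k))
      (.of_forall (hle (k + 1))) ih (hint k) (hint (k + 1))

lemma exists_tendsto_picardSeq [NeZero n] (hα : 0 < α) (hα1 : α ≤ 1)
    (hF : Measurable (Function.uncurry F)) (hu₀ : Measurable u₀) (hE : Measurable E)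
    (hfix : ∀ x, E x = dataMajorant α F u₀ x + rieszPotential α (fun y => E y ^ (b + 1)) x)
    (hsum : ∀ᵐ x, ∑' k, linearizedSeq α b E k x < ⊤) :
    ∃ U : ℝ × Rn n → ℝ, Measurable U ∧
      ∀ᵐ q ∂(spaceTime n), Tendsto (picardSeq α b F u₀ · q) atTop (𝓝 (U q)) := by
  have hEt : ∀ᵐ x, E x < ⊤ := hsum.mono fun x hx => (ENNReal.le_tsum 0).trans_lt hx
  refine measurable_limit_of_tendsto_metrizable_ae
    (fun k => (measurable_picardSeq hF hu₀ k).aemeasurable) ?_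
  filter_upwards [ae_all_iff.2 (enorm_picardSeq_sub_succ_le hα hα1 hF hu₀ hE hfix hEt),
    ae_spaceTime_of_ae hsum] with q hq hsumq
  refine cauchySeq_tendsto_of_complete (cauchySeq_of_edist_le_of_tsum_ne_top _ (fun k => ?_)
    hsumq.ne)
  rw [edist_eq_enorm_sub]
  exact hq k

lemma exists_isMildSol0_of_majorant [NeZero n] (hα : 0 < α) (hα1 : α ≤ 1)
    (hF : Measurable (Function.uncurry F)) (hu₀ : Measurable u₀) (hE : Measurable E)
    (hfix : ∀ x, E x = dataMajorant α F u₀ x + rieszPotential α (fun y => E y ^ (b + 1)) x)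
    (hsum : ∀ᵐ x, ∑' k, linearizedSeq α b E k x < ⊤) :
    ∃ u : ℝ → Rn n → ℝ, Measurable (Function.uncurry u) ∧ timeSup n u ≤ᵐ[volume] E ∧
      IsMildSol0 n α b (Ioi 0) F u₀ u := by
  obtain ⟨U, hU, hlim⟩ := exists_tendsto_picardSeq hα hα1 hF hu₀ hE hfix hsum
  have hEt : ∀ᵐ x, E x < ⊤ := hsum.mono fun x hx => (ENNReal.le_tsum 0).trans_lt hx
  have hle := enorm_picardSeq_le hα hα1 hF hu₀ hE hfix
  have hUE : ∀ᵐ q ∂(spaceTime n), ‖U q‖ₑ ≤ E q.2 :=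
    hlim.mono fun q hq => le_of_tendsto' hq.enorm fun k => hle k q
  refine ⟨Function.curry U, hU, timeSup_ae_le hUE, isMildSol0_iff.2 ?_⟩
  filter_upwards [hlim, ae_spaceTime_of_ae hEt] with q hq hEq
  rw [hfix, dataMajorant] at hEq
  simp only [ENNReal.add_lt_top] at hEq
  obtain ⟨⟨hmax, hpotF⟩, hpotE⟩ := hEq
  refine ⟨integrable_gKer_mul hα hα1 hu₀ hmax q.1,
    integrable_duhamelIntegrand hα hα1 hF (measurable_timeSup hF) (ae_enorm_le_timeSup hF) hpotF,
    integrable_duhamelIntegrand_absPowMul hα hα1 hE hU hUE hpotE, ?_⟩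
  have hduhamel : Tendsto (fun k => duhamel α (fun z => absPowMul b (picardSeq α b F u₀ k z)) q)
      atTop (𝓝 (duhamel α (fun z => absPowMul b (U z)) q)) :=
    tendsto_duhamel hα hα1 (fun k => measurable_absPowMul_comp (measurable_picardSeq hF hu₀ k))
      (hE.pow_const _) (fun k => .of_forall fun z => enorm_absPowMul_le (hle k z))
      (hlim.mono fun z hz => (continuous_absPowMul.tendsto _).comp hz) hpotE
  refine tendsto_nhds_unique (hq.comp (tendsto_add_atTop_nat 1)) ?_
  simp only [Function.comp_def, picardSeq_succ]
  exact hduhamel.const_sub _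

end Picard

section WellPosedness

variable {n b : ℕ} {α r : ℝ} {p : Rn n → ℝ} {K R : ℝ≥0} {F : ℝ → Rn n → ℝ} {u₀ : Rn n → ℝ}

lemma mixedNorm_eq : mixedNorm n p r u₀ = mixedLuxNorm volume p r (fun x => ‖u₀ x‖ₑ) := by
  simp only [mixedNorm, luxNormR, mixedLuxNorm, Real.enorm_eq_ofReal_abs]

theorem PotentialBounds.ae_eq_of_isMildSol0 [NeZero n] (hα : 0 < α) (hα1 : α ≤ 1)
    (hK : PotentialBounds α ((b : ℝ) + 1) p r K) (hpm : Measurable p) (hp : ∀ x, 1 ≤ p x)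
    (hr : 1 ≤ r) (hR : R ≠ 0) (hRK : (linearizationConst b K (2 * R) : ℝ≥0∞) ≤ 2⁻¹)
    {u v : ℝ → Rn n → ℝ} (hu : Measurable (Function.uncurry u))
    (hv : Measurable (Function.uncurry v)) (huR : mixedN n p r u ≤ R) (hvR : mixedN n p r v ≤ R)
    (husol : IsMildSol0 n α b (Ioi 0) F u₀ u) (hvsol : IsMildSol0 n α b (Ioi 0) F u₀ v) :
    ∀ᵐ q ∂(spaceTime n), v q.1 q.2 = u q.1 q.2 := by
  let G (x : Rn n) : ℝ≥0∞ := timeSup n u x + timeSup n v x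
  let w : Rn n → ℝ≥0∞ := timeSup n fun t x => v t x - u t x
  have hG : Measurable G := (measurable_timeSup hu).add (measurable_timeSup hv)
  have hsub : Measurable (Function.uncurry fun t x => v t x - u t x) := hv.sub hu
  have hw : Measurable w := measurable_timeSup hsub
  have huG : ∀ᵐ q ∂(spaceTime n), ‖u q.1 q.2‖ₑ ≤ G q.2 :=
    (ae_enorm_le_timeSup hu).mono fun _ hq => hq.trans le_self_add
  have hvG : ∀ᵐ q ∂(spaceTime n), ‖v q.1 q.2‖ₑ ≤ G q.2 :=
    (ae_enorm_le_timeSup hv).mono fun _ hq => hq.trans le_add_self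
  have hGR : mixedLuxNorm volume p r G ≤ (2 * R : ℝ≥0) := by
    grw [mixedLuxNorm_add_le hpm hp hr (measurable_timeSup hu), ENNReal.coe_mul]
    exact (add_le_add huR hvR).trans_eq (two_mul _).symm
  have hwG : w ≤ᵐ[volume] G := timeSup_ae_le <| by
    filter_upwards [ae_enorm_le_timeSup hu, ae_enorm_le_timeSup hv] with q hqu hqv
    grw [enorm_sub_le, hqu, hqv, add_comm]
  have hwlin : w ≤ᵐ[volume] linearizedPotential α b G w := timeSup_ae_le <| by
    filter_upwards [isMildSol0_iff.1 husol, isMildSol0_iff.1 hvsol]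
      with q ⟨_, _, huint, hueq⟩ ⟨_, _, hvint, hveq⟩
    rw [hueq, hveq]
    exact enorm_picardMap_sub_le hα hα1 hG hw hvG huG (ae_enorm_le_timeSup hsub) hvint huint
  have hwfin : mixedLuxNorm volume p r w ≠ ⊤ :=
    (((mixedLuxNorm_mono_ae (fun x => zero_le_one.trans (hp x)) (zero_le_one.trans hr)
      hwG).trans hGR).trans_lt ENNReal.coe_lt_top).ne
  have hw0 := hK.ae_eq_zero_of_le_linearizedPotential hpm hp hr hG hw (by positivity) hRK hGR
    hwfin hwlin
  filter_upwards [ae_enorm_le_timeSup hsub, ae_spaceTime_of_ae hw0] with q hq hq0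
  exact sub_eq_zero.1 (enorm_eq_zero.1 (nonpos_iff_eq_zero.1 (hq.trans hq0.le)))

theorem PotentialBounds.exists_isMildSol0 [NeZero n] (hα : 0 < α) (hα1 : α ≤ 1)
    (hK : PotentialBounds α ((b : ℝ) + 1) p r K) (hpm : Measurable p) (hp : ∀ x, 1 ≤ p x)
    (hr : 1 ≤ r) (hR : R ≠ 0) (hRK : (linearizationConst b K R : ℝ≥0∞) ≤ 2⁻¹)
    (hF : Measurable (Function.uncurry F)) (hu₀ : Measurable u₀)
    (hsmall : K * (mixedNorm n p r u₀ +
      mixedN n (fun x => p x / ((b : ℝ) + 1)) (r / ((b : ℝ) + 1)) F) ≤ R / 2) :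
    ∃ u : ℝ → Rn n → ℝ, Measurable (Function.uncurry u) ∧ mixedN n p r u ≤ R ∧
      IsMildSol0 n α b (Ioi 0) F u₀ u := by
  rw [mixedNorm_eq] at hsmall
  obtain ⟨E, hE, hER, hfix⟩ := hK.exists_majorant hpm hp hr (measurable_dataMajorant hF)
    ((hK.mixedLuxNorm_dataMajorant_le hpm hp hr hF hu₀).trans hsmall) hRK
  obtain ⟨u, hu, huE, husol⟩ := exists_isMildSol0_of_majorant hα hα1 hF hu₀ hE hfix
    (hK.ae_tsum_linearizedSeq_lt_top hpm hp hr hE hR hER hRK)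
  exact ⟨u, hu, (mixedLuxNorm_mono_ae (fun x => zero_le_one.trans (hp x)) (zero_le_one.trans hr)
    huE).trans hER, husol⟩

theorem PotentialBounds.exists_smallData_wellPosed [NeZero n] (hα : 0 < α) (hα1 : α ≤ 1)
    (hb : b ≠ 0) (hK : PotentialBounds α ((b : ℝ) + 1) p r K) (hpm : Measurable p)
    (hp : ∀ x, 1 ≤ p x) (hr : 1 ≤ r) :
    ∃ ε R : ℝ≥0, 0 < ε ∧ 0 < R ∧ ∀ (u₀ : Rn n → ℝ) (F : ℝ → Rn n → ℝ),
      Measurable u₀ → Measurable (Function.uncurry F) →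
      mixedNorm n p r u₀ + mixedN n (fun x => p x / ((b : ℝ) + 1)) (r / ((b : ℝ) + 1)) F ≤ ε →
      ∃ u : ℝ → Rn n → ℝ, Measurable (Function.uncurry u) ∧ mixedN n p r u ≤ R ∧
        IsMildSol0 n α b (Ioi 0) F u₀ u ∧
        ∀ v : ℝ → Rn n → ℝ, Measurable (Function.uncurry v) → mixedN n p r v ≤ R →
          IsMildSol0 n α b (Ioi 0) F u₀ v → ∀ᵐ q ∂(spaceTime n), v q.1 q.2 = u q.1 q.2 := by
  obtain ⟨R, hR, hRK⟩ := exists_linearizationConst_le hb K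
  have hRK' : (linearizationConst b K R : ℝ≥0∞) ≤ 2⁻¹ := (ENNReal.coe_le_coe.2
    (linearizationConst_mono (le_mul_of_one_le_left' one_le_two))).trans hRK
  have hε : K * (R / 2 / (K + 1)) ≤ R / 2 := by
    rw [mul_div_left_comm]
    exact mul_le_of_le_one_right' (div_le_one_of_le₀ le_self_add zero_le)
  refine ⟨R / 2 / (K + 1), R, by positivity, hR, fun u₀ F hu₀ hF hsmall => ?_⟩
  obtain ⟨u, hu, huR, husol⟩ := hK.exists_isMildSol0 hα hα1 hpm hp hr hR.ne' hRK' hF hu₀ <| by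
    grw [hsmall]
    exact_mod_cast hε
  exact ⟨u, hu, huR, husol, fun v hv hvR hvsol =>
    hK.ae_eq_of_isMildSol0 hα hα1 hpm hp hr hR.ne' hRK hu hv huR hvR husol hvsol⟩

end WellPosedness

theorem stmt0_general (n b : ℕ) (α : ℝ) (hα : 0 < α) (hα1 : α ≤ 1)
    (hnb : 2 * α * ((b : ℝ) + 1) < (n : ℝ) * b) (p : Rn n → ℝ) (hplog : IsPLog univ p)
    (hpminus : ∃ pm : ℝ, (b : ℝ) + 1 < pm ∧ ∀ᵐ x ∂(volume : Measure (Rn n)), pm ≤ p x)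
    (hpplus : ∃ P : ℝ, ∀ᵐ x ∂(volume : Measure (Rn n)), p x ≤ P) :
    ∃ ε > (0 : ℝ), ∀ (u₀ : Rn n → ℝ) (F : ℝ → Rn n → ℝ),
      Measurable u₀ → Measurable (Function.uncurry F) →
      mixedNorm n p ((n : ℝ) * b / (2 * α)) u₀
        + mixedN n (fun x => p x / ((b : ℝ) + 1)) ((n : ℝ) * b / (((b : ℝ) + 1) * (2 * α))) F
        < ENNReal.ofReal ε →
      ∃ R > (0 : ℝ), ∃ u : ℝ → Rn n → ℝ, Measurable (Function.uncurry u) ∧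
        mixedN n p ((n : ℝ) * b / (2 * α)) u ≤ ENNReal.ofReal R ∧
        IsMildSol0 n α b (Ioi 0) F u₀ u ∧
        ∀ v : ℝ → Rn n → ℝ, Measurable (Function.uncurry v) →
          mixedN n p ((n : ℝ) * b / (2 * α)) v ≤ ENNReal.ofReal R →
          IsMildSol0 n α b (Ioi 0) F u₀ v →
          ∀ᵐ q ∂(spaceTime n), v q.1 q.2 = u q.1 q.2 := by
  obtain ⟨l, hl, hlp⟩ := hpminus
  obtain ⟨m, hpm⟩ := hpplus
  have hnb0 : (n : ℝ) * b ≠ 0 := (lt_trans (by positivity) hnb).ne'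
  have hb : (b : ℝ) ≠ 0 := right_ne_zero_of_mul hnb0
  have : NeZero n := ⟨Nat.cast_ne_zero.1 (left_ne_zero_of_mul hnb0)⟩
  have hκ : (1 : ℝ) < (b : ℝ) + 1 := lt_add_of_pos_left _ (hb.symm.lt_of_le b.cast_nonneg)
  have hr : (b : ℝ) + 1 < (n : ℝ) * b / (2 * α) := by
    rwa [lt_div_iff₀ (by positivity), mul_comm]
  rw [mul_comm ((b : ℝ) + 1), ← div_div _ (2 * α)]
  obtain ⟨K, hK⟩ := hplog.exists_potentialBounds hα hα1 hκ hr (by field_simp; ring) hl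
    (hlp.and hpm)
  obtain ⟨ε, R, hε, hR, hwp⟩ := hK.exists_smallData_wellPosed hα hα1 (Nat.cast_ne_zero.1 hb)
    hplog.1 (fun x => hplog.2.1 x (mem_univ x)) (hκ.le.trans hr.le)
  refine ⟨ε, hε, fun u₀ F hu₀ hF hsmall => ⟨R, hR, ?_⟩⟩
  rw [ENNReal.ofReal_coe_nnreal] at hsmall ⊢
  exact hwp u₀ F hu₀ hF hsmall.le

/-- Global well-posedness (γ = 0) for small data in mixed variable Lebesgue spaces. -/
theorem stmt0 (n b : ℕ) (hn : 1 ≤ n) (hb : 1 ≤ b) (α : ℝ) (hα : 1/2 < α ∧ α ≤ 1)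
    (h2α : 2 * α < n) (hnb : 2 * α * ((b:ℝ) + 1) < (n:ℝ) * b)
    (p : Rn n → ℝ) (hplog : IsPLog univ p)
    (hpminus : ∃ pm : ℝ, (b:ℝ) + 1 < pm ∧ ∀ᵐ x ∂(volume : Measure (Rn n)), pm ≤ p x)
    (hpplus : ∃ P : ℝ, (∀ᵐ x ∂(volume : Measure (Rn n)), p x ≤ P) ∧
      2 * α * P < (n:ℝ) * ((b:ℝ) + 1)) :
    ∃ ε > (0:ℝ), ∀ (u₀ : Rn n → ℝ) (F : ℝ → Rn n → ℝ),
      Measurable u₀ → Measurable (Function.uncurry F) →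
      mixedNorm n p ((n:ℝ) * b / (2 * α)) u₀
        + mixedN n (fun x => p x / ((b:ℝ) + 1)) ((n:ℝ) * b / (((b:ℝ) + 1) * (2 * α))) F
        < ENNReal.ofReal ε →
      ∃ R > (0:ℝ), ∃ u : ℝ → Rn n → ℝ, Measurable (Function.uncurry u) ∧
        mixedN n p ((n:ℝ) * b / (2 * α)) u ≤ ENNReal.ofReal R ∧
        IsMildSol0 n α b (Ioi 0) F u₀ u ∧
        ∀ v : ℝ → Rn n → ℝ, Measurable (Function.uncurry v) →
          mixedN n p ((n:ℝ) * b / (2 * α)) v ≤ ENNReal.ofReal R →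
          IsMildSol0 n α b (Ioi 0) F u₀ v →
          ∀ᵐ tx : ℝ × Rn n ∂((volume.restrict (Ioi (0:ℝ))).prod volume),
            v tx.1 tx.2 = u tx.1 tx.2 := by
  obtain ⟨P, hpP, -⟩ := hpplus
  exact stmt0_general n b α (one_half_pos.trans hα.1) hα.2 hnb p hplog hpminus ⟨P, hpP⟩
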